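/- Proposition 5.1 (confluence of critical kernels as ν_{m+1},…,ν_r → ∞). Fix 0 ≤ m < r, ν₀,…,ν_m ∈ ℕ, τ ∈ ℝ and x, y > 0. For n ∈ ℕ let ν_{m+1}(n),…,ν_r(n) be positive integers each tending to ∞ as n → ∞, and set c_n := ∏_{l=m+1}^r ν_l(n). Then c_n · 𝒦^{[ν₀,…,ν_m,ν_{m+1}(n),…,ν_r(n)]}(c_n x, c_n y; τ) → 𝒦^{[ν₀,…,ν_m]}(x, y; τ) as n → ∞. -/

import Mathlib

open MeasureTheory Filter Topology

noncomputable section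


/-- Pochhammer symbol `(a)_j` over `ℝ`. -/
def poch (a : ℝ) (j : ℕ) : ℝ := ∏ i ∈ Finset.range j, (a + i)

/-- The hypergeometric function `₀F₁(b; z)` for complex argument `z`. -/
def hyp0F1 (b : ℝ) (z : ℂ) : ℂ :=
  ∑' k : ℕ, (Real.Gamma b : ℂ) * z ^ k /
    ((Nat.factorial k : ℂ) * (Real.Gamma (b + k) : ℂ))

/-- The hypergeometric function `₀F₁(b; z)` for real argument `z`. -/
def hyp0F1R (b z : ℝ) : ℝ :=
  ∑' k : ℕ, Real.Gamma b * z ^ k / (Nat.factorial k * Real.Gamma (b + k))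

/-- The terminating hypergeometric sum `₁F₁(-k; b; u)`. -/
def hyp1F1T (k : ℕ) (b u : ℝ) : ℝ :=
  ∑ j ∈ Finset.range (k + 1),
    poch (-(k : ℝ)) j / (poch b j * Nat.factorial j) * u ^ j

/-- The function `Ψ(u;x)` of the paper. -/
def Psi (r ν0 : ℕ) (ν : Fin r → ℕ) (u x : ℝ) : ℝ :=
  (1 / Real.Gamma ((ν0 : ℝ) + 1)) *
    ∑' k : ℕ, x ^ k / Nat.factorial k * hyp1F1T k ((ν0 : ℝ) + 1) u *
      ∏ l, 1 / Real.Gamma ((ν l : ℝ) + 1 + k)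

/-- The positive orthant in `ℝ^r`. -/
def posOrth (r : ℕ) : Set (Fin r → ℝ) := {t | ∀ i, 0 < t i}

/-- The function `Φ(v;y)` of the paper, complex `v`. -/
def Phi (r ν0 : ℕ) (ν : Fin r → ℕ) (v : ℂ) (y : ℝ) : ℂ :=
  ((1 / Real.Gamma ((ν0 : ℝ) + 1) : ℝ) : ℂ) *
    ∫ t in posOrth r,
      (((∏ i, (t i) ^ ((ν i : ℝ) - 1) * Real.exp (-t i)) *
          (y / ∏ i, t i) ^ ν0 * Real.exp (-(y / ∏ i, t i)) : ℝ) : ℂ) *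
        hyp0F1 ((ν0 : ℝ) + 1) (-(v * ((y / ∏ i, t i : ℝ) : ℂ)))

/-- The function `Φ(v;y)` of the paper, real `v`. -/
def PhiR (r ν0 : ℕ) (ν : Fin r → ℕ) (v y : ℝ) : ℝ :=
  (1 / Real.Gamma ((ν0 : ℝ) + 1)) *
    ∫ t in posOrth r,
      ((∏ i, (t i) ^ ((ν i : ℝ) - 1) * Real.exp (-t i)) *
          (y / ∏ i, t i) ^ ν0 * Real.exp (-(y / ∏ i, t i))) *
        hyp0F1R ((ν0 : ℝ) + 1) (-(v * (y / ∏ i, t i)))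

/-- The double-contour-integral correlation kernel `K_N(x,y)` of Proposition 2.1,
with `C` the counterclockwise circle of center `c` and radius `R`. -/
def KN (r ν0 N : ℕ) (ν : Fin r → ℕ) (a : Fin N → ℝ) (c : ℂ) (R : ℝ) (x y : ℝ) : ℂ :=
  ∫ u in Set.Ioi (0 : ℝ),
    (2 * Real.pi * Complex.I)⁻¹ *
      ∮ v in C(c, R),
        (u : ℂ) ^ ν0 * Complex.exp (-(u : ℂ) + v) * ((Psi r ν0 ν u x : ℝ) : ℂ) *
          Phi r ν0 ν v y * ((u : ℂ) - v)⁻¹ * ∏ l, ((u : ℂ) + (a l : ℂ)) / (v + (a l : ℂ))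

/-- An admissible contour for `K_N`: a counterclockwise circle contained in the left
half-plane which encloses all the points `-a l`. -/
def AdmCircle (N : ℕ) (a : Fin N → ℝ) (c : ℂ) (R : ℝ) : Prop :=
  0 < R ∧ c.re + R < 0 ∧ ∀ l, ‖-(a l : ℂ) - c‖ < R

/-- The Meijer G-function `G^{1,0}_{0,r+2}(—;0,-ν₀,…,-ν_r | z)`, complex argument. -/
def G1 (r ν0 : ℕ) (ν : Fin r → ℕ) (z : ℂ) : ℂ :=
  ∑' k : ℕ, (-z) ^ k /
    ((Nat.factorial k : ℂ) * (Real.Gamma ((ν0 : ℝ) + 1 + k) : ℂ) *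
      ∏ l, (Real.Gamma ((ν l : ℝ) + 1 + k) : ℂ))

/-- The Meijer G-function `G^{1,0}_{0,r+2}(—;0,-ν₀,…,-ν_r | z)`, real argument. -/
def G1R (r ν0 : ℕ) (ν : Fin r → ℕ) (z : ℝ) : ℝ :=
  ∑' k : ℕ, (-z) ^ k /
    (Nat.factorial k * Real.Gamma ((ν0 : ℝ) + 1 + k) *
      ∏ l, Real.Gamma ((ν l : ℝ) + 1 + k))

/-- `g₀(w) = ∑ (-1)^k w^{ν₀+k}/(k! Γ(ν₀+k+1))`, complex argument. -/
def g0C (ν0 : ℕ) (w : ℂ) : ℂ :=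
  ∑' k : ℕ, (-1 : ℂ) ^ k * w ^ (ν0 + k) /
    ((Nat.factorial k : ℂ) * (Real.Gamma ((ν0 : ℝ) + k + 1) : ℂ))

/-- `g₀(w)`, real argument. -/
def g0R (ν0 : ℕ) (w : ℝ) : ℝ :=
  ∑' k : ℕ, (-1 : ℝ) ^ k * w ^ (ν0 + k) /
    (Nat.factorial k * Real.Gamma ((ν0 : ℝ) + k + 1))

/-- The Meijer G-function `G^{r+1,0}_{0,r+2}(—;ν₀,…,ν_r,0 | z)` for `z > 0`, real form. -/
def G2R (r ν0 : ℕ) (ν : Fin r → ℕ) (z : ℝ) : ℝ :=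
  ∫ t in posOrth r,
    (∏ l, (t l) ^ ((ν l : ℝ) - 1) * Real.exp (-t l)) * g0R ν0 (z / ∏ l, t l)

/-- The critical hard-edge kernel `𝒦^{h,r}(ξ,η;τ)` of Theorem 1.2, the inner integral
running up the imaginary axis `v = i t`. -/
def Kcrit (r ν0 : ℕ) (ν : Fin r → ℕ) (G2 : ℂ → ℂ) (τ ξ η : ℝ) : ℂ :=
  (2 * Real.pi * Complex.I)⁻¹ *
    ∫ u in Set.Ioi (0 : ℝ), ∫ t : ℝ,
      ((u : ℂ) / (Complex.I * t)) ^ ν0 *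
        Complex.exp (-(τ : ℂ) * u - (u : ℂ) ^ 2 / 2 + (τ : ℂ) * (Complex.I * t) +
          (Complex.I * t) ^ 2 / 2) *
        ((u : ℂ) - Complex.I * t)⁻¹ * G1 r ν0 ν ((u * ξ : ℝ) : ℂ) *
        G2 (Complex.I * t * (η : ℂ)) * Complex.I

/-- The deformed critical kernel `𝒦^{h,r}_m(ξ,η;τ,σ)` of Theorem 1.3, the inner integral
running up the vertical line `Re v = -c`. -/
def KcritLine (r ν0 m : ℕ) (ν : Fin r → ℕ) (σ : ℕ → ℝ) (G2 : ℂ → ℂ) (c τ ξ η : ℝ) : ℂ :=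
  (2 * Real.pi * Complex.I)⁻¹ *
    ∫ u in Set.Ioi (0 : ℝ), ∫ t : ℝ,
      ((u : ℂ) / (-(c : ℂ) + Complex.I * t)) ^ ν0 *
        Complex.exp (-(τ : ℂ) * u - (u : ℂ) ^ 2 / 2 +
          (τ : ℂ) * (-(c : ℂ) + Complex.I * t) + (-(c : ℂ) + Complex.I * t) ^ 2 / 2) *
        ((u : ℂ) - (-(c : ℂ) + Complex.I * t))⁻¹ *
        (∏ j ∈ Finset.range m,
          ((u : ℂ) + (σ j : ℂ)) / ((-(c : ℂ) + Complex.I * t) + (σ j : ℂ))) *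
        G1 r ν0 ν ((u * ξ : ℝ) : ℂ) * G2 ((-(c : ℂ) + Complex.I * t) * (η : ℂ)) * Complex.I




/-- `Ψ(u;x)` in the case `r = 0`. -/
def Psi0 (ν0 : ℕ) (u x : ℝ) : ℝ :=
  Real.exp x * hyp0F1R ((ν0 : ℝ) + 1) (-(u * x)) / Real.Gamma ((ν0 : ℝ) + 1)

/-- `Φ(v;y)` in the case `r = 0`, complex `v`. -/
def Phi0 (ν0 : ℕ) (v : ℂ) (y : ℝ) : ℂ :=
  ((y ^ ν0 * Real.exp (-y) / Real.Gamma ((ν0 : ℝ) + 1) : ℝ) : ℂ) *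
    hyp0F1 ((ν0 : ℝ) + 1) (-(v * (y : ℂ)))

/-- The kernel `K_N` in the case `r = 0`. -/
def KN0 (ν0 N : ℕ) (a : Fin N → ℝ) (c : ℂ) (R : ℝ) (x y : ℝ) : ℂ :=
  ∫ u in Set.Ioi (0 : ℝ),
    (2 * Real.pi * Complex.I)⁻¹ *
      ∮ v in C(c, R),
        (u : ℂ) ^ ν0 * Complex.exp (-(u : ℂ) + v) * ((Psi0 ν0 u x : ℝ) : ℂ) *
          Phi0 ν0 v y * ((u : ℂ) - v)⁻¹ * ∏ l, ((u : ℂ) + (a l : ℂ)) / (v + (a l : ℂ))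

/-- Laguerre polynomial `L_n^{ν}(x)`. -/
def laguerreL (n νp : ℕ) (x : ℝ) : ℝ :=
  ∑ k ∈ Finset.range (n + 1),
    (-1 : ℝ) ^ k * (Nat.choose (n + νp) (n - k)) * x ^ k / Nat.factorial k

/-- The function `Ψ^{(μ)}(u;x)` of Section 4. -/
def PsiMu (r ν0 : ℕ) (μ ν : Fin r → ℕ) (u x : ℝ) : ℝ :=
  (1 / Real.Gamma ((ν0 : ℝ) + 1)) *
    ∑' k : ℕ, x ^ k / Nat.factorial k * hyp1F1T k ((ν0 : ℝ) + 1) u *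
      ∏ l, Real.Gamma ((μ l : ℝ) + 1 + k) / Real.Gamma ((ν l : ℝ) + 1 + k)

/-- The open unit cube in `ℝ^r`. -/
def unitCube (r : ℕ) : Set (Fin r → ℝ) := {t | ∀ i, 0 < t i ∧ t i < 1}

/-- The function `Φ^{(μ)}(v;y)` of Section 4, complex `v`. -/
def PhiMu (r ν0 : ℕ) (μ ν : Fin r → ℕ) (v : ℂ) (y : ℝ) : ℂ :=
  ((1 / (Real.Gamma ((ν0 : ℝ) + 1) * ∏ l, Real.Gamma ((μ l : ℝ) - (ν l : ℝ))) : ℝ) : ℂ) *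
    ∫ t in unitCube r,
      (((∏ l, (t l) ^ ((ν l : ℝ) - 1) * (1 - t l) ^ ((μ l : ℝ) - (ν l : ℝ) - 1)) *
          (y / ∏ l, t l) ^ ν0 * Real.exp (-(y / ∏ l, t l)) : ℝ) : ℂ) *
        hyp0F1 ((ν0 : ℝ) + 1) (-(v * ((y / ∏ l, t l : ℝ) : ℂ)))

/-- The function `Φ^{(μ)}(v;y)` of Section 4, real `v`. -/
def PhiMuR (r ν0 : ℕ) (μ ν : Fin r → ℕ) (v y : ℝ) : ℝ :=
  (1 / (Real.Gamma ((ν0 : ℝ) + 1) * ∏ l, Real.Gamma ((μ l : ℝ) - (ν l : ℝ)))) *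
    ∫ t in unitCube r,
      ((∏ l, (t l) ^ ((ν l : ℝ) - 1) * (1 - t l) ^ ((μ l : ℝ) - (ν l : ℝ) - 1)) *
          (y / ∏ l, t l) ^ ν0 * Real.exp (-(y / ∏ l, t l))) *
        hyp0F1R ((ν0 : ℝ) + 1) (-(v * (y / ∏ l, t l)))

/-- The kernel `K_N` for the truncated-unitary product of Section 4. -/
def KNmu (r ν0 N : ℕ) (μ ν : Fin r → ℕ) (a : Fin N → ℝ) (c : ℂ) (R : ℝ) (x y : ℝ) : ℂ :=
  ∫ u in Set.Ioi (0 : ℝ),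
    (2 * Real.pi * Complex.I)⁻¹ *
      ∮ v in C(c, R),
        (u : ℂ) ^ ν0 * Complex.exp (-(u : ℂ) + v) * ((PsiMu r ν0 μ ν u x : ℝ) : ℂ) *
          PhiMu r ν0 μ ν v y * ((u : ℂ) - v)⁻¹ * ∏ l, ((u : ℂ) + (a l : ℂ)) / (v + (a l : ℂ))

/-- Mixed domain `(0,1)^q × (0,∞)^{r-q}`. -/
def mixedSet (r q : ℕ) : Set (Fin r → ℝ) := {t | ∀ l, 0 < t l ∧ ((l : ℕ) < q → t l < 1)}

/-- The Meijer G-function `G^{1,q}_{q,r+2}(-μ₁,…,-μ_q; 0,-ν₀,…,-ν_r | z)`, real form. -/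
def G1qR (r ν0 q : ℕ) (μ ν : Fin r → ℕ) (z : ℝ) : ℝ :=
  ∑' k : ℕ, (-z) ^ k *
    (∏ l ∈ Finset.univ.filter fun l : Fin r => (l : ℕ) < q, Real.Gamma ((μ l : ℝ) + 1 + k)) /
    (Nat.factorial k * Real.Gamma ((ν0 : ℝ) + 1 + k) *
      ∏ l, Real.Gamma ((ν l : ℝ) + 1 + k))

/-- The Meijer G-function `G^{1,q}_{q,r+2}(-μ₁,…,-μ_q; 0,-ν₀,…,-ν_r | z)`, complex form. -/
def G1q (r ν0 q : ℕ) (μ ν : Fin r → ℕ) (z : ℂ) : ℂ :=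
  ∑' k : ℕ, (-z) ^ k *
    ((∏ l ∈ Finset.univ.filter fun l : Fin r => (l : ℕ) < q,
      Real.Gamma ((μ l : ℝ) + 1 + k) : ℝ) : ℂ) /
    ((Nat.factorial k : ℂ) * (Real.Gamma ((ν0 : ℝ) + 1 + k) : ℂ) *
      ∏ l, (Real.Gamma ((ν l : ℝ) + 1 + k) : ℂ))

/-- The Meijer G-function `G^{r+1,0}_{q,r+2}(μ₁,…,μ_q; ν₀,…,ν_r,0 | z)` for `z > 0`. -/
def G2qR (r ν0 q : ℕ) (μ ν : Fin r → ℕ) (z : ℝ) : ℝ :=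
  ∫ t in mixedSet r q,
    (∏ l : Fin r, if l.val < q then
        (t l) ^ ((ν l : ℝ) - 1) * (1 - t l) ^ ((μ l : ℝ) - (ν l : ℝ) - 1) /
          Real.Gamma ((μ l : ℝ) - (ν l : ℝ))
      else (t l) ^ ((ν l : ℝ) - 1) * Real.exp (-t l)) *
      g0R ν0 (z / ∏ l, t l)

/-! Write `z = exp ζ`. In the variable `ζ`, each integration over `t_l` in the definition of `G₂` is
convolution with the Gamma kernel `exp (ν_l ζ - exp ζ)`, and it extends to the strip `|Im ζ| < π`.
Iterating these convolutions preserves a bound `O(exp (b Re ζ))` with `b` slightly below the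
parameters.

Rescaled by `ν_l` and normalised by `Γ(ν_l)`, the Gamma law concentrates at `1` as `ν_l → ∞`, so on
the real axis the rescaled `G₂` converges to the one with the parameter `ν_l` removed. The bounds
are uniform in `ν_l`, and Vitali's theorem carries the convergence to the lines `Im ζ = ± π / 2`,
the image of the contour `v = i t`. The series of `G₁` converges termwise under the dominating
series of `exp ‖z‖`. For parameters `≥ ν₀` the double integral is then dominated.

If some fixed parameter is `< ν₀`, both kernels are `0` by the convention for divergent integrals:
when the smallest parameter `ν` satisfies `2ν < ν₀`, already the integral defining `G₂` diverges;
otherwise `G₂(z)` decays no faster than `z ^ ν` at `0`, too slowly to compensate `v ^ (-ν₀)`. -/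

section HolomorphicFamilies

open Metric

theorem dist_le_of_norm_le_on_ball {f : ℂ → ℂ} {c z : ℂ} {r C : ℝ}
    (hf : DifferentiableOn ℂ f (ball c r)) (hC : ∀ w ∈ ball c r, ‖f w‖ ≤ C) (hz : z ∈ ball c r) :
    dist (f z) (f c) ≤ 2 * C / r * dist z c := by
  have hr : 0 < r := pos_of_mem_ball hz
  refine Complex.dist_le_div_mul_dist_of_mapsTo_ball hf (fun w hw => ?_) hz
  rw [mem_closedBall, dist_eq_norm, two_mul]
  exact (norm_sub_le _ _).trans (add_le_add (hC w hw) (hC c (mem_ball_self hr)))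

theorem norm_deriv_le_of_norm_le_on_ball {f : ℂ → ℂ} {c : ℂ} {r C : ℝ} (hr : 0 < r)
    (hf : DifferentiableOn ℂ f (ball c r)) (hC : ∀ w ∈ ball c r, ‖f w‖ ≤ C) :
    ‖deriv f c‖ ≤ 2 * C / r := by
  refine Complex.norm_deriv_le_div_of_mapsTo_ball hf (fun w hw => ?_) hr
  rw [mem_closedBall, dist_eq_norm, two_mul]
  exact (norm_sub_le _ _).trans (add_le_add (hC w hw) (hC c (mem_ball_self hr)))

theorem aestronglyMeasurable_deriv_of_eventually {α : Type*} [MeasurableSpace α] {μ : Measure α}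
    {H : ℂ → α → ℂ} {z₀ : ℂ} (hmeas : ∀ᶠ z in 𝓝 z₀, AEStronglyMeasurable (H z) μ)
    (hdiff : ∀ᵐ a ∂μ, DifferentiableAt ℂ (fun z => H z a) z₀) :
    AEStronglyMeasurable (fun a => deriv (fun z => H z a) z₀) μ := by
  obtain ⟨u, hu⟩ := exists_seq_tendsto (𝓝[≠] z₀)
  obtain ⟨N, hN⟩ := eventually_atTop.1 ((hu.mono_right nhdsWithin_le_nhds).eventually hmeas)
  have hu_shift : Tendsto (fun n => u (n + N)) atTop (𝓝[≠] z₀) := (tendsto_add_atTop_iff_nat N).2 hu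
  refine aestronglyMeasurable_of_tendsto_ae atTop
    (f := fun n a => slope (fun z => H z a) z₀ (u (n + N))) (fun n => ?_) ?_
  · exact ((hN _ (Nat.le_add_left N n)).sub hmeas.self_of_nhds).const_smul (u (n + N) - z₀)⁻¹
  · filter_upwards [hdiff] with a ha
    exact ha.hasDerivAt.tendsto_slope.comp hu_shift

theorem differentiableAt_integral_of_dominated {α : Type*} [MeasurableSpace α] {μ : Measure α}
    {H : ℂ → α → ℂ} {z₀ : ℂ} {ρ : ℝ} (hρ : 0 < ρ) {bound : α → ℝ}
    (hmeas : ∀ z ∈ ball z₀ ρ, AEStronglyMeasurable (H z) μ)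
    (hdiff : ∀ᵐ a ∂μ, DifferentiableOn ℂ (fun z => H z a) (ball z₀ ρ))
    (hbound : ∀ᵐ a ∂μ, ∀ z ∈ ball z₀ ρ, ‖H z a‖ ≤ bound a) (hint : Integrable bound μ) :
    DifferentiableAt ℂ (fun z => ∫ a, H z a ∂μ) z₀ := by
  have hsub : ∀ z ∈ ball z₀ (ρ / 2), ball z (ρ / 2) ⊆ ball z₀ ρ := fun z hz =>
    ball_subset_ball' (by linarith [mem_ball.1 hz])
  have hmeas' : ∀ᶠ z in 𝓝 z₀, AEStronglyMeasurable (H z) μ := by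
    filter_upwards [ball_mem_nhds z₀ hρ] with z hz using hmeas z hz
  refine (hasDerivAt_integral_of_dominated_loc_of_deriv_le
    (F' := fun z a => deriv (fun z => H z a) z) (bound := fun a => 2 * bound a / (ρ / 2))
    (ball_mem_nhds z₀ (half_pos hρ)) hmeas' ?_ ?_ ?_
    ((hint.const_mul 2).div_const _) ?_).2.differentiableAt
  · refine hint.mono' (hmeas _ (mem_ball_self hρ)) ?_
    filter_upwards [hbound] with a ha using ha _ (mem_ball_self hρ)
  · refine aestronglyMeasurable_deriv_of_eventually hmeas' ?_
    filter_upwards [hdiff] with a ha using ha.differentiableAt (ball_mem_nhds z₀ hρ)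
  · filter_upwards [hbound, hdiff] with a ha hd z hz
    exact norm_deriv_le_of_norm_le_on_ball (half_pos hρ) (hd.mono (hsub z hz))
      fun w hw => ha w (hsub z hz hw)
  · filter_upwards [hdiff] with a hd z hz
    exact (hd.differentiableAt
      (isOpen_ball.mem_nhds (ball_subset_ball (by linarith) hz))).hasDerivAt

theorem differentiableOn_integral_of_norm_le_mul {α : Type*} [MeasurableSpace α] {μ : Measure α}
    {U : Set ℂ} (hU : IsOpen U) {H : ℂ → α → ℂ} {c : ℂ → ℝ} (hc : ContinuousOn c U) {g : α → ℝ}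
    (hg : Integrable g μ) (hmeas : ∀ z ∈ U, AEStronglyMeasurable (H z) μ)
    (hdiff : ∀ᵐ a ∂μ, DifferentiableOn ℂ (fun z => H z a) U)
    (hbound : ∀ᵐ a ∂μ, ∀ z ∈ U, ‖H z a‖ ≤ c z * g a) :
    DifferentiableOn ℂ (fun z => ∫ a, H z a ∂μ) U := by
  intro z₀ hz₀
  obtain ⟨ρ, hρ, hball⟩ := nhds_basis_closedBall.mem_iff.1 (hU.mem_nhds hz₀)
  obtain ⟨C, hC⟩ := (isCompact_closedBall z₀ ρ).exists_bound_of_continuousOn (hc.mono hball)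
  have hsub := ball_subset_closedBall.trans hball
  refine (differentiableAt_integral_of_dominated hρ (bound := fun a => C * |g a|)
    (fun z hz => hmeas z (hsub hz)) (hdiff.mono fun a ha => ha.mono hsub) ?_
    (hg.abs.const_mul C)).differentiableWithinAt
  filter_upwards [hbound] with a ha z hz
  calc ‖H z a‖ ≤ c z * g a := ha z (hsub hz)
    _ ≤ ‖c z‖ * |g a| := (le_abs_self _).trans_eq (abs_mul _ _)
    _ ≤ C * |g a| := by gcongr; exact hC z (ball_subset_closedBall hz)

theorem differentiableOn_intervalIntegral_of_continuousOn {U : Set ℂ} (hU : IsOpen U)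
    {H : ℂ → ℝ → ℂ} {a b : ℝ}
    (hcont : ContinuousOn (fun p : ℂ × ℝ => H p.1 p.2) (U ×ˢ Set.uIcc a b))
    (hdiff : ∀ s ∈ Set.uIcc a b, DifferentiableOn ℂ (fun z => H z s) U) :
    DifferentiableOn ℂ (fun z => ∫ s in a..b, H z s) U := by
  intro z₀ hz₀
  obtain ⟨ρ, hρ, hball⟩ := nhds_basis_closedBall.mem_iff.1 (hU.mem_nhds hz₀)
  obtain ⟨C, hC⟩ := ((isCompact_closedBall z₀ ρ).prod isCompact_uIcc).exists_bound_of_continuousOn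
    (hcont.mono (Set.prod_mono hball subset_rfl))
  have hae : ∀ᵐ s ∂volume.restrict (Set.uIoc a b), s ∈ Set.uIcc a b := by
    filter_upwards [ae_restrict_mem measurableSet_uIoc] with s hs using Set.uIoc_subset_uIcc hs
  have hfin : IsFiniteMeasure (volume.restrict (Set.uIoc a b)) := by
    rw [Set.uIoc]
    infer_instance
  simp only [intervalIntegral.intervalIntegral_eq_integral_uIoc]
  refine (DifferentiableAt.const_smul (differentiableAt_integral_of_dominated hρ
    (bound := fun _ => C) (fun z hz => ?_) ?_ ?_ (integrable_const C)) _).differentiableWithinAt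
  · refine ContinuousOn.aestronglyMeasurable ?_ measurableSet_uIoc
    exact hcont.comp (f := fun s => (z, s)) (by fun_prop) fun s hs =>
      ⟨hball (ball_subset_closedBall hz), Set.uIoc_subset_uIcc hs⟩
  · filter_upwards [hae] with s hs using
      (hdiff s hs).mono (ball_subset_closedBall.trans hball)
  · filter_upwards [hae] with s hs z hz using hC (z, s) ⟨ball_subset_closedBall hz, hs⟩

variable {ι : Type*} {l : Filter ι} {F : ι → ℂ → ℂ} {U : Set ℂ}

/-- Local boundedness of a family of functions on `U`, eventually along `l`. -/
def LocallyBoundedFamily (l : Filter ι) (F : ι → ℂ → ℂ) (U : Set ℂ) : Prop :=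
  ∀ z ∈ U, ∃ C, ∃ r > 0, ∀ᶠ n in l, ∀ w ∈ ball z r, ‖F n w‖ ≤ C

theorem LocallyBoundedFamily.mono {l' : Filter ι} (h : LocallyBoundedFamily l F U) (hl : l' ≤ l) :
    LocallyBoundedFamily l' F U := fun z hz =>
  let ⟨C, r, hr, hC⟩ := h z hz
  ⟨C, r, hr, hl hC⟩

theorem LocallyBoundedFamily.sub {G : ι → ℂ → ℂ} (hF : LocallyBoundedFamily l F U)
    (hG : LocallyBoundedFamily l G U) :
    LocallyBoundedFamily l (fun n z => F n z - G n z) U := fun z hz => by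
  obtain ⟨C, r, hr, hC⟩ := hF z hz
  obtain ⟨C', r', hr', hC'⟩ := hG z hz
  refine ⟨C + C', min r r', lt_min hr hr', ?_⟩
  filter_upwards [hC, hC'] with n hn hn' w hw
  exact (norm_sub_le _ _).trans (add_le_add (hn w (ball_subset_ball (min_le_left _ _) hw))
    (hn' w (ball_subset_ball (min_le_right _ _) hw)))

theorem LocallyBoundedFamily.exists_lipschitz (h : LocallyBoundedFamily l F U) (hU : IsOpen U)
    (hF : ∀ᶠ n in l, DifferentiableOn ℂ (F n) U) {z : ℂ} (hz : z ∈ U) :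
    ∃ K > 0, ∃ r > 0, ∀ᶠ n in l, ∀ w ∈ ball z r, dist (F n w) (F n z) ≤ K * dist w z := by
  obtain ⟨C, r, hr, hC⟩ := h z hz
  obtain ⟨r', hr', hball⟩ := Metric.isOpen_iff.1 hU z hz
  refine ⟨2 * (|C| + 1) / min r r', by positivity, min r r', lt_min hr hr', ?_⟩
  filter_upwards [hC, hF] with n hn hd w hw
  refine dist_le_of_norm_le_on_ball (hd.mono ((ball_subset_ball (min_le_right _ _)).trans hball))
    (fun v hv => (hn v (ball_subset_ball (min_le_left _ _) hv)).trans ?_) hw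
  linarith [le_abs_self C]

theorem LocallyBoundedFamily.tendstoLocallyUniformlyOn [l.NeBot] (h : LocallyBoundedFamily l F U)
    (hU : IsOpen U) (hF : ∀ᶠ n in l, DifferentiableOn ℂ (F n) U) {f : ℂ → ℂ}
    (hlim : ∀ z ∈ U, Tendsto (F · z) l (𝓝 (f z))) : TendstoLocallyUniformlyOn F f l U := by
  rw [Metric.tendstoLocallyUniformlyOn_iff]
  intro ε hε z hz
  obtain ⟨K, hK, r, hr, hLip⟩ := h.exists_lipschitz hU hF hz
  have hLip_lim : ∀ w ∈ U ∩ ball z r, dist (f w) (f z) ≤ K * dist w z := fun w hw =>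
    le_of_tendsto ((hlim w hw.1).dist (hlim z hz)) (hLip.mono fun n hn => hn w hw.2)
  refine ⟨U ∩ ball z (min r (ε / (3 * K))), inter_mem self_mem_nhdsWithin
    (mem_nhdsWithin_of_mem_nhds (ball_mem_nhds z (by positivity))), ?_⟩
  filter_upwards [hLip, (tendsto_iff_dist_tendsto_zero.1 (hlim z hz)).eventually_lt_const
    (show 0 < ε / 3 by positivity)] with n hn hnz w ⟨hwU, hw⟩
  obtain ⟨hwr, hwε⟩ := lt_min_iff.1 (mem_ball.1 hw)
  have hKw : K * dist w z < ε / 3 := by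
    rw [lt_div_iff₀ (by positivity)] at hwε
    linarith
  calc dist (f w) (F n w)
      ≤ dist (f w) (f z) + dist (f z) (F n z) + dist (F n z) (F n w) := dist_triangle4 _ _ _ _
    _ < ε / 3 + ε / 3 + ε / 3 := by
        rw [dist_comm (f z) (F n z), dist_comm (F n z) (F n w)]
        linarith [hLip_lim w ⟨hwU, hwr⟩, hn w hwr]
    _ = ε := by ring

/-- **Vitali's convergence theorem**. -/
theorem LocallyBoundedFamily.tendsto_of_frequently (h : LocallyBoundedFamily l F U) (hU : IsOpen U)
    (hUc : IsPreconnected U) (hF : ∀ᶠ n in l, DifferentiableOn ℂ (F n) U) {f : ℂ → ℂ}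
    (hf : DifferentiableOn ℂ f U) {z₀ : ℂ} (hz₀ : z₀ ∈ U)
    (hlim : ∃ᶠ z in 𝓝[≠] z₀, Tendsto (F · z) l (𝓝 (f z))) {z : ℂ} (hz : z ∈ U) :
    Tendsto (F · z) l (𝓝 (f z)) := by
  refine tendsto_iff_ultrafilter _ _ _ |>.2 fun g hg => ?_
  have hcluster : ∀ w, ∃ L, w ∈ U → Tendsto (F · w) g (𝓝 L) := fun w => by
    by_cases hw : w ∈ U
    · obtain ⟨C, r, hr, hC⟩ := h w hw
      have hmem : ↑(g.map (F · w)) ≤ 𝓟 (closedBall (0 : ℂ) C) := by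
        rw [Ultrafilter.coe_map, le_principal_iff, mem_map]
        filter_upwards [hg hC] with n hn using mem_closedBall_zero_iff.2 (hn w (mem_ball_self hr))
      obtain ⟨L, -, hL⟩ := (isCompact_closedBall (0 : ℂ) C).ultrafilter_le_nhds _ hmem
      exact ⟨L, fun _ => hL⟩
    · exact ⟨0, fun hw' => absurd hw' hw⟩
  choose L hL using hcluster
  have hLdiff : DifferentiableOn ℂ L U :=
    ((h.mono hg).tendstoLocallyUniformlyOn hU (hg hF) hL).differentiableOn (hg hF) hU
  have hLf : Set.EqOn L f U :=
    (hLdiff.analyticOnNhd hU).eqOn_of_preconnected_of_frequently_eq (hf.analyticOnNhd hU) hUc hz₀ <|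
      (hlim.and_eventually (mem_nhdsWithin_of_mem_nhds (hU.mem_nhds hz₀))).mono
        fun w hw => tendsto_nhds_unique (hL w hw.2) (hw.1.mono_left hg)
  exact hLf hz ▸ hL z hz

end HolomorphicFamilies

section LogStrip

/-- The strip `|Im ζ| < π`, on which `exp` is a bijection onto the slit plane. -/
def logStrip : Set ℂ := {ζ | |ζ.im| < Real.pi}

theorem isOpen_logStrip : IsOpen logStrip :=
  isOpen_lt (continuous_abs.comp Complex.continuous_im) continuous_const

theorem convex_logStrip : Convex ℝ logStrip := by
  have : logStrip = Complex.imLm ⁻¹' Set.Ioo (-Real.pi) Real.pi :=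
    Set.ext fun ζ => by simp [logStrip, abs_lt]
  rw [this]
  exact (convex_Ioo _ _).is_linear_preimage Complex.imLm.isLinear

theorem ofReal_mem_logStrip (x : ℝ) : (x : ℂ) ∈ logStrip := by
  simpa [logStrip] using Real.pi_pos

theorem ofReal_mul_I_mem_logStrip {θ : ℝ} (hθ : 0 ≤ θ) (hθπ : θ < Real.pi) :
    θ * Complex.I ∈ logStrip := by
  simpa [logStrip, abs_of_nonneg hθ] using hθπ

theorem mem_logStrip_of_im_eq {ζ w : ℂ} (h : w.im = ζ.im) (hζ : ζ ∈ logStrip) : w ∈ logStrip :=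
  show |w.im| < Real.pi from h ▸ hζ

theorem add_ofReal_mem_logStrip {ζ : ℂ} (hζ : ζ ∈ logStrip) (a : ℝ) : ζ + a ∈ logStrip :=
  mem_logStrip_of_im_eq (by simp) hζ

theorem sub_ofReal_mem_logStrip {ζ : ℂ} (hζ : ζ ∈ logStrip) (a : ℝ) : ζ - a ∈ logStrip :=
  mem_logStrip_of_im_eq (by simp) hζ

theorem frequently_mem_range_ofReal : ∃ᶠ ζ in 𝓝[≠] (0 : ℂ), ζ ∈ Set.range ((↑) : ℝ → ℂ) := by
  have h : Tendsto ((↑) : ℝ → ℂ) (𝓝[≠] 0) (𝓝[≠] 0) :=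
    tendsto_nhdsWithin_iff.2 ⟨(Complex.continuous_ofReal.tendsto' 0 0 rfl).mono_left
      nhdsWithin_le_nhds, eventually_mem_nhdsWithin.mono fun x hx => Complex.ofReal_ne_zero.2 hx⟩
  exact h.frequently (Eventually.of_forall fun x => Set.mem_range_self x).frequently

theorem eqOn_logStrip_of_eq_ofReal {f g : ℂ → ℂ} (hf : DifferentiableOn ℂ f logStrip)
    (hg : DifferentiableOn ℂ g logStrip) (h : ∀ x : ℝ, f x = g x) : Set.EqOn f g logStrip :=
  (hf.analyticOnNhd isOpen_logStrip).eqOn_of_preconnected_of_frequently_eq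
    (hg.analyticOnNhd isOpen_logStrip) convex_logStrip.isPreconnected (ofReal_mem_logStrip 0)
    (by simpa using frequently_mem_range_ofReal.mono fun ζ ⟨x, hx⟩ => hx ▸ h x)

end LogStrip

section GammaKernel

/-- The kernel `t^p e^{-t}` of the Gamma integral in the logarithmic variable `t = e^ζ`. -/
def gammaKernel (p : ℝ) (ζ : ℂ) : ℂ := Complex.exp (p * ζ - Complex.exp ζ)

variable {p : ℝ}

@[fun_prop]
theorem differentiable_gammaKernel : Differentiable ℂ (gammaKernel p) := by
  unfold gammaKernel
  fun_prop

@[fun_prop]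
theorem continuous_gammaKernel : Continuous (gammaKernel p) :=
  differentiable_gammaKernel.continuous

theorem norm_gammaKernel (ζ : ℂ) :
    ‖gammaKernel p ζ‖ = Real.exp (p * ζ.re - Real.exp ζ.re * Real.cos ζ.im) := by
  simp [gammaKernel, Complex.norm_exp, Complex.exp_re]

theorem norm_gammaKernel_ofReal (u : ℝ) :
    ‖gammaKernel p u‖ = Real.exp (p * u - Real.exp u) := by
  simp [norm_gammaKernel]

theorem norm_gammaKernel_le (ζ : ℂ) :
    ‖gammaKernel p ζ‖ ≤ Real.exp (p * ζ.re + Real.exp ζ.re) := by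
  rw [norm_gammaKernel]
  gcongr
  nlinarith [Real.exp_pos ζ.re, Real.neg_one_le_cos ζ.im]

theorem integral_exp_smul_comp_exp {E : Type*} [NormedAddCommGroup E] [NormedSpace ℝ E]
    (g : ℝ → E) : ∫ u : ℝ, Real.exp u • g (Real.exp u) = ∫ t in Set.Ioi (0 : ℝ), g t := by
  have h := integral_image_eq_integral_abs_deriv_smul MeasurableSet.univ
    (fun u _ => (Real.hasDerivAt_exp u).hasDerivWithinAt) Real.exp_injective.injOn g
  rw [Set.image_univ, Real.range_exp, setIntegral_univ] at h
  simpa [abs_of_pos (Real.exp_pos _)] using h.symm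

theorem integrable_exp_smul_comp_exp {E : Type*} [NormedAddCommGroup E] [NormedSpace ℝ E]
    {g : ℝ → E} :
    Integrable (fun u : ℝ => Real.exp u • g (Real.exp u)) ↔ IntegrableOn g (Set.Ioi 0) := by
  have h := integrableOn_image_iff_integrableOn_abs_deriv_smul MeasurableSet.univ
    (fun u _ => (Real.hasDerivAt_exp u).hasDerivWithinAt) Real.exp_injective.injOn g
  rw [Set.image_univ, Real.range_exp, integrableOn_univ] at h
  simpa [abs_of_pos (Real.exp_pos _)] using h.symm

theorem exp_mul_sub_exp_eq_smul (p u : ℝ) : Real.exp (p * u - Real.exp u) =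
    Real.exp u • (Real.exp (-Real.exp u) * Real.exp u ^ (p - 1)) := by
  rw [← Real.exp_mul, smul_eq_mul, ← Real.exp_add, ← Real.exp_add]
  ring_nf

theorem integrable_exp_mul_sub_exp (hp : 0 < p) :
    Integrable fun u : ℝ => Real.exp (p * u - Real.exp u) := by
  simpa only [exp_mul_sub_exp_eq_smul] using
    integrable_exp_smul_comp_exp.2 (Real.GammaIntegral_convergent hp)

theorem integral_exp_mul_sub_exp (hp : 0 < p) :
    ∫ u : ℝ, Real.exp (p * u - Real.exp u) = Real.Gamma p := by
  rw [Real.Gamma_eq_integral hp, ← integral_exp_smul_comp_exp]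
  simp only [exp_mul_sub_exp_eq_smul]

end GammaKernel

section StripBounded

/-- Holomorphic functions of the logarithmic variable which are `O(e^{bx})` on the real axis and may
grow doubly exponentially inside the strip; in the variable `z = e^ζ` these are holomorphic
functions on the slit plane, `O(z^b)` on the positive axis and `O(|z|^b e^{B|z|})` everywhere. -/
structure StripBounded (b A B : ℝ) (f : ℂ → ℂ) : Prop where
  nonneg_growth : 0 ≤ B
  differentiableOn : DifferentiableOn ℂ f logStrip
  norm_ofReal_le : ∀ x : ℝ, ‖f x‖ ≤ A * Real.exp (b * x)
  norm_le : ∀ ζ ∈ logStrip, ‖f ζ‖ ≤ A * Real.exp (b * ζ.re) * Real.exp (B * Real.exp ζ.re)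

variable {p b A B : ℝ} {f : ℂ → ℂ}

theorem StripBounded.nonneg (hf : StripBounded b A B f) : 0 ≤ A := by
  simpa using (norm_nonneg _).trans (hf.norm_ofReal_le 0)

theorem StripBounded.mono (hf : StripBounded b A B f) {A' B' : ℝ} (hA : A ≤ A') (hB : B ≤ B') :
    StripBounded b A' B' f where
  nonneg_growth := hf.nonneg_growth.trans hB
  differentiableOn := hf.differentiableOn
  norm_ofReal_le x := (hf.norm_ofReal_le x).trans (by gcongr)
  norm_le ζ hζ := (hf.norm_le ζ hζ).trans (by have := hf.nonneg.trans hA; gcongr)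

theorem StripBounded.continuousOn (hf : StripBounded b A B f) : ContinuousOn f logStrip :=
  hf.differentiableOn.continuousOn

theorem StripBounded.continuous_ofReal (hf : StripBounded b A B f) :
    Continuous fun x : ℝ => f x :=
  continuousOn_univ.1 <| hf.continuousOn.comp (by fun_prop) fun x _ => ofReal_mem_logStrip x

theorem StripBounded.norm_le_of_re_le (hf : StripBounded b A B f) {ζ : ℂ} (hζ : ζ ∈ logStrip)
    {c : ℝ} (hc : ζ.re ≤ c) :
    ‖f ζ‖ ≤ A * Real.exp (b * ζ.re) * Real.exp (B * Real.exp c) :=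
  (hf.norm_le ζ hζ).trans (by have := hf.nonneg; have := hf.nonneg_growth; gcongr)

theorem StripBounded.norm_gammaKernel_sub_mul_le (hf : StripBounded b A B f) {L y : ℝ}
    (hy : L ≤ y) (ζ : ℂ) : ‖gammaKernel p (ζ - y) * f y‖ ≤
      A * Real.exp (p * ζ.re + Real.exp (ζ.re - L)) * Real.exp (-(p - b) * y) := by
  have hK : ‖gammaKernel p (ζ - y)‖ ≤ Real.exp (p * (ζ.re - y) + Real.exp (ζ.re - L)) := by
    refine (norm_gammaKernel_le _).trans ?_
    simp only [Complex.sub_re, Complex.ofReal_re]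
    gcongr
  calc ‖gammaKernel p (ζ - y) * f y‖
      ≤ Real.exp (p * (ζ.re - y) + Real.exp (ζ.re - L)) * (A * Real.exp (b * y)) := by
        rw [norm_mul]
        gcongr
        exact hf.norm_ofReal_le y
    _ = A * (Real.exp (p * (ζ.re - y) + Real.exp (ζ.re - L)) * Real.exp (b * y)) := by ring
    _ = A * (Real.exp (p * ζ.re + Real.exp (ζ.re - L)) * Real.exp (-(p - b) * y)) := by
        rw [← Real.exp_add, ← Real.exp_add]
        ring_nf
    _ = _ := by ring

theorem StripBounded.norm_gammaKernel_mul_sub_le (hf : StripBounded b A B f) {ζ : ℂ}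
    (hζ : ζ ∈ logStrip) {a u : ℝ} (hu : a ≤ u) : ‖gammaKernel p u * f (ζ - u)‖ ≤
      A * Real.exp (b * ζ.re + B * Real.exp (ζ.re - a)) *
        Real.exp ((p - b) * u - Real.exp u) := by
  have hre : (ζ - u).re ≤ ζ.re - a := by
    rw [Complex.sub_re, Complex.ofReal_re]
    linarith
  calc ‖gammaKernel p u * f (ζ - u)‖
      ≤ Real.exp (p * u - Real.exp u) *
          (A * Real.exp (b * (ζ.re - u)) * Real.exp (B * Real.exp (ζ.re - a))) := by
        rw [norm_mul, norm_gammaKernel_ofReal]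
        gcongr
        simpa using hf.norm_le_of_re_le (sub_ofReal_mem_logStrip hζ u) hre
    _ = A * (Real.exp (p * u - Real.exp u) * Real.exp (b * (ζ.re - u)) *
          Real.exp (B * Real.exp (ζ.re - a))) := by ring
    _ = A * (Real.exp (b * ζ.re + B * Real.exp (ζ.re - a)) *
          Real.exp ((p - b) * u - Real.exp u)) := by
        rw [← Real.exp_add, ← Real.exp_add, ← Real.exp_add]
        ring_nf
    _ = _ := by ring

theorem StripBounded.norm_gammaKernel_mul_ofReal_le (hf : StripBounded b A B f) (x u : ℝ) :
    ‖gammaKernel p u * f (x - u : ℝ)‖ ≤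
      A * Real.exp (b * x) * Real.exp ((p - b) * u - Real.exp u) := by
  calc ‖gammaKernel p u * f (x - u : ℝ)‖
      ≤ Real.exp (p * u - Real.exp u) * (A * Real.exp (b * (x - u))) := by
        rw [norm_mul, norm_gammaKernel_ofReal]
        gcongr
        exact hf.norm_ofReal_le _
    _ = A * (Real.exp (p * u - Real.exp u) * Real.exp (b * (x - u))) := by ring
    _ = A * (Real.exp (b * x) * Real.exp ((p - b) * u - Real.exp u)) := by
        rw [← Real.exp_add, ← Real.exp_add]
        ring_nf
    _ = _ := by ring

theorem StripBounded.integrable_gammaKernel_mul (hf : StripBounded b A B f) (hp : b < p) (x : ℝ) :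
    Integrable fun u : ℝ => gammaKernel p u * f (x - u : ℝ) := by
  refine ((integrable_exp_mul_sub_exp (sub_pos.2 hp)).const_mul _).mono' ?_
    (Eventually.of_forall (hf.norm_gammaKernel_mul_ofReal_le x))
  exact ((by fun_prop : Continuous fun u : ℝ => gammaKernel p u).mul
    (hf.continuous_ofReal.comp (by fun_prop))).aestronglyMeasurable

end StripBounded

section GammaConv

/-- The integral of `y ↦ K_p(ζ - y) f(y)` along the broken line running from `ζ - ∞` horizontally to
`ζ - a`, straight to the real point `L`, and along the real axis to `+∞`. -/
def gammaConvAlong (p : ℝ) (f : ℂ → ℂ) (L a : ℝ) (ζ : ℂ) : ℂ :=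
  (∫ u in Set.Ioi a, gammaKernel p u * f (ζ - u)) +
    (L + a - ζ) * (∫ s in (0 : ℝ)..1,
      gammaKernel p (a - s * (L + a - ζ)) * f (ζ - a + s * (L + a - ζ))) +
    ∫ y in Set.Ioi L, gammaKernel p (ζ - y) * f y

/-- The holomorphic extension to the strip of the convolution `x ↦ ∫ K_p(x - y) f(y) dy`; in the
variable `z = e^x` this is the multiplicative convolution `∫₀^∞ t^{p-1} e^{-t} f(z/t) dt`. -/
def gammaConv (p : ℝ) (f : ℂ → ℂ) : ℂ → ℂ := gammaConvAlong p f 0 0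

variable {p b A B : ℝ} {f : ℂ → ℂ}

theorem gammaConvAlong_path_mem {ζ : ℂ} (hζ : ζ ∈ logStrip) (L a : ℝ) {s : ℝ}
    (hs : s ∈ Set.uIcc (0 : ℝ) 1) : ζ - a + s * (L + a - ζ) ∈ logStrip := by
  rw [Set.uIcc_of_le zero_le_one] at hs
  have := convex_logStrip (sub_ofReal_mem_logStrip hζ a) (ofReal_mem_logStrip L)
    (sub_nonneg.2 hs.2) hs.1 (by ring)
  convert this using 1
  simp only [Complex.real_smul]
  push_cast
  ring

theorem StripBounded.differentiableOn_gammaConvAlong (hf : StripBounded b A B f) (hp : b < p)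
    (L a : ℝ) : DifferentiableOn ℂ (gammaConvAlong p f L a) logStrip := by
  refine .add (.add ?_ (.mul (by fun_prop) ?_)) ?_
  · refine differentiableOn_integral_of_norm_le_mul isOpen_logStrip
      (c := fun ζ => A * Real.exp (b * ζ.re + B * Real.exp (ζ.re - a)))
      (by fun_prop) (integrable_exp_mul_sub_exp (sub_pos.2 hp)).integrableOn (fun ζ hζ => ?_) ?_ ?_
    · exact (Continuous.mul (by fun_prop) (continuousOn_univ.1 (hf.continuousOn.comp (by fun_prop)
        fun u _ => sub_ofReal_mem_logStrip hζ u))).aestronglyMeasurable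
    · exact Eventually.of_forall fun u => (hf.differentiableOn.comp (by fun_prop)
        fun ζ hζ => sub_ofReal_mem_logStrip hζ u).const_mul _
    · exact (ae_restrict_mem measurableSet_Ioi).mono fun u hu ζ hζ =>
        hf.norm_gammaKernel_mul_sub_le hζ (le_of_lt hu)
  · refine differentiableOn_intervalIntegral_of_continuousOn isOpen_logStrip ?_ fun s hs => ?_
    · exact .mul (by fun_prop) (hf.continuousOn.comp (by fun_prop)
        fun q hq => gammaConvAlong_path_mem hq.1 L a hq.2)
    · exact .mul (differentiable_gammaKernel.comp (by fun_prop)).differentiableOn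
        (hf.differentiableOn.comp (by fun_prop) fun ζ hζ => gammaConvAlong_path_mem hζ L a hs)
  · refine differentiableOn_integral_of_norm_le_mul isOpen_logStrip
      (c := fun ζ => A * Real.exp (p * ζ.re + Real.exp (ζ.re - L)))
      (by fun_prop) (exp_neg_integrableOn_Ioi L (sub_pos.2 hp)) (fun ζ _ => ?_) ?_ ?_
    · exact (Continuous.mul (by fun_prop) hf.continuous_ofReal).aestronglyMeasurable
    · exact Eventually.of_forall fun y =>
        ((differentiable_gammaKernel.comp (by fun_prop)).mul_const _).differentiableOn
    · exact (ae_restrict_mem measurableSet_Ioi).mono fun y hy ζ _ =>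
        hf.norm_gammaKernel_sub_mul_le (le_of_lt hy) ζ

theorem StripBounded.gammaConvAlong_ofReal (hf : StripBounded b A B f) (hp : b < p) (L a x : ℝ) :
    gammaConvAlong p f L a x = ∫ u : ℝ, gammaKernel p u * f (x - u : ℝ) := by
  have hint := hf.integrable_gammaKernel_mul hp x
  have hseg : (L + a - x : ℂ) * (∫ s in (0 : ℝ)..1,
      gammaKernel p (a - s * (L + a - x)) * f (x - a + s * (L + a - x))) =
      ∫ u in (x - L)..a, gammaKernel p u * f (x - u : ℝ) := by
    have := intervalIntegral.smul_integral_comp_sub_mul (a := 0) (b := 1)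
      (fun u : ℝ => gammaKernel p u * f (x - u : ℝ)) (L + a - x) a
    rw [show a - (L + a - x) * 1 = x - L by ring, show a - (L + a - x) * 0 = a by ring] at this
    rw [← this, Complex.real_smul]
    push_cast
    congr 2 with s
    ring_nf
  have hright : ∫ y in Set.Ioi L, gammaKernel p (x - y) * f y =
      ∫ u in Set.Iic (x - L), gammaKernel p u * f (x - u : ℝ) := by
    rw [integral_Iic_eq_integral_Iio, ← integral_indicator measurableSet_Iio,
      ← integral_sub_left_eq_self _ volume x, ← integral_indicator measurableSet_Ioi]
    congr 1 with y
    simp [Set.indicator_apply, sub_lt_sub_iff_left]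
  have hIic := intervalIntegral.integral_Iic_sub_Iic (a := x - L) (b := a)
    hint.integrableOn hint.integrableOn
  have hall := intervalIntegral.integral_Iic_add_Ioi (b := a) hint.integrableOn hint.integrableOn
  rw [gammaConvAlong, hright, hseg, ← hall, ← hIic]
  push_cast
  ring

theorem StripBounded.gammaConv_ofReal (hf : StripBounded b A B f) (hp : b < p) (x : ℝ) :
    gammaConv p f x = ∫ u : ℝ, gammaKernel p u * f (x - u : ℝ) :=
  hf.gammaConvAlong_ofReal hp 0 0 x

theorem StripBounded.gammaConv_eq_gammaConvAlong (hf : StripBounded b A B f) (hp : b < p)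
    (L a : ℝ) : Set.EqOn (gammaConv p f) (gammaConvAlong p f L a) logStrip :=
  eqOn_logStrip_of_eq_ofReal (hf.differentiableOn_gammaConvAlong hp 0 0)
    (hf.differentiableOn_gammaConvAlong hp L a) fun x => by
      rw [hf.gammaConv_ofReal hp, hf.gammaConvAlong_ofReal hp]

theorem StripBounded.norm_gammaConv_ofReal_le (hf : StripBounded b A B f) (hp : b < p) (x : ℝ) :
    ‖gammaConv p f x‖ ≤ A * Real.Gamma (p - b) * Real.exp (b * x) := by
  rw [hf.gammaConv_ofReal hp]
  refine (norm_integral_le_of_norm_le ((integrable_exp_mul_sub_exp (sub_pos.2 hp)).const_mul _)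
    (Eventually.of_forall (hf.norm_gammaKernel_mul_ofReal_le x))).trans_eq ?_
  rw [integral_const_mul, integral_exp_mul_sub_exp (sub_pos.2 hp)]
  ring

theorem StripBounded.norm_integral_left_le (hf : StripBounded b A B f) (hp : b < p) {ζ : ℂ}
    (hζ : ζ ∈ logStrip) (a : ℝ) : ‖∫ u in Set.Ioi a, gammaKernel p u * f (ζ - u)‖ ≤
      A * Real.exp (b * ζ.re + B * Real.exp (ζ.re - a)) * Real.Gamma (p - b) := by
  have hint := integrable_exp_mul_sub_exp (sub_pos.2 hp)
  have hA := hf.nonneg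
  calc ‖∫ u in Set.Ioi a, gammaKernel p u * f (ζ - u)‖
      ≤ ∫ u in Set.Ioi a, A * Real.exp (b * ζ.re + B * Real.exp (ζ.re - a)) *
          Real.exp ((p - b) * u - Real.exp u) :=
        norm_integral_le_of_norm_le (hint.const_mul _).integrableOn <|
          (ae_restrict_mem measurableSet_Ioi).mono fun u hu =>
            hf.norm_gammaKernel_mul_sub_le hζ (le_of_lt hu)
    _ ≤ ∫ u : ℝ, A * Real.exp (b * ζ.re + B * Real.exp (ζ.re - a)) *
          Real.exp ((p - b) * u - Real.exp u) :=
        setIntegral_le_integral (hint.const_mul _) (Eventually.of_forall fun u => by positivity)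
    _ = _ := by rw [integral_const_mul, integral_exp_mul_sub_exp (sub_pos.2 hp)]

theorem StripBounded.norm_integral_right_le (hf : StripBounded b A B f) (hp : b < p) (ζ : ℂ)
    (L : ℝ) : ‖∫ y in Set.Ioi L, gammaKernel p (ζ - y) * f y‖ ≤
      A * Real.exp (p * ζ.re + Real.exp (ζ.re - L)) * (Real.exp (-(p - b) * L) / (p - b)) := by
  refine (norm_integral_le_of_norm_le ((exp_neg_integrableOn_Ioi L (sub_pos.2 hp)).const_mul _)
    ((ae_restrict_mem measurableSet_Ioi).mono fun y hy =>
      hf.norm_gammaKernel_sub_mul_le (le_of_lt hy) ζ)).trans_eq ?_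
  rw [integral_const_mul, integral_exp_mul_Ioi (by linarith), neg_div_neg_eq]

theorem StripBounded.norm_integral_segment_le (hf : StripBounded b A B f) {ζ : ℂ}
    (hζ : ζ ∈ logStrip) (lam : ℝ) :
    ‖((ζ.re + lam : ℝ) + (-lam : ℝ) - ζ) * ∫ s in (0 : ℝ)..1,
      gammaKernel p ((-lam : ℝ) - s * ((ζ.re + lam : ℝ) + (-lam : ℝ) - ζ)) *
        f (ζ - (-lam : ℝ) + s * ((ζ.re + lam : ℝ) + (-lam : ℝ) - ζ))‖ ≤
      A * Real.exp (b * (ζ.re + lam) + B * Real.exp (ζ.re + lam)) * Real.pi *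
        Real.exp (-(p * lam) + Real.exp (-lam)) := by
  have hvert : (((ζ.re + lam : ℝ) : ℂ) + (-lam : ℝ) - ζ) = -(ζ.im * Complex.I) := by
    apply Complex.ext <;> simp
  have hmem := fun s hs => gammaConvAlong_path_mem hζ (ζ.re + lam) (-lam) (s := s) hs
  rw [hvert] at hmem ⊢
  have hbound : ∀ s ∈ Set.uIoc (0 : ℝ) 1,
      ‖gammaKernel p ((-lam : ℝ) - s * -(ζ.im * Complex.I)) *
        f (ζ - (-lam : ℝ) + s * -(ζ.im * Complex.I))‖ ≤
      Real.exp (-(p * lam) + Real.exp (-lam)) *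
        (A * Real.exp (b * (ζ.re + lam) + B * Real.exp (ζ.re + lam))) := fun s hs => by
    rw [norm_mul, Real.exp_add (b * _), ← mul_assoc A]
    refine mul_le_mul ?_ ?_ (norm_nonneg _) (Real.exp_nonneg _)
    · simpa using norm_gammaKernel_le (p := p) ((-lam : ℝ) - s * -(ζ.im * Complex.I))
    · simpa using hf.norm_le _ (hmem s (Set.uIoc_subset_uIcc hs))
  calc _ ≤ Real.pi * (Real.exp (-(p * lam) + Real.exp (-lam)) *
        (A * Real.exp (b * (ζ.re + lam) + B * Real.exp (ζ.re + lam))) * |1 - 0|) := by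
        rw [norm_mul]
        gcongr
        · simpa using le_of_lt hζ
        · exact intervalIntegral.norm_integral_le_of_norm_le_const hbound
    _ = _ := by
        rw [sub_zero, abs_one]
        ring

/-- Bending the contour at real part `Re ζ + lam` bounds the convolution by a quantity in which
`lam` is free: it is taken to be about `-log p` for large `p`. -/
theorem StripBounded.norm_gammaConv_le (hf : StripBounded b A B f) (hp : b < p) {ζ : ℂ}
    (hζ : ζ ∈ logStrip) (lam : ℝ) : ‖gammaConv p f ζ‖ ≤
      A * (Real.Gamma (p - b) +
        (Real.pi + 1 / (p - b)) * Real.exp (-(p - b) * lam + Real.exp (-lam))) *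
      Real.exp (b * ζ.re) * Real.exp (B * Real.exp (ζ.re + lam)) := by
  have hA := hf.nonneg
  have hB := hf.nonneg_growth
  have hpb := sub_pos.2 hp
  set E := Real.exp (B * Real.exp (ζ.re + lam))
  have hE : 1 ≤ E := Real.one_le_exp (by positivity)
  have hleft := hf.norm_integral_left_le hp hζ (-lam)
  have hseg := hf.norm_integral_segment_le (p := p) hζ lam
  have hright := hf.norm_integral_right_le hp ζ (ζ.re + lam)
  rw [hf.gammaConv_eq_gammaConvAlong hp (ζ.re + lam) (-lam) hζ, gammaConvAlong]
  refine (norm_add₃_le.trans (add_le_add_three hleft hseg hright)).trans ?_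
  calc _ = A * (Real.Gamma (p - b) + Real.pi * Real.exp (-(p - b) * lam + Real.exp (-lam))) *
        Real.exp (b * ζ.re) * E + A * (1 / (p - b) * Real.exp (-(p - b) * lam + Real.exp (-lam))) *
          Real.exp (b * ζ.re) * 1 := by
        simp only [sub_neg_eq_add, sub_add_cancel_left, E, neg_sub, sub_mul, mul_add, Real.exp_add,
          Real.exp_sub, Real.exp_neg]
        field_simp
    _ ≤ A * (Real.Gamma (p - b) + Real.pi * Real.exp (-(p - b) * lam + Real.exp (-lam))) *
        Real.exp (b * ζ.re) * E + A * (1 / (p - b) * Real.exp (-(p - b) * lam + Real.exp (-lam))) *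
          Real.exp (b * ζ.re) * E := by gcongr
    _ = _ := by ring

theorem StripBounded.gammaConv (hf : StripBounded b A B f) (hp : b < p) :
    StripBounded b (A * (Real.Gamma (p - b) + (Real.pi + 1 / (p - b)) * Real.exp 1)) B
      (gammaConv p f) where
  nonneg_growth := hf.nonneg_growth
  differentiableOn := hf.differentiableOn_gammaConvAlong hp 0 0
  norm_ofReal_le x := (hf.norm_gammaConv_ofReal_le hp x).trans <| by
    have := hf.nonneg
    have := sub_pos.2 hp
    gcongr
    exact le_add_of_nonneg_right (by positivity)
  norm_le ζ hζ := by simpa using hf.norm_gammaConv_le hp hζ 0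

end GammaConv

section GammaAsymptotics

theorem mul_log_le_log_Gamma_sub_log_Gamma {x y : ℝ} (hx : 1 < x) (hxy : x < y) :
    (y - x) * Real.log (x - 1) ≤ Real.log (Real.Gamma y) - Real.log (Real.Gamma x) ∧
      Real.log (Real.Gamma y) - Real.log (Real.Gamma x) ≤ (y - x) * Real.log y := by
  have hstep : ∀ z : ℝ, 0 < z →
      Real.log (Real.Gamma (z + 1)) - Real.log (Real.Gamma z) = Real.log z := fun z hz => by
    rw [Real.Gamma_add_one hz.ne', Real.log_mul hz.ne' (Real.Gamma_pos_of_pos hz).ne',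
      add_sub_cancel_right]
  have hconv := Real.convexOn_log_Gamma
  have hlower := hconv.slope_mono_adjacent (x := x - 1) (y := x) (z := y)
    (sub_pos.2 hx) (by simp; linarith) (sub_one_lt x) hxy
  have hupper := hconv.slope_mono_adjacent (x := x) (y := y) (z := y + 1)
    (by simp; linarith) (by simp; linarith) hxy (lt_add_one y)
  simp only [Function.comp_apply, sub_sub_cancel, div_one, add_sub_cancel_left] at hlower hupper
  have hx' := hstep (x - 1) (by linarith)
  rw [sub_add_cancel] at hx'
  rw [hx', le_div_iff₀ (sub_pos.2 hxy)] at hlower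
  rw [hstep y (by linarith), div_le_iff₀ (sub_pos.2 hxy)] at hupper
  constructor <;> linarith

theorem abs_log_Gamma_add_sub_le (s : ℝ) {p : ℝ} (hp : |s| + 1 < p) :
    |Real.log (Real.Gamma (p + s)) - Real.log (Real.Gamma p) - s * Real.log p| ≤
      |s| * (Real.log (p + |s|) - Real.log (p - (|s| + 1))) := by
  have hlog : ∀ {u v : ℝ}, p - (|s| + 1) ≤ u → u ≤ v → Real.log u ≤ Real.log v := fun hu huv =>
    Real.log_le_log (by linarith) huv
  rw [abs_le]
  rcases lt_trichotomy s 0 with hs | rfl | hs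
  · rw [abs_of_neg hs] at hp hlog ⊢
    obtain ⟨h₁, h₂⟩ := mul_log_le_log_Gamma_sub_log_Gamma (x := p + s) (y := p)
      (by linarith) (by linarith)
    have h₃ := hlog (u := p) (v := p + -s) (by linarith) (by linarith)
    have h₄ := hlog (u := p - (-s + 1)) (v := p) le_rfl (by linarith)
    rw [show p + s - 1 = p - (-s + 1) by ring] at h₁
    constructor <;> nlinarith
  · simp
  · rw [abs_of_pos hs] at hp hlog ⊢
    obtain ⟨h₁, h₂⟩ := mul_log_le_log_Gamma_sub_log_Gamma (x := p) (y := p + s)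
      (by linarith) (by linarith)
    have h₃ := hlog (u := p - (s + 1)) (v := p - 1) le_rfl (by linarith)
    have h₄ := hlog (u := p) (v := p + s) (by linarith) (by linarith)
    have h₅ := hlog (u := p - (s + 1)) (v := p) le_rfl (by linarith)
    constructor <;> nlinarith

theorem tendsto_Gamma_add_div (s : ℝ) :
    Tendsto (fun p : ℝ => Real.Gamma (p + s) / (Real.Gamma p * p ^ s)) atTop (𝓝 1) := by
  have hlog : Tendsto (fun p : ℝ => |s| * (Real.log (p + |s|) - Real.log (p - (|s| + 1)))) atTop
      (𝓝 0) := by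
    have := (Real.tendsto_log_comp_add_sub_log |s|).sub
      (Real.tendsto_log_comp_add_sub_log (-(|s| + 1)))
    simpa [sub_eq_add_neg] using this.const_mul |s|
  have hdiff : Tendsto (fun p : ℝ =>
      Real.log (Real.Gamma (p + s)) - Real.log (Real.Gamma p) - s * Real.log p) atTop (𝓝 0) :=
    squeeze_zero_norm' ((eventually_gt_atTop (|s| + 1)).mono fun p hp =>
      abs_log_Gamma_add_sub_le s hp) hlog
  refine (Real.exp_zero ▸ (Real.continuous_exp.tendsto 0).comp hdiff).congr' ?_
  filter_upwards [eventually_gt_atTop |s|] with p hp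
  have hp₀ : 0 < p := (abs_nonneg s).trans_lt hp
  have hps : 0 < p + s := by linarith [neg_abs_le s]
  rw [Function.comp_apply, Real.exp_sub, Real.exp_sub, Real.exp_log (Real.Gamma_pos_of_pos hps),
    Real.exp_log (Real.Gamma_pos_of_pos hp₀), mul_comm s, ← Real.rpow_def_of_pos hp₀, div_div]

theorem exp_mul_log_sub_le_Gamma {p : ℝ} (hp : 0 < p) :
    Real.exp (p * Real.log p - 2 * p) ≤ Real.Gamma p := by
  have hint := integrable_exp_mul_sub_exp hp
  have hle : ∀ u ∈ Set.Ioc (Real.log p - 1) (Real.log p),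
      Real.exp (p * Real.log p - 2 * p) ≤ Real.exp (p * u - Real.exp u) := fun u hu => by
    have : Real.exp u ≤ p := (Real.le_log_iff_exp_le hp).1 hu.2
    exact Real.exp_le_exp.2 (by nlinarith [hu.1])
  calc Real.exp (p * Real.log p - 2 * p)
      = ∫ _ in Set.Ioc (Real.log p - 1) (Real.log p), Real.exp (p * Real.log p - 2 * p) := by simp
    _ ≤ ∫ u in Set.Ioc (Real.log p - 1) (Real.log p), Real.exp (p * u - Real.exp u) :=
        setIntegral_mono_on (by simp) hint.integrableOn measurableSet_Ioc hle
    _ ≤ ∫ u : ℝ, Real.exp (p * u - Real.exp u) :=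
        setIntegral_le_integral hint (Eventually.of_forall fun u => by positivity)
    _ = Real.Gamma p := integral_exp_mul_sub_exp hp

theorem exp_mul_sub_log_mul {p s : ℝ} (hp : 0 < p) (u : ℝ) :
    Real.exp (p * u - Real.exp u) * Real.exp (s * (u - Real.log p)) =
      (p ^ s)⁻¹ * Real.exp ((p + s) * u - Real.exp u) := by
  rw [Real.rpow_def_of_pos hp, ← Real.exp_neg, ← Real.exp_add, ← Real.exp_add]
  ring_nf

theorem integrable_exp_mul_sub_exp_mul {p s : ℝ} (hp : 0 < p) (hs : 0 < p + s) :
    Integrable fun u : ℝ =>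
      Real.exp (p * u - Real.exp u) * Real.exp (s * (u - Real.log p)) := by
  simpa only [exp_mul_sub_log_mul hp] using (integrable_exp_mul_sub_exp hs).const_mul _

theorem integral_exp_mul_sub_exp_mul {p s : ℝ} (hp : 0 < p) (hs : 0 < p + s) :
    ∫ u : ℝ, Real.exp (p * u - Real.exp u) * Real.exp (s * (u - Real.log p)) =
      (p ^ s)⁻¹ * Real.Gamma (p + s) := by
  simp only [exp_mul_sub_log_mul hp]
  rw [integral_const_mul, integral_exp_mul_sub_exp hs]

/-- The Gamma-weighted mean of `(w - 1)² (1 + w^{-b})` with `w = e^u / p`; the normalized Gamma law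
concentrates at `w = 1`. -/
def gammaDeviation (b p : ℝ) : ℝ :=
  (Real.Gamma p)⁻¹ * ∫ u : ℝ, Real.exp (p * u - Real.exp u) *
    ((Real.exp (u - Real.log p) - 1) ^ 2 * (1 + Real.exp (-b * (u - Real.log p))))

theorem mul_deviation_eq (w b v : ℝ) :
    w * ((Real.exp v - 1) ^ 2 * (1 + Real.exp (-b * v))) =
      w * Real.exp (2 * v) - 2 * (w * Real.exp (1 * v)) + w * Real.exp (0 * v) +
        (w * Real.exp ((2 - b) * v) - 2 * (w * Real.exp ((1 - b) * v)) +
          w * Real.exp ((0 - b) * v)) := by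
  have h₁ : Real.exp ((1 - b) * v) = Real.exp v * Real.exp (-b * v) := by
    rw [← Real.exp_add]
    ring_nf
  have h₂ : Real.exp ((2 - b) * v) = Real.exp v ^ 2 * Real.exp (-b * v) := by
    rw [sq, ← Real.exp_add, ← Real.exp_add]
    ring_nf
  rw [h₁, h₂, two_mul, Real.exp_add, one_mul, zero_mul, Real.exp_zero, zero_sub]
  ring

theorem integrable_deviation {b p : ℝ} (hp : 0 < p) (hb : b < p) :
    Integrable fun u : ℝ => Real.exp (p * u - Real.exp u) *
      ((Real.exp (u - Real.log p) - 1) ^ 2 * (1 + Real.exp (-b * (u - Real.log p)))) := by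
  have hint := fun s hs => integrable_exp_mul_sub_exp_mul (s := s) hp hs
  simp only [mul_deviation_eq]
  exact (((hint 2 (by linarith)).sub ((hint 1 (by linarith)).const_mul 2)).add
    (hint 0 (by linarith))).add (((hint (2 - b) (by linarith)).sub
      ((hint (1 - b) (by linarith)).const_mul 2)).add (hint (0 - b) (by linarith)))

theorem gammaDeviation_eq {b p : ℝ} (hp : 0 < p) (hb : b < p) :
    gammaDeviation b p =
      let R := fun s => Real.Gamma (p + s) / (Real.Gamma p * p ^ s)
      R 2 - 2 * R 1 + R 0 + (R (2 - b) - 2 * R (1 - b) + R (0 - b)) := by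
  have hint := fun s hs => integrable_exp_mul_sub_exp_mul (s := s) hp hs
  have h₂ := hint 2 (by linarith)
  have h₁ := (hint 1 (by linarith)).const_mul 2
  have h₂' := hint (2 - b) (by linarith)
  have h₁' := (hint (1 - b) (by linarith)).const_mul 2
  have h₀ := hint 0 (by linarith)
  have h₀' := hint (0 - b) (by linarith)
  simp only [gammaDeviation, mul_deviation_eq]
  rw [integral_add, integral_add, integral_sub, integral_add, integral_sub,
    integral_const_mul, integral_const_mul]
  · have hmean {s : ℝ} (hs : 0 < p + s) := integral_exp_mul_sub_exp_mul hp hs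
    have hΓ := (Real.Gamma_pos_of_pos hp).ne'
    rw [hmean (s := 2) (by linarith), hmean (s := 1) (by linarith), hmean (s := 0) (by linarith),
      hmean (s := 2 - b) (by linarith), hmean (s := 1 - b) (by linarith),
      hmean (s := 0 - b) (by linarith)]
    field_simp
  exacts [h₂', h₁', h₂'.sub h₁', h₀', h₂, h₁, h₂.sub h₁, h₀, (h₂.sub h₁).add h₀,
    (h₂'.sub h₁').add h₀']

theorem tendsto_gammaDeviation (b : ℝ) : Tendsto (gammaDeviation b) atTop (𝓝 0) := by
  have hR := tendsto_Gamma_add_div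
  have hlim := (((hR 2).sub ((hR 1).const_mul 2)).add (hR 0)).add
    (((hR (2 - b)).sub ((hR (1 - b)).const_mul 2)).add (hR (0 - b)))
  rw [show (1 - 2 * 1 + 1 + (1 - 2 * 1 + 1) : ℝ) = 0 by norm_num] at hlim
  refine hlim.congr' ?_
  filter_upwards [eventually_gt_atTop 0, eventually_gt_atTop b] with p hp hb
    using (gammaDeviation_eq hp hb).symm

end GammaAsymptotics

section RescaledGammaConv

/-- The convolution `gammaConv p` renormalized to an approximate identity for large `p`: the kernel
has total mass `Γ(p)` and is concentrated near `log p`. -/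
def rescaledGammaConv (p : ℝ) (f : ℂ → ℂ) (ζ : ℂ) : ℂ :=
  gammaConv p f (ζ + Real.log p) / Real.Gamma p

variable {p b A B : ℝ} {f : ℂ → ℂ}

theorem exp_bent_contour_le_Gamma (hp : 0 < p) (b : ℝ) :
    Real.exp (-(p - b) * (3 - Real.log p) + Real.exp (-(3 - Real.log p))) *
      Real.exp (b * Real.log p) ≤ Real.exp (3 * b) * Real.Gamma p := by
  have hexp : Real.exp (-(3 - Real.log p)) ≤ p := by
    rw [neg_sub]
    exact (Real.exp_le_exp.2 (by linarith)).trans_eq (Real.exp_log hp)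
  calc _ ≤ Real.exp (3 * b) * Real.exp (p * Real.log p - 2 * p) := by
        rw [← Real.exp_add, ← Real.exp_add]
        exact Real.exp_le_exp.2 (by linarith)
    _ ≤ Real.exp (3 * b) * Real.Gamma p := by
        gcongr
        exact exp_mul_log_sub_le_Gamma hp

theorem eventually_Gamma_sub_mul_le (b : ℝ) : ∀ᶠ p : ℝ in atTop,
    Real.Gamma (p - b) * Real.exp (b * Real.log p) ≤ 2 * Real.Gamma p := by
  filter_upwards [(tendsto_Gamma_add_div (-b)).eventually_le_const one_lt_two,
    eventually_gt_atTop 0] with p hp hp₀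
  have hΓ := Real.Gamma_pos_of_pos hp₀
  rw [div_le_iff₀ (by positivity), Real.rpow_neg hp₀.le, ← sub_eq_add_neg, ← mul_assoc,
    ← div_eq_mul_inv, le_div_iff₀ (by positivity)] at hp
  rwa [mul_comm b, ← Real.rpow_def_of_pos hp₀]

theorem StripBounded.differentiableOn_rescaledGammaConv (hf : StripBounded b A B f) (hp : b < p) :
    DifferentiableOn ℂ (rescaledGammaConv p f) logStrip :=
  ((hf.differentiableOn_gammaConvAlong hp 0 0).comp (by fun_prop)
    fun _ hζ => add_ofReal_mem_logStrip hζ _).div_const _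

theorem StripBounded.norm_rescaledGammaConv_ofReal_le (hf : StripBounded b A B f) (hp₀ : 0 < p)
    (hp : b < p) (hΓ : Real.Gamma (p - b) * Real.exp (b * Real.log p) ≤ 2 * Real.Gamma p) (x : ℝ) :
    ‖rescaledGammaConv p f x‖ ≤ A * 2 * Real.exp (b * x) := by
  have hA := hf.nonneg
  have hpos := Real.Gamma_pos_of_pos hp₀
  rw [rescaledGammaConv, norm_div, Complex.norm_real, Real.norm_of_nonneg hpos.le,
    div_le_iff₀ hpos, ← Complex.ofReal_add]
  calc _ ≤ A * Real.Gamma (p - b) * Real.exp (b * (x + Real.log p)) :=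
        hf.norm_gammaConv_ofReal_le hp _
    _ = A * (Real.Gamma (p - b) * Real.exp (b * Real.log p)) * Real.exp (b * x) := by
        rw [mul_add, Real.exp_add]
        ring
    _ ≤ A * (2 * Real.Gamma p) * Real.exp (b * x) := by gcongr
    _ = _ := by ring

theorem StripBounded.norm_rescaledGammaConv_le (hf : StripBounded b A B f) (hp₀ : 0 < p)
    (hp : b + 1 ≤ p) (hΓ : Real.Gamma (p - b) * Real.exp (b * Real.log p) ≤ 2 * Real.Gamma p)
    {ζ : ℂ} (hζ : ζ ∈ logStrip) : ‖rescaledGammaConv p f ζ‖ ≤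
      A * (2 + (Real.pi + 1) * Real.exp (3 * b)) * Real.exp (b * ζ.re) *
        Real.exp (Real.exp 3 * B * Real.exp ζ.re) := by
  have hA := hf.nonneg
  have hpos := Real.Gamma_pos_of_pos hp₀
  have hpb : 1 / (p - b) ≤ 1 := div_le_one_of_le₀ (by linarith) (by linarith)
  rw [rescaledGammaConv, norm_div, Complex.norm_real, Real.norm_of_nonneg hpos.le,
    div_le_iff₀ hpos]
  set P := Real.exp (b * Real.log p)
  set T := Real.exp (-(p - b) * (3 - Real.log p) + Real.exp (-(3 - Real.log p)))
  set W := Real.exp (b * ζ.re) * Real.exp (Real.exp 3 * B * Real.exp ζ.re)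
  calc _ ≤ A * (Real.Gamma (p - b) + (Real.pi + 1 / (p - b)) * T) *
          Real.exp (b * (ζ + Real.log p).re) *
          Real.exp (B * Real.exp ((ζ + Real.log p).re + (3 - Real.log p))) :=
        hf.norm_gammaConv_le (by linarith) (add_ofReal_mem_logStrip hζ _) (3 - Real.log p)
    _ = A * (Real.Gamma (p - b) * P + (Real.pi + 1 / (p - b)) * (T * P)) * W := by
        simp only [P, W, Complex.add_re, Complex.ofReal_re, add_add_sub_cancel, mul_add,
          Real.exp_add]
        ring_nf
    _ ≤ A * (2 * Real.Gamma p + (Real.pi + 1) * (Real.exp (3 * b) * Real.Gamma p)) * W := by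
        gcongr ?_ * (?_ + (_ + ?_) * ?_) * _
        exact exp_bent_contour_le_Gamma hp₀ b
    _ = _ := by simp only [W]; ring

theorem eventually_stripBounded_rescaledGammaConv (b : ℝ) : ∀ᶠ p in atTop, ∀ A B f,
    StripBounded b A B f → StripBounded b (A * (2 + (Real.pi + 1) * Real.exp (3 * b)))
      (Real.exp 3 * B) (rescaledGammaConv p f) := by
  filter_upwards [eventually_gt_atTop 0, eventually_ge_atTop (b + 1),
    eventually_Gamma_sub_mul_le b] with p hp₀ hp hΓ A B f hf
  have hA := hf.nonneg
  exact
    { nonneg_growth := mul_nonneg (Real.exp_pos 3).le hf.nonneg_growth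
      differentiableOn := hf.differentiableOn_rescaledGammaConv (by linarith)
      norm_ofReal_le := fun x =>
        (hf.norm_rescaledGammaConv_ofReal_le hp₀ (by linarith) hΓ x).trans <| by
          gcongr
          exact le_add_of_nonneg_right (by positivity)
      norm_le := fun ζ => hf.norm_rescaledGammaConv_le hp₀ hp hΓ }

theorem StripBounded.rescaledGammaConv_ofReal (hf : StripBounded b A B f) (hp : b < p) (x : ℝ) :
    rescaledGammaConv p f x =
      (Real.Gamma p : ℂ)⁻¹ * ∫ u : ℝ, gammaKernel p u * f (x - (u - Real.log p) : ℝ) := by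
  rw [rescaledGammaConv, ← Complex.ofReal_add, hf.gammaConv_ofReal hp, div_eq_inv_mul]
  simp only [sub_sub_eq_add_sub, add_comm x, add_sub_right_comm]

theorem StripBounded.rescaledGammaConv_sub (hf : StripBounded b A B f) (hp₀ : 0 < p) (hp : b < p)
    (x : ℝ) : rescaledGammaConv p f x - f x = (Real.Gamma p : ℂ)⁻¹ *
      ∫ u : ℝ, gammaKernel p u * (f (x - (u - Real.log p) : ℝ) - f x) := by
  have hmass : ∫ u : ℝ, gammaKernel p u = Real.Gamma p := by
    rw [← integral_exp_mul_sub_exp hp₀, ← integral_complex_ofReal]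
    congr 1 with u
    simp [gammaKernel]
  have hint : Integrable fun u : ℝ => gammaKernel p u :=
    (integrable_exp_mul_sub_exp hp₀).mono' (by fun_prop : Continuous _).aestronglyMeasurable
      (Eventually.of_forall fun u => (norm_gammaKernel_ofReal u).le)
  have hΓ : (Real.Gamma p : ℂ) ≠ 0 := Complex.ofReal_ne_zero.2 (Real.Gamma_pos_of_pos hp₀).ne'
  simp only [mul_sub]
  rw [integral_sub, integral_mul_const, hmass, mul_sub, ← hf.rescaledGammaConv_ofReal hp,
    inv_mul_cancel_left₀ hΓ]
  · simpa only [sub_sub_eq_add_sub, add_sub_right_comm, add_comm x] using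
      hf.integrable_gammaKernel_mul hp (x + Real.log p)
  · exact hint.mul_const _

theorem StripBounded.norm_rescaledGammaConv_sub_le (hf : StripBounded b A B f) (hp₀ : 0 < p)
    (hp : b < p) {x ε M : ℝ} (hM : ∀ v : ℝ, ‖f (x - v : ℝ) - f x‖ ≤
      ε + M * ((Real.exp v - 1) ^ 2 * (1 + Real.exp (-b * v)))) :
    ‖rescaledGammaConv p f x - f x‖ ≤ ε + M * gammaDeviation b p := by
  have hΓ := Real.Gamma_pos_of_pos hp₀
  have hint₁ := (integrable_exp_mul_sub_exp hp₀).const_mul ε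
  have hint₂ := (integrable_deviation hp₀ hp).const_mul M
  have hle : ∀ u : ℝ, ‖gammaKernel p u * (f (x - (u - Real.log p) : ℝ) - f x)‖ ≤
      ε * Real.exp (p * u - Real.exp u) + M * (Real.exp (p * u - Real.exp u) *
        ((Real.exp (u - Real.log p) - 1) ^ 2 * (1 + Real.exp (-b * (u - Real.log p))))) :=
    fun u => by
      rw [norm_mul, norm_gammaKernel_ofReal]
      exact (mul_le_mul_of_nonneg_left (hM _) (Real.exp_pos _).le).trans_eq (by ring)
  rw [hf.rescaledGammaConv_sub hp₀ hp, norm_mul, norm_inv, Complex.norm_real,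
    Real.norm_of_nonneg hΓ.le]
  calc _ ≤ (Real.Gamma p)⁻¹ * (∫ u : ℝ, ε * Real.exp (p * u - Real.exp u) +
        M * (Real.exp (p * u - Real.exp u) * ((Real.exp (u - Real.log p) - 1) ^ 2 *
          (1 + Real.exp (-b * (u - Real.log p)))))) := by
        gcongr
        exact norm_integral_le_of_norm_le (hint₁.add hint₂) (Eventually.of_forall hle)
    _ = ε + M * gammaDeviation b p := by
        rw [integral_add hint₁ hint₂, integral_const_mul, integral_const_mul,
          integral_exp_mul_sub_exp hp₀, gammaDeviation, mul_add, mul_left_comm _ ε,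
          inv_mul_cancel₀ hΓ.ne', mul_one, mul_left_comm _ M]

end RescaledGammaConv

section StripConverges

variable {ι : Type*} {l : Filter ι} {b A B : ℝ} {F : ι → ℂ → ℂ} {g : ℂ → ℂ}

theorem locallyBoundedFamily_of_stripBounded (hF : ∀ᶠ n in l, StripBounded b A B (F n)) :
    LocallyBoundedFamily l F logStrip := by
  intro z hz
  obtain ⟨r, hr, hball⟩ := Metric.isOpen_iff.1 isOpen_logStrip z hz
  refine ⟨A * Real.exp (|b| * (|z.re| + r)) * Real.exp (B * Real.exp (z.re + r)), r, hr, ?_⟩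
  filter_upwards [hF] with n hn w hw
  have hA := hn.nonneg
  have hre : |w.re - z.re| ≤ r :=
    (Complex.abs_re_le_norm (w - z)).trans (mem_ball_iff_norm.1 hw).le
  have hw_re : |w.re| ≤ |z.re| + r := by linarith [abs_sub_abs_le_abs_sub w.re z.re]
  have hb : b * w.re ≤ |b| * (|z.re| + r) :=
    (le_abs_self _).trans ((abs_mul _ _).trans_le (by gcongr))
  refine (hn.norm_le_of_re_le (c := z.re + r) (hball hw)
    (by linarith [le_abs_self (w.re - z.re)])).trans ?_
  gcongr

theorem one_sub_exp_neg_sq_le {δ v : ℝ} (hδ : 0 < δ) (hv : δ ≤ |v|) :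
    (1 - Real.exp (-δ)) ^ 2 ≤ (Real.exp v - 1) ^ 2 := by
  have hδ' : 0 ≤ 1 - Real.exp (-δ) := sub_nonneg.2 (Real.exp_le_one_iff.2 (by linarith))
  rw [← sq_abs (Real.exp v - 1)]
  gcongr
  rcases le_abs'.1 hv with hv | hv
  · have := Real.exp_le_exp.2 hv
    linarith [neg_abs_le (Real.exp v - 1)]
  · have hexp := Real.exp_le_exp.2 hv
    have hmul : Real.exp δ * Real.exp (-δ) = 1 := by
      rw [← Real.exp_add, add_neg_cancel, Real.exp_zero]
    nlinarith [le_abs_self (Real.exp v - 1), sq_nonneg (Real.exp δ - 1), Real.exp_pos (-δ)]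

theorem exists_norm_sub_le_deviation (hF : ∀ᶠ n in l, StripBounded b A B (F n)) (x : ℝ) {ε : ℝ}
    (hε : 0 < ε) : ∃ M, ∀ᶠ n in l, ∀ v : ℝ, ‖F n (x - v : ℝ) - F n x‖ ≤
      ε + M * ((Real.exp v - 1) ^ 2 * (1 + Real.exp (-b * v))) := by
  obtain ⟨K, hK, r, hr, hLip⟩ := (locallyBoundedFamily_of_stripBounded hF).exists_lipschitz
    isOpen_logStrip (hF.mono fun n hn => hn.differentiableOn) (ofReal_mem_logStrip x)
  set δ := min r (ε / K)
  have hδ : 0 < δ := lt_min hr (by positivity)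
  obtain ⟨c, hc, hcδ⟩ : ∃ c > 0, ∀ v : ℝ, δ ≤ |v| → c ≤ (Real.exp v - 1) ^ 2 :=
    ⟨_, pow_pos (sub_pos.2 (Real.exp_lt_one_iff.2 (neg_lt_zero.2 hδ))) 2,
      fun v => one_sub_exp_neg_sq_le hδ⟩
  refine ⟨A * Real.exp (b * x) / c, ?_⟩
  filter_upwards [hLip, hF] with n hn hb v
  have hA := hb.nonneg
  rcases lt_or_ge |v| δ with hv | hv
  · have hdist : dist ((x - v : ℝ) : ℂ) x = |v| := by simp
    have := hn (x - v : ℝ) (by rw [Metric.mem_ball, hdist]; exact hv.trans_le (min_le_left _ _))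
    rw [hdist, dist_eq_norm] at this
    have hKv : K * |v| ≤ ε := by
      rw [← le_div_iff₀' hK]
      exact (hv.trans_le (min_le_right _ _)).le
    exact (this.trans hKv).trans (le_add_of_nonneg_right (by positivity))
  · calc ‖F n (x - v : ℝ) - F n x‖
        ≤ A * Real.exp (b * (x - v)) + A * Real.exp (b * x) :=
          (norm_sub_le _ _).trans (add_le_add (hb.norm_ofReal_le _) (hb.norm_ofReal_le _))
      _ = A * Real.exp (b * x) / c * (c * (1 + Real.exp (-b * v))) := by
          rw [mul_sub, sub_eq_add_neg, Real.exp_add, ← neg_mul]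
          field_simp
          ring
      _ ≤ A * Real.exp (b * x) / c * ((Real.exp v - 1) ^ 2 * (1 + Real.exp (-b * v))) := by
          gcongr
          exact hcδ v hv
      _ ≤ _ := le_add_of_nonneg_left hε.le

theorem tendsto_rescaledGammaConv_sub_ofReal (hF : ∀ᶠ n in l, StripBounded b A B (F n))
    {q : ι → ℝ} (hq : Tendsto q l atTop) (x : ℝ) :
    Tendsto (fun n => rescaledGammaConv (q n) (F n) x - F n x) l (𝓝 0) := by
  refine Metric.tendsto_nhds.2 fun ε hε => ?_
  obtain ⟨M, hM⟩ := exists_norm_sub_le_deviation hF x (half_pos hε)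
  have hdev : Tendsto (fun n => ε / 2 + M * gammaDeviation b (q n)) l (𝓝 (ε / 2)) := by
    simpa using (((tendsto_gammaDeviation b).comp hq).const_mul M).const_add (ε / 2)
  filter_upwards [hF, hM, hq.eventually_gt_atTop 0, hq.eventually_gt_atTop b,
    hdev.eventually_lt_const (half_lt_self hε)] with n hn hMn hq₀ hqb hlt
  rw [dist_zero_right]
  exact (hn.norm_rescaledGammaConv_sub_le hq₀ hqb hMn).trans_lt hlt

/-- Pointwise convergence on the strip of a family that eventually satisfies a common bound
`StripBounded b A B`. -/
def StripConverges (b : ℝ) (l : Filter ι) (F : ι → ℂ → ℂ) (g : ℂ → ℂ) : Prop :=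
  (∃ A B, ∀ᶠ n in l, StripBounded b A B (F n)) ∧ ∀ ζ ∈ logStrip, Tendsto (F · ζ) l (𝓝 (g ζ))

theorem StripConverges.rescaledGammaConv (hF : StripConverges b l F g) {q : ι → ℝ}
    (hq : Tendsto q l atTop) :
    StripConverges b l (fun n => rescaledGammaConv (q n) (F n)) g := by
  obtain ⟨⟨A, B, hb⟩, hlim⟩ := hF
  have hb' := (hq.eventually (eventually_stripBounded_rescaledGammaConv b)).mp
    (hb.mono fun n hn h => h A B _ hn)
  refine ⟨⟨_, _, hb'⟩, fun ζ hζ => ?_⟩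
  have hsub : Tendsto (fun n => _root_.rescaledGammaConv (q n) (F n) ζ - F n ζ) l (𝓝 0) := by
    refine LocallyBoundedFamily.tendsto_of_frequently (f := fun _ => 0)
      (F := fun n ζ => _root_.rescaledGammaConv (q n) (F n) ζ - F n ζ) ?_ isOpen_logStrip
      convex_logStrip.isPreconnected ?_ (differentiableOn_const 0) (ofReal_mem_logStrip 0) ?_ hζ
    · exact (locallyBoundedFamily_of_stripBounded hb').sub (locallyBoundedFamily_of_stripBounded hb)
    · filter_upwards [hb, hb'] with n hn hn' using hn'.differentiableOn.sub hn.differentiableOn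
    · rw [Complex.ofReal_zero]
      refine frequently_mem_range_ofReal.mono ?_
      rintro _ ⟨x, rfl⟩
      exact tendsto_rescaledGammaConv_sub_ofReal hb hq x
  simpa using hsub.add (hlim ζ hζ)

end StripConverges

section Oscillator

/-- The energy `D² + ω² F²`, damped by `exp (|κ| / (ω x))`, is nonincreasing along
`F'' = (κ / x² - ω²) F`. -/
theorem antitoneOn_oscillator_energy {F D : ℝ → ℝ} {κ ω : ℝ} (hω : 0 < ω)
    (hF : ∀ x > 0, HasDerivAt F (D x) x)
    (hD : ∀ x > 0, HasDerivAt D ((κ / x ^ 2 - ω ^ 2) * F x) x) :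
    AntitoneOn (fun x => (D x ^ 2 + ω ^ 2 * F x ^ 2) * Real.exp (|κ| / ω * x⁻¹)) (Set.Ioi 0) := by
  have hderiv : ∀ x > 0, HasDerivAt
      (fun x => (D x ^ 2 + ω ^ 2 * F x ^ 2) * Real.exp (|κ| / ω * x⁻¹))
      ((κ * (2 * ω * (F x * D x)) - |κ| * (D x ^ 2 + ω ^ 2 * F x ^ 2)) / (ω * x ^ 2) *
        Real.exp (|κ| / ω * x⁻¹)) x := fun x hx => by
    refine ((((hD x hx).pow 2).add (((hF x hx).pow 2).const_mul (ω ^ 2))).mul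
      (((hasDerivAt_inv hx.ne').const_mul (|κ| / ω)).exp)).congr_deriv ?_
    simp only [Pi.add_apply, Pi.pow_apply]
    field_simp
    ring
  refine antitoneOn_of_hasDerivWithinAt_nonpos (convex_Ioi 0)
    (fun x hx => (hderiv x hx).continuousAt.continuousWithinAt)
    (fun x hx => (hderiv x (interior_subset hx)).hasDerivWithinAt) fun x hx => ?_
  have hx : 0 < x := interior_subset hx
  refine mul_nonpos_of_nonpos_of_nonneg (div_nonpos_of_nonpos_of_nonneg ?_ (by positivity))
    (Real.exp_pos _).le
  have hamgm : |2 * ω * (F x * D x)| ≤ D x ^ 2 + ω ^ 2 * F x ^ 2 := by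
    rw [abs_le]
    constructor <;> nlinarith [sq_nonneg (D x - ω * F x), sq_nonneg (D x + ω * F x)]
  have hκ : κ * (2 * ω * (F x * D x)) ≤ |κ| * |2 * ω * (F x * D x)| := by
    rw [← abs_mul]
    exact le_abs_self _
  linarith [mul_le_mul_of_nonneg_left hamgm (abs_nonneg κ)]

theorem exists_abs_le_of_oscillator {F D : ℝ → ℝ} {κ ω : ℝ} (hω : 0 < ω)
    (hF : ∀ x > 0, HasDerivAt F (D x) x)
    (hD : ∀ x > 0, HasDerivAt D ((κ / x ^ 2 - ω ^ 2) * F x) x) :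
    ∃ C, ∀ x ≥ 1, |F x| ≤ C := by
  set E := (D 1 ^ 2 + ω ^ 2 * F 1 ^ 2) * Real.exp (|κ| / ω * 1⁻¹)
  refine ⟨Real.sqrt E / ω, fun x hx => ?_⟩
  have hx₀ : 0 < x := by linarith
  have henergy : (D x ^ 2 + ω ^ 2 * F x ^ 2) * Real.exp (|κ| / ω * x⁻¹) ≤ E :=
    antitoneOn_oscillator_energy hω hF hD (Set.mem_Ioi.2 one_pos) hx₀ hx
  have hexp : 1 ≤ Real.exp (|κ| / ω * x⁻¹) := Real.one_le_exp (by positivity)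
  rw [le_div_iff₀ hω, ← abs_of_pos hω, ← abs_mul]
  refine Real.abs_le_sqrt (le_trans ?_ henergy)
  nlinarith [sq_nonneg (D x), sq_nonneg (ω * F x)]

end Oscillator

section BesselClifford

variable {𝕜 : Type*} [RCLike 𝕜]

/-- The Bessel–Clifford function `∑ (-q)^k / (k! (ν + k)!)`, equal to `q^{-ν/2} J_ν(2 √q)`. -/
def besselClifford (ν : ℕ) (q : 𝕜) : 𝕜 := ∑' k : ℕ, (-q) ^ k / (k.factorial * (ν + k).factorial)

theorem norm_besselClifford_term_le (ν k : ℕ) (q : 𝕜) :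
    ‖(-q) ^ k / (k.factorial * (ν + k).factorial : 𝕜)‖ ≤ ‖q‖ ^ k / k.factorial := by
  have hk : (1 : ℝ) ≤ (ν + k).factorial := by exact_mod_cast Nat.factorial_pos _
  rw [norm_div, norm_pow, norm_neg, norm_mul, RCLike.norm_natCast, RCLike.norm_natCast]
  gcongr
  exact le_mul_of_one_le_right (by positivity) hk

theorem hasSum_besselClifford (ν : ℕ) (q : 𝕜) :
    HasSum (fun k : ℕ => (-q) ^ k / (k.factorial * (ν + k).factorial : 𝕜)) (besselClifford ν q) :=
  (Summable.of_norm_bounded (Real.summable_pow_div_factorial ‖q‖)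
    fun k => norm_besselClifford_term_le ν k q).hasSum

theorem norm_besselClifford_le (ν : ℕ) (q : 𝕜) : ‖besselClifford ν q‖ ≤ Real.exp ‖q‖ := by
  rw [Real.exp_eq_exp_ℝ, NormedSpace.exp_eq_tsum_div]
  exact tsum_of_norm_bounded (Real.summable_pow_div_factorial ‖q‖).hasSum
    fun k => norm_besselClifford_term_le ν k q

theorem ofReal_besselClifford (ν : ℕ) (q : ℝ) :
    ((besselClifford ν q : ℝ) : ℂ) = besselClifford ν (q : ℂ) := by
  simp [besselClifford, Complex.ofReal_tsum]

theorem hasDerivAt_besselClifford (ν : ℕ) (q : 𝕜) :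
    HasDerivAt (besselClifford ν) (-besselClifford (ν + 1) q) q := by
  have hterm : ∀ (k : ℕ) (y : 𝕜), HasDerivAt
      (fun y : 𝕜 => (-y) ^ (k + 1) / ((k + 1).factorial * (ν + (k + 1)).factorial))
      (-((-y) ^ k / (k.factorial * (ν + 1 + k).factorial))) y := fun k y => by
    refine (((hasDerivAt_neg y).pow (k + 1)).div_const _).congr_deriv ?_
    rw [Nat.factorial_succ, add_right_comm ν 1 k, ← add_assoc ν k 1]
    have : (k : 𝕜) + 1 ≠ 0 := Nat.cast_add_one_ne_zero k
    push_cast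
    field_simp
  have hshift : ∀ y : 𝕜, besselClifford ν y = (ν.factorial : 𝕜)⁻¹ +
      ∑' k : ℕ, (-y) ^ (k + 1) / ((k + 1).factorial * (ν + (k + 1)).factorial) := fun y => by
    rw [besselClifford, (hasSum_besselClifford ν y).summable.tsum_eq_zero_add]
    simp
  have hbound : ∀ (k : ℕ), ∀ y ∈ Metric.ball (0 : 𝕜) (‖q‖ + 1),
      ‖-((-y) ^ k / (k.factorial * (ν + 1 + k).factorial : 𝕜))‖ ≤
        (‖q‖ + 1) ^ k / k.factorial := fun k y hy => by
    rw [norm_neg]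
    refine (norm_besselClifford_term_le (ν + 1) k y).trans ?_
    gcongr
    exact (mem_ball_zero_iff.1 hy).le
  have hsummable : Summable fun k : ℕ =>
      (-q) ^ (k + 1) / ((k + 1).factorial * (ν + (k + 1)).factorial : 𝕜) :=
    (summable_nat_add_iff (f := fun k : ℕ => (-q) ^ k / (k.factorial * (ν + k).factorial : 𝕜))
      1).2 (hasSum_besselClifford ν q).summable
  have hq : q ∈ Metric.ball (0 : 𝕜) (‖q‖ + 1) := mem_ball_zero_iff.2 (lt_add_one ‖q‖)
  have hder := (hasDerivAt_tsum_of_isPreconnected (Real.summable_pow_div_factorial (‖q‖ + 1))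
    Metric.isOpen_ball (convex_ball (0 : 𝕜) (‖q‖ + 1)).isPreconnected (fun k y _ => hterm k y)
    hbound hq hsummable hq).const_add (ν.factorial : 𝕜)⁻¹
  rwa [tsum_neg, ← funext hshift] at hder

theorem mul_besselClifford_add_two (ν : ℕ) (q : 𝕜) :
    q * besselClifford (ν + 2) q = (ν + 1) * besselClifford (ν + 1) q - besselClifford ν q := by
  have hcombine : HasSum (fun k : ℕ => -k * ((-q) ^ k / (k.factorial * (ν + 1 + k).factorial : 𝕜)))
      ((ν + 1) * besselClifford (ν + 1) q - besselClifford ν q) := by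
    refine (((hasSum_besselClifford (ν + 1) q).mul_left _).sub
      (hasSum_besselClifford ν q)).congr_fun fun k => ?_
    have : (ν + k + 1 : 𝕜) ≠ 0 := by exact_mod_cast Nat.succ_ne_zero (ν + k)
    rw [add_right_comm ν 1 k, Nat.factorial_succ]
    push_cast
    field_simp
    ring
  refine ((hasSum_besselClifford (ν + 2) q).mul_left q).unique ?_
  have hshift := (hasSum_nat_add_iff' 1).2 hcombine
  simp only [Finset.range_one, Finset.sum_singleton, Nat.cast_zero, neg_zero, zero_mul,
    sub_zero] at hshift
  refine hshift.congr_fun fun k => ?_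
  rw [Nat.factorial_succ, pow_succ, show ν + 1 + (k + 1) = ν + 2 + k by ring]
  have : (k + 1 : 𝕜) ≠ 0 := Nat.cast_add_one_ne_zero k
  push_cast
  field_simp

/-- `x^{ν+1/2} besselClifford ν (x²)` solves `F'' = (κ / x² - 4) F` with
`κ = (ν + 1/2) (ν - 1/2)`. -/
theorem exists_abs_rpow_mul_besselClifford_le (ν : ℕ) :
    ∃ C, ∀ x : ℝ, 1 ≤ x → |x ^ (ν + 1 / 2 : ℝ) * besselClifford ν (x ^ 2)| ≤ C := by
  set α : ℝ := ν + 1 / 2 with hα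
  have hsq : ∀ n (x : ℝ), HasDerivAt (fun x : ℝ => besselClifford n (x ^ 2))
      (-besselClifford (n + 1) (x ^ 2) * (2 * x)) x := fun n x => by
    refine ((hasDerivAt_besselClifford n (x ^ 2)).comp x (hasDerivAt_pow 2 x)).congr_deriv ?_
    simp
  have hpow : ∀ x : ℝ, 0 < x → HasDerivAt (fun x : ℝ => x ^ α) (α * (x ^ α / x)) x :=
    fun x hx => by
      simpa [Real.rpow_sub_one hx.ne'] using Real.hasDerivAt_rpow_const (p := α) (Or.inl hx.ne')
  refine exists_abs_le_of_oscillator (ω := 2) (κ := α * (α - 1)) two_pos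
    (F := fun x => x ^ α * besselClifford ν (x ^ 2))
    (D := fun x => x ^ α * (α * x⁻¹ * besselClifford ν (x ^ 2) -
      2 * x * besselClifford (ν + 1) (x ^ 2))) (fun x hx => ?_) (fun x hx => ?_)
  · refine ((hpow x hx).mul (hsq ν x)).congr_deriv ?_
    field_simp
    ring
  · refine ((hpow x hx).mul ((((hasDerivAt_inv hx.ne').const_mul α).mul (hsq ν x)).sub
      (((hasDerivAt_id x).const_mul 2).mul (hsq (ν + 1) x)))).congr_deriv ?_
    have hode : besselClifford (ν + 1 + 1) (x ^ 2) =
        ((ν + 1) * besselClifford (ν + 1) (x ^ 2) - besselClifford ν (x ^ 2)) / x ^ 2 := by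
      rw [← mul_besselClifford_add_two]
      field_simp
    simp only [id, Pi.mul_apply, Pi.sub_apply, hode]
    rw [hα]
    field_simp
    ring

theorem exists_abs_besselClifford_le (ν : ℕ) :
    ∃ C, ∀ q : ℝ, 1 ≤ q → |besselClifford ν q| ≤ C * q ^ (-(ν / 2 + 1 / 4) : ℝ) := by
  obtain ⟨C, hC⟩ := exists_abs_rpow_mul_besselClifford_le ν
  refine ⟨C, fun q hq => ?_⟩
  have hq₀ : 0 < q := by linarith
  have h := hC (Real.sqrt q) (Real.one_le_sqrt.2 hq)
  have hpos : 0 < q ^ (ν / 2 + 1 / 4 : ℝ) := Real.rpow_pos_of_pos hq₀ _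
  rw [Real.sq_sqrt hq₀.le, Real.sqrt_eq_rpow, ← Real.rpow_mul hq₀.le,
    show (1 / 2 * (ν + 1 / 2) : ℝ) = ν / 2 + 1 / 4 by ring, abs_mul, abs_of_pos hpos,
    mul_comm] at h
  rwa [Real.rpow_neg hq₀.le, ← div_eq_mul_inv, le_div_iff₀ hpos]

end BesselClifford

section GZero

variable (ν : ℕ)

theorem g0C_eq (w : ℂ) : g0C ν w = w ^ ν * besselClifford ν w := by
  rw [g0C, besselClifford, ← tsum_mul_left]
  refine tsum_congr fun k => ?_
  rw [neg_pow w, ← Nat.cast_add, Real.Gamma_nat_eq_factorial]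
  push_cast
  ring

theorem ofReal_g0R (q : ℝ) : (g0R ν q : ℂ) = g0C ν q := by
  rw [g0R, g0C, Complex.ofReal_tsum]
  push_cast
  rfl

theorem differentiable_g0C : Differentiable ℂ (g0C ν) := by
  rw [funext (g0C_eq ν)]
  exact (differentiable_pow ν).mul fun w => (hasDerivAt_besselClifford ν w).differentiableAt

theorem norm_g0C_le (w : ℂ) : ‖g0C ν w‖ ≤ ‖w‖ ^ ν * Real.exp ‖w‖ := by
  rw [g0C_eq, norm_mul, norm_pow]
  gcongr
  exact norm_besselClifford_le ν w

theorem norm_g0C_exp_le (ζ : ℂ) :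
    ‖g0C ν (Complex.exp ζ)‖ ≤ Real.exp (ν * ζ.re) * Real.exp (Real.exp ζ.re) := by
  simpa [Complex.norm_exp, Real.exp_nat_mul] using norm_g0C_le ν (Complex.exp ζ)

variable {ν}

theorem stripBounded_g0C_exp {b : ℝ} (hb : ν / 2 - 1 / 4 ≤ b) (hbν : b ≤ ν) :
    ∃ A B, StripBounded b A B fun ζ => g0C ν (Complex.exp ζ) := by
  obtain ⟨C, hC⟩ := exists_abs_besselClifford_le ν
  have he := Real.exp_pos 1
  refine ⟨|C| + Real.exp 1, 1 + (ν - b), by linarith,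
    ((differentiable_g0C ν).comp Complex.differentiable_exp).differentiableOn, fun x => ?_,
    fun ζ _ => ?_⟩
  · rcases le_total x 0 with hx | hx
    · have hexp : Real.exp (Real.exp x) ≤ |C| + Real.exp 1 :=
        (Real.exp_le_exp.2 (Real.exp_le_one_iff.2 hx)).trans
          (le_add_of_nonneg_left (abs_nonneg C))
      refine (norm_g0C_exp_le ν x).trans ?_
      rw [Complex.ofReal_re, mul_comm]
      exact mul_le_mul hexp (Real.exp_le_exp.2 (by nlinarith)) (by positivity) (by positivity)
    · have hdecay := hC (Real.exp x) (Real.one_le_exp hx)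
      rw [← Real.exp_mul] at hdecay
      rw [← Complex.ofReal_exp, g0C_eq, ← ofReal_besselClifford, norm_mul, norm_pow,
        Complex.norm_real, Complex.norm_real, Real.norm_eq_abs, Real.norm_eq_abs, Real.abs_exp]
      calc Real.exp x ^ ν * |besselClifford ν (Real.exp x)|
          ≤ Real.exp (ν * x) * (C * Real.exp (x * -(ν / 2 + 1 / 4))) := by
            rw [← Real.exp_nat_mul]
            gcongr
        _ = C * Real.exp ((ν / 2 - 1 / 4) * x) := by
            rw [mul_left_comm, ← Real.exp_add]
            ring_nf
        _ ≤ (|C| + Real.exp 1) * Real.exp (b * x) := by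
            gcongr
            linarith [le_abs_self C]
  · have hre : ζ.re ≤ Real.exp ζ.re := by linarith [Real.add_one_le_exp ζ.re]
    have hone : 1 ≤ |C| + Real.exp 1 := by linarith [Real.add_one_le_exp (1 : ℝ), abs_nonneg C]
    refine (norm_g0C_exp_le ν ζ).trans ?_
    rw [mul_assoc, ← Real.exp_add, ← Real.exp_add]
    refine le_trans (Real.exp_le_exp.2 ?_) (le_mul_of_one_le_left (Real.exp_pos _).le hone)
    nlinarith

end GZero

section MeijerIntegrand

variable {p : ℕ} (ν₀ : ℕ) (ν : Fin p → ℝ)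

/-- The integrand of the multiple integral `G2R`, with real parameters `ν₁, …, ν_p`. -/
def meijerIntegrand (z : ℝ) (t : Fin p → ℝ) : ℝ :=
  (∏ l, t l ^ (ν l - 1) * Real.exp (-t l)) * g0R ν₀ (z / ∏ l, t l)

theorem measurable_g0R : Measurable (g0R ν₀) := by
  have h : Measurable fun q : ℝ => (g0C ν₀ q).re :=
    (Complex.continuous_re.comp
      ((differentiable_g0C ν₀).continuous.comp Complex.continuous_ofReal)).measurable
  simpa only [← ofReal_g0R, Complex.ofReal_re] using h

theorem measurable_meijerIntegrand :
    Measurable fun q : ℝ × (Fin p → ℝ) => meijerIntegrand ν₀ ν q.1 q.2 := by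
  have := measurable_g0R ν₀
  unfold meijerIntegrand
  fun_prop

theorem meijerIntegrand_insertNth (ν : Fin (p + 1) → ℝ) (i : Fin (p + 1)) (z s : ℝ)
    (t : Fin p → ℝ) : meijerIntegrand ν₀ ν z (i.insertNth s t) =
      s ^ (ν i - 1) * Real.exp (-s) * meijerIntegrand ν₀ (i.removeNth ν) (z / s) t := by
  simp only [meijerIntegrand, Fin.prod_univ_succAbove _ i, Fin.insertNth_apply_same,
    Fin.insertNth_apply_succAbove, Fin.removeNth, div_div, mul_assoc]

theorem isOpen_posOrth : IsOpen (posOrth p) := by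
  simp only [posOrth, Set.ofPred_forall]
  exact isOpen_iInter_of_finite fun i => isOpen_lt continuous_const (continuous_apply i)

/-- Lebesgue measure on the open orthant, with the `i`-th coordinate split off. -/
abbrev splitMeasure (p : ℕ) : Measure (ℝ × (Fin p → ℝ)) :=
  (volume.restrict (Set.Ioi 0)).prod (volume.restrict (posOrth p))

theorem measurePreserving_insertNth_posOrth (i : Fin (p + 1)) :
    MeasurePreserving (MeasurableEquiv.piFinSuccAbove (fun _ => ℝ) i).symm (splitMeasure p)
      (volume.restrict (posOrth (p + 1))) := by
  have hpre : (MeasurableEquiv.piFinSuccAbove (fun _ => ℝ) i).symm ⁻¹' posOrth (p + 1) =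
      Set.Ioi 0 ×ˢ posOrth p := by
    ext q
    simp [posOrth, Fin.forall_iff_succAbove i]
  rw [splitMeasure, Measure.prod_restrict, ← hpre]
  exact (volume_preserving_piFinSuccAbove (fun _ => ℝ) i).symm.restrict_preimage_emb
    (MeasurableEquiv.measurableEmbedding _) _

variable {ν₀}

theorem integrable_splitMeasure_iff {ν : Fin (p + 1) → ℝ} (i : Fin (p + 1)) {z : ℝ} :
    Integrable (fun q : ℝ × (Fin p → ℝ) => q.1 ^ (ν i - 1) * Real.exp (-q.1) *
      meijerIntegrand ν₀ (i.removeNth ν) (z / q.1) q.2) (splitMeasure p) ↔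
      IntegrableOn (meijerIntegrand ν₀ ν z) (posOrth (p + 1)) := by
  simp only [← meijerIntegrand_insertNth]
  exact (measurePreserving_insertNth_posOrth i).integrable_comp_emb
    (MeasurableEquiv.measurableEmbedding _) (g := meijerIntegrand ν₀ ν z)

theorem setIntegral_meijerIntegrand {ν : Fin (p + 1) → ℝ} (i : Fin (p + 1)) {z : ℝ}
    (hint : IntegrableOn (meijerIntegrand ν₀ ν z) (posOrth (p + 1))) :
    ∫ t in posOrth (p + 1), meijerIntegrand ν₀ ν z t =
      ∫ s in Set.Ioi 0, s ^ (ν i - 1) * Real.exp (-s) *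
        ∫ t in posOrth p, meijerIntegrand ν₀ (i.removeNth ν) (z / s) t := by
  have hint' := (integrable_splitMeasure_iff i).2 hint
  rw [← (measurePreserving_insertNth_posOrth i).integral_comp']
  simp only [← integral_const_mul]
  rw [← integral_prod _ hint']
  simp only [← meijerIntegrand_insertNth]
  rfl

variable {b : ℝ}

theorem lintegral_meijerIntegrand_succ_le {ν : Fin (p + 1) → ℝ} {i : Fin (p + 1)} (hb : b < ν i)
    {C : ℝ} (hC : 0 ≤ C)
    (h : ∀ z : ℝ, 0 < z → ∫⁻ t in posOrth p, ‖meijerIntegrand ν₀ (i.removeNth ν) z t‖ₑ ≤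
      ENNReal.ofReal (C * z ^ b)) {z : ℝ} (hz : 0 < z) :
    ∫⁻ t in posOrth (p + 1), ‖meijerIntegrand ν₀ ν z t‖ₑ ≤
      ENNReal.ofReal (C * Real.Gamma (ν i - b) * z ^ b) := by
  have hmeas : Measurable fun q : ℝ × (Fin p → ℝ) => q.1 ^ (ν i - 1) * Real.exp (-q.1) *
      meijerIntegrand ν₀ (i.removeNth ν) (z / q.1) q.2 :=
    (by fun_prop : Measurable fun q : ℝ × (Fin p → ℝ) => q.1 ^ (ν i - 1) * Real.exp (-q.1)).mul
      ((measurable_meijerIntegrand ν₀ _).comp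
        (by fun_prop : Measurable fun q : ℝ × (Fin p → ℝ) => (z / q.1, q.2)))
  have hGamma := Real.GammaIntegral_convergent (sub_pos.2 hb)
  calc ∫⁻ t in posOrth (p + 1), ‖meijerIntegrand ν₀ ν z t‖ₑ
      = ∫⁻ q, ‖q.1 ^ (ν i - 1) * Real.exp (-q.1) *
          meijerIntegrand ν₀ (i.removeNth ν) (z / q.1) q.2‖ₑ ∂splitMeasure p := by
        rw [← (measurePreserving_insertNth_posOrth i).lintegral_comp_emb
          (MeasurableEquiv.measurableEmbedding _)]
        simp only [← meijerIntegrand_insertNth]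
        rfl
    _ = ∫⁻ s in Set.Ioi (0 : ℝ), ‖s ^ (ν i - 1) * Real.exp (-s)‖ₑ *
          ∫⁻ t in posOrth p, ‖meijerIntegrand ν₀ (i.removeNth ν) (z / s) t‖ₑ := by
        rw [lintegral_prod _ hmeas.enorm.aemeasurable]
        simp only [enorm_mul _ (meijerIntegrand _ _ _ _)]
        exact lintegral_congr fun s => lintegral_const_mul' _ _ enorm_ne_top
    _ ≤ ∫⁻ s in Set.Ioi (0 : ℝ),
          ENNReal.ofReal (C * z ^ b * (Real.exp (-s) * s ^ (ν i - b - 1))) := by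
        refine setLIntegral_mono' measurableSet_Ioi fun s hs => ?_
        have hs₀ : (0 : ℝ) < s := hs
        refine (mul_le_mul_right (h (z / s) (div_pos hz hs₀)) _).trans_eq ?_
        rw [Real.enorm_of_nonneg (by positivity), ← ENNReal.ofReal_mul (by positivity),
          Real.div_rpow hz.le hs₀.le, sub_right_comm, Real.rpow_sub hs₀ _ b]
        ring_nf
    _ = ENNReal.ofReal (C * Real.Gamma (ν i - b) * z ^ b) := by
        rw [← ofReal_integral_eq_lintegral_ofReal (hGamma.const_mul _), integral_const_mul,
          ← Real.Gamma_eq_integral (sub_pos.2 hb), mul_right_comm]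
        refine (ae_restrict_mem measurableSet_Ioi).mono fun s hs => ?_
        have hs₀ : (0 : ℝ) < s := hs
        positivity

end MeijerIntegrand

section MeijerLog

/-- The holomorphic continuation of the function `G2R` with real parameters `ν₁, …, ν_p`, in the
logarithmic variable `ζ = log z`: each parameter contributes one convolution with a gamma kernel. -/
def meijerLog (ν₀ : ℕ) : {p : ℕ} → (Fin p → ℝ) → ℂ → ℂ
  | 0, _ => fun ζ => g0C ν₀ (Complex.exp ζ)
  | p + 1, ν => gammaConv (ν (Fin.last p)) (meijerLog ν₀ (Fin.init ν))

variable {ν₀ p : ℕ} {b : ℝ} {ν : Fin p → ℝ}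

theorem stripBounded_meijerLog (hb : ν₀ / 2 - 1 / 4 ≤ b) (hbν₀ : b ≤ ν₀) (hbν : ∀ l, b < ν l) :
    ∃ A B, StripBounded b A B (meijerLog ν₀ ν) := by
  induction p with
  | zero => exact stripBounded_g0C_exp hb hbν₀
  | succ p ih =>
    obtain ⟨A, B, hf⟩ := ih fun l => hbν l.castSucc
    exact ⟨_, _, hf.gammaConv (hbν (Fin.last p))⟩

theorem exists_lintegral_meijerIntegrand_le (hb : ν₀ / 2 - 1 / 4 ≤ b) (hbν₀ : b ≤ ν₀)
    (hbν : ∀ l, b < ν l) : ∃ C, 0 ≤ C ∧ ∀ z : ℝ, 0 < z →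
      ∫⁻ t in posOrth p, ‖meijerIntegrand ν₀ ν z t‖ₑ ≤ ENNReal.ofReal (C * z ^ b) := by
  induction p with
  | zero =>
    obtain ⟨A, B, hf⟩ := stripBounded_g0C_exp hb hbν₀
    refine ⟨A, hf.nonneg, fun z hz => ?_⟩
    have hbound := hf.norm_ofReal_le (Real.log z)
    rw [← Complex.ofReal_exp, Real.exp_log hz, ← ofReal_g0R, Complex.norm_real, mul_comm b,
      ← Real.rpow_def_of_pos hz] at hbound
    have huniv : posOrth 0 = Set.univ := Set.eq_univ_of_forall fun _ i => i.elim0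
    simpa [huniv, meijerIntegrand, volume_pi, Measure.pi_of_empty, ← ofReal_norm] using
      ENNReal.ofReal_le_ofReal hbound
  | succ p ih =>
    obtain ⟨C, hC, h⟩ := ih (ν := Fin.init ν) fun l => hbν l.castSucc
    rw [← Fin.removeNth_last] at h
    have hlast := hbν (Fin.last p)
    exact ⟨_, mul_nonneg hC (Real.Gamma_nonneg_of_nonneg (sub_pos.2 hlast).le),
      fun z => lintegral_meijerIntegrand_succ_le hlast hC h⟩

theorem integrableOn_meijerIntegrand (hb : ν₀ / 2 - 1 / 4 ≤ b) (hbν₀ : b ≤ ν₀)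
    (hbν : ∀ l, b < ν l) {z : ℝ} (hz : 0 < z) :
    IntegrableOn (meijerIntegrand ν₀ ν z) (posOrth p) := by
  obtain ⟨C, -, h⟩ := exists_lintegral_meijerIntegrand_le hb hbν₀ hbν
  exact ⟨((measurable_meijerIntegrand ν₀ ν).comp measurable_prodMk_left).aestronglyMeasurable,
    (h z hz).trans_lt ENNReal.ofReal_lt_top⟩

theorem meijerLog_ofReal (hb : ν₀ / 2 - 1 / 4 ≤ b) (hbν₀ : b ≤ ν₀) (hbν : ∀ l, b < ν l) (x : ℝ) :
    meijerLog ν₀ ν x = ∫ t in posOrth p, meijerIntegrand ν₀ ν (Real.exp x) t := by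
  induction p generalizing x with
  | zero =>
    have huniv : posOrth 0 = Set.univ := Set.eq_univ_of_forall fun _ i => i.elim0
    simp [huniv, meijerLog, meijerIntegrand, volume_pi, ofReal_g0R,
      measureReal_def]
  | succ p ih =>
    have hinit : ∀ l, b < Fin.init ν l := fun l => hbν l.castSucc
    obtain ⟨A, B, hf⟩ := stripBounded_meijerLog hb hbν₀ hinit
    rw [meijerLog, hf.gammaConv_ofReal (hbν _), setIntegral_meijerIntegrand (Fin.last p)
      (integrableOn_meijerIntegrand hb hbν₀ hbν (Real.exp_pos x)), ← integral_exp_smul_comp_exp,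
      ← integral_complex_ofReal]
    refine integral_congr_ae (Eventually.of_forall fun u => ?_)
    simp only [ih hinit, Fin.removeNth_last, Real.exp_sub, smul_eq_mul]
    rw [Complex.ofReal_mul, Complex.ofReal_mul, ← mul_assoc, ← Complex.ofReal_mul]
    congr 1
    rw [mul_comm (_ ^ _), ← smul_eq_mul, ← exp_mul_sub_exp_eq_smul, gammaKernel]
    push_cast
    rfl

end MeijerLog

section SlitPlane

theorem exp_mem_slitPlane {ζ : ℂ} (hζ : ζ ∈ logStrip) : Complex.exp ζ ∈ Complex.slitPlane := by
  have h : |ζ.im| < Real.pi := hζ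
  rw [abs_lt] at h
  rw [Complex.mem_slitPlane_iff_arg, Complex.arg_exp,
    (toIocMod_eq_self Real.two_pi_pos).2 ⟨h.1, by linarith [h.2, Real.pi_pos]⟩]
  exact ⟨h.2.ne, Complex.exp_ne_zero ζ⟩

theorem log_mem_logStrip {z : ℂ} (hz : z ∈ Complex.slitPlane) : Complex.log z ∈ logStrip := by
  rw [logStrip, Set.mem_ofPred_eq, Complex.log_im, abs_lt]
  exact ⟨Complex.neg_pi_lt_arg z,
    (Complex.arg_le_pi z).lt_of_ne (Complex.mem_slitPlane_iff_arg.1 hz).1⟩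

variable {G F : ℂ → ℂ}

theorem comp_exp_eqOn_logStrip (hG : DifferentiableOn ℂ G Complex.slitPlane)
    (hF : DifferentiableOn ℂ F logStrip) (h : ∀ x : ℝ, G (Real.exp x : ℝ) = F x) :
    Set.EqOn (fun ζ => G (Complex.exp ζ)) F logStrip :=
  eqOn_logStrip_of_eq_ofReal
    (hG.comp Complex.differentiable_exp.differentiableOn fun _ => exp_mem_slitPlane) hF
    fun x => by simpa using h x

theorem apply_eq_log (hGF : Set.EqOn (fun ζ => G (Complex.exp ζ)) F logStrip) {z : ℂ}
    (hz : z ∈ Complex.slitPlane) : G z = F (Complex.log z) := by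
  simpa only [Complex.exp_log (Complex.slitPlane_ne_zero hz)] using hGF (log_mem_logStrip hz)

end SlitPlane

section MeijerConfluence

variable {p b A B : ℝ} {f : ℂ → ℂ}

theorem StripBounded.comp_add_div (hf : StripBounded b A B f) (a : ℝ) (c : ℂ) :
    StripBounded b (A * Real.exp (b * a) / ‖c‖) (B * Real.exp a) fun ζ => f (ζ + a) / c where
  nonneg_growth := mul_nonneg hf.nonneg_growth (Real.exp_pos a).le
  differentiableOn := (hf.differentiableOn.comp (by fun_prop)
    fun _ hζ => add_ofReal_mem_logStrip hζ a).div_const c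
  norm_ofReal_le x := by
    have h := hf.norm_ofReal_le (x + a)
    rw [mul_add, Real.exp_add] at h
    rw [norm_div, ← Complex.ofReal_add, div_mul_eq_mul_div]
    gcongr
    linarith
  norm_le ζ hζ := by
    have h := hf.norm_le _ (add_ofReal_mem_logStrip hζ a)
    rw [Complex.add_re, Complex.ofReal_re, mul_add, Real.exp_add, Real.exp_add,
      mul_comm (Real.exp ζ.re)] at h
    rw [norm_div, div_mul_eq_mul_div, div_mul_eq_mul_div]
    gcongr
    exact h.trans_eq (by ring_nf)

theorem StripBounded.gammaConv_comp_add_div (hf : StripBounded b A B f) (hp : b < p) (a : ℝ)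
    (c : ℂ) : Set.EqOn (_root_.gammaConv p fun ζ => f (ζ + a) / c)
      (fun ζ => _root_.gammaConv p f (ζ + a) / c) logStrip := by
  have hf' := hf.comp_add_div a c
  refine eqOn_logStrip_of_eq_ofReal (hf'.gammaConv hp).differentiableOn
    ((hf.gammaConv hp).comp_add_div a c).differentiableOn fun x => ?_
  rw [hf'.gammaConv_ofReal hp, ← Complex.ofReal_add, hf.gammaConv_ofReal hp, ← integral_div]
  refine integral_congr_ae (Eventually.of_forall fun u => ?_)
  simp only [← Complex.ofReal_add, sub_add_eq_add_sub, mul_div_assoc]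

theorem StripBounded.congr (hf : StripBounded b A B f) {g : ℂ → ℂ} (h : Set.EqOn f g logStrip) :
    StripBounded b A B g where
  nonneg_growth := hf.nonneg_growth
  differentiableOn := hf.differentiableOn.congr h.symm
  norm_ofReal_le x := h (ofReal_mem_logStrip x) ▸ hf.norm_ofReal_le x
  norm_le ζ hζ := h hζ ▸ hf.norm_le ζ hζ

variable {ι : Type*} {l : Filter ι} {F F' : ι → ℂ → ℂ} {g : ℂ → ℂ}

theorem StripConverges.congr (hF : StripConverges b l F g)
    (h : ∀ᶠ n in l, Set.EqOn (F n) (F' n) logStrip) : StripConverges b l F' g := by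
  obtain ⟨⟨A, B, hbound⟩, hlim⟩ := hF
  exact ⟨⟨A, B, (hbound.and h).mono fun n hn => hn.1.congr hn.2⟩,
    fun ζ hζ => (hlim ζ hζ).congr' (h.mono fun n hn => hn hζ)⟩

/-- The function `meijerLog` after the rescaling under which the parameters past the `m`-th are sent
to infinity: the argument `z = exp ζ` is multiplied by the product of these parameters. -/
def rescaledMeijerLog (ν₀ m : ℕ) {K : ℕ} (ν : Fin (m + K) → ℝ) (ζ : ℂ) : ℂ :=
  meijerLog ν₀ ν (ζ + Real.log (∏ j, ν (Fin.natAdd m j))) /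
    ((∏ j, Real.Gamma (ν (Fin.natAdd m j)) : ℝ) : ℂ)

variable {ν₀ m K : ℕ}

theorem rescaledMeijerLog_succ (hb : ν₀ / 2 - 1 / 4 ≤ b) (hbν₀ : b ≤ ν₀)
    {ν : Fin (m + K + 1) → ℝ} (hbν : ∀ i, b < ν i) (hpos : ∀ j : Fin (K + 1), 0 < ν (j.natAdd m)) :
    Set.EqOn (rescaledGammaConv (ν (Fin.last _)) (rescaledMeijerLog ν₀ m (Fin.init ν)))
      (rescaledMeijerLog ν₀ m (K := K + 1) ν) logStrip := by
  intro ζ hζ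
  obtain ⟨A, B, hf⟩ := stripBounded_meijerLog (ν := Fin.init ν) hb hbν₀ fun i => hbν i.castSucc
  have hlog : Real.log (∏ j : Fin (K + 1), ν (j.natAdd m)) =
      Real.log (ν (Fin.last _)) + Real.log (∏ j : Fin K, ν (j.natAdd m).castSucc) := by
    rw [Fin.prod_univ_castSucc, add_comm (Real.log _)]
    exact Real.log_mul (Finset.prod_pos fun j _ => hpos j.castSucc).ne' (hpos (Fin.last K)).ne'
  have hΓ : ∏ j : Fin (K + 1), Real.Gamma (ν (j.natAdd m)) =
      (∏ j : Fin K, Real.Gamma (ν (j.natAdd m).castSucc)) * Real.Gamma (ν (Fin.last _)) :=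
    Fin.prod_univ_castSucc _
  rw [rescaledGammaConv, rescaledMeijerLog, hlog, hΓ]
  refine (congrArg (· / _) (hf.gammaConv_comp_add_div (hbν (Fin.last _)) _ _
    (add_ofReal_mem_logStrip hζ _))).trans ?_
  rw [div_div, add_assoc ζ, ← Complex.ofReal_add, ← Complex.ofReal_mul]
  rfl

theorem stripConverges_rescaledMeijerLog (hb : ν₀ / 2 - 1 / 4 ≤ b) (hbν₀ : b ≤ ν₀)
    {νs : Fin m → ℝ} (hbν : ∀ i, b < νs i) {ν : ι → Fin (m + K) → ℝ}
    (hfix : ∀ n i, ν n (Fin.castAdd K i) = νs i)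
    (htend : ∀ j : Fin K, Tendsto (fun n => ν n (j.natAdd m)) l atTop) :
    StripConverges b l (fun n => rescaledMeijerLog ν₀ m (ν n)) (meijerLog ν₀ νs) := by
  induction K with
  | zero =>
    obtain ⟨A, B, hf⟩ := stripBounded_meijerLog hb hbν₀ hbν
    have heq : ∀ n, rescaledMeijerLog ν₀ m (ν n) = meijerLog ν₀ νs := fun n => by
      ext ζ
      simp [rescaledMeijerLog, show ν n = νs from funext (hfix n)]
    simp only [heq]
    exact ⟨⟨A, B, Eventually.of_forall fun _ => hf⟩, fun _ _ => tendsto_const_nhds⟩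
  | succ K ih =>
    refine ((ih (ν := fun n => Fin.init (ν n)) hfix fun j => htend j.castSucc).rescaledGammaConv
      (htend (Fin.last K))).congr ?_
    have hlarge : ∀ᶠ n in l, ∀ j : Fin (K + 1), max b 0 < ν n (j.natAdd m) :=
      eventually_all.2 fun j => (htend j).eventually_gt_atTop _
    filter_upwards [hlarge] with n hn
    refine rescaledMeijerLog_succ hb hbν₀ (fun i => ?_) fun j => (le_max_right _ _).trans_lt (hn j)
    induction i using Fin.addCases (m := m) (n := K + 1) with
    | left i => exact (hbν i).trans_eq (hfix n i).symm
    | right j => exact (le_max_left _ _).trans_lt (hn j)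

end MeijerConfluence

section MeijerG1

/-- The ratio `ν ^ k ν! / (ν + k)!`, by which the `k`-th term of `G1` changes when the parameter `ν`
is scaled out and removed. -/
def confluenceFactor (ν k : ℕ) : ℂ := ν ^ k * ν.factorial / (ν + k).factorial

theorem norm_confluenceFactor_le (ν k : ℕ) : ‖confluenceFactor ν k‖ ≤ 1 := by
  have h : ν ^ k * ν.factorial ≤ (ν + k).factorial :=
    calc ν ^ k * ν.factorial ≤ ν.factorial * (ν + 1) ^ k := by
          rw [mul_comm]; gcongr; exact ν.le_succ
      _ ≤ (ν + k).factorial := Nat.factorial_mul_pow_le_factorial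
  rw [confluenceFactor, norm_div, norm_mul, norm_pow, Complex.norm_natCast, Complex.norm_natCast,
    Complex.norm_natCast, div_le_one (by positivity)]
  exact_mod_cast h

theorem tendsto_confluenceFactor (k : ℕ) :
    Tendsto (fun ν => confluenceFactor ν k) atTop (𝓝 1) := by
  induction k with
  | zero => simp [confluenceFactor, Nat.factorial_ne_zero]
  | succ k ih =>
    have h := ih.mul (tendsto_natCast_div_add_atTop (𝕜 := ℂ) (k + 1))
    rw [one_mul] at h
    refine h.congr fun ν => ?_
    rw [confluenceFactor, confluenceFactor, ← add_assoc ν, Nat.factorial_succ, pow_succ]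
    push_cast
    rw [add_assoc (ν : ℂ), mul_comm (ν + (k + 1) : ℂ), div_mul_div_comm, mul_right_comm]

variable (ν₀ : ℕ) {r : ℕ} (ν : Fin r → ℕ)

theorem ofReal_Gamma_natCast_add_one_add (n k : ℕ) :
    (Real.Gamma (n + 1 + k) : ℂ) = (n + k).factorial := by
  rw [add_right_comm, ← Nat.cast_add, Real.Gamma_nat_eq_factorial, Complex.ofReal_natCast]

/-- The `k`-th term of the series `G1`. -/
def G1Term (k : ℕ) (z : ℂ) : ℂ :=
  (-z) ^ k / (k.factorial * (ν₀ + k).factorial * ∏ l, ((ν l + k).factorial : ℂ))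

theorem G1_eq_tsum (z : ℂ) : G1 r ν₀ ν z = ∑' k, G1Term ν₀ ν k z := by
  simp only [G1, G1Term, ofReal_Gamma_natCast_add_one_add]

theorem norm_G1Term_le (k : ℕ) (z : ℂ) : ‖G1Term ν₀ ν k z‖ ≤ ‖z‖ ^ k / k.factorial := by
  have h : 1 ≤ (ν₀ + k).factorial * ∏ l, (ν l + k).factorial :=
    Nat.mul_pos (Nat.factorial_pos _) (Finset.prod_pos fun l _ => Nat.factorial_pos _)
  have h' : (1 : ℝ) ≤ ‖((ν₀ + k).factorial * ∏ l, ((ν l + k).factorial : ℂ))‖ := by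
    rw [← Nat.cast_prod, ← Nat.cast_mul, Complex.norm_natCast]
    exact_mod_cast h
  rw [G1Term, mul_assoc, norm_div, norm_mul, norm_pow, norm_neg, Complex.norm_natCast]
  gcongr
  exact le_mul_of_one_le_right (by positivity) h'

theorem measurable_G1 : Measurable (G1 r ν₀ ν) := by
  have hsum (z : ℂ) : HasSum _ (G1 r ν₀ ν z) := G1_eq_tsum ν₀ ν z ▸
    (Summable.of_norm_bounded (Real.summable_pow_div_factorial ‖z‖)
      fun k => norm_G1Term_le ν₀ ν k z).hasSum
  exact measurable_of_tendsto_metrizable (fun N => by unfold G1Term; fun_prop)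
    (tendsto_pi_nhds.2 fun z => (hsum z).tendsto_sum_nat)

variable {m K : ℕ}

/-- The function `G1` after the rescaling under which the parameters past the `m`-th are sent to
infinity: the argument is multiplied by the product of these parameters. -/
def rescaledG1 (m : ℕ) {K : ℕ} (ν : Fin (m + K) → ℕ) (z : ℂ) : ℂ :=
  (∏ j : Fin K, ((ν (j.natAdd m)).factorial : ℂ)) *
    G1 (m + K) ν₀ ν ((∏ j : Fin K, (ν (j.natAdd m) : ℂ)) * z)

theorem rescaledG1_eq_tsum (ν : Fin (m + K) → ℕ) (z : ℂ) :
    rescaledG1 ν₀ m ν z = ∑' k, G1Term ν₀ (fun i => ν (Fin.castAdd K i)) k z *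
      ∏ j : Fin K, confluenceFactor (ν (j.natAdd m)) k := by
  rw [rescaledG1, G1_eq_tsum, ← tsum_mul_left]
  refine tsum_congr fun k => ?_
  simp only [G1Term, confluenceFactor]
  rw [Fin.prod_univ_add, Finset.prod_div_distrib, Finset.prod_mul_distrib, Finset.prod_pow,
    ← mul_neg, mul_pow]
  simp only [div_eq_mul_inv, mul_inv]
  ring

theorem norm_rescaledG1_term_le (ν : Fin (m + K) → ℕ) (z : ℂ) (k : ℕ) :
    ‖G1Term ν₀ (fun i => ν (Fin.castAdd K i)) k z *
      ∏ j : Fin K, confluenceFactor (ν (j.natAdd m)) k‖ ≤ ‖z‖ ^ k / k.factorial := by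
  rw [norm_mul, norm_prod]
  exact (mul_le_of_le_one_right (norm_nonneg _) (Finset.prod_le_one (fun _ _ => norm_nonneg _)
    fun j _ => norm_confluenceFactor_le _ k)).trans (norm_G1Term_le ν₀ _ k z)

theorem norm_rescaledG1_le (ν : Fin (m + K) → ℕ) (z : ℂ) :
    ‖rescaledG1 ν₀ m ν z‖ ≤ Real.exp ‖z‖ := by
  rw [rescaledG1_eq_tsum, Real.exp_eq_exp_ℝ]
  exact tsum_of_norm_bounded (NormedSpace.expSeries_div_hasSum_exp ‖z‖)
    (norm_rescaledG1_term_le ν₀ ν z)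

theorem measurable_rescaledG1 (ν : Fin (m + K) → ℕ) : Measurable (rescaledG1 ν₀ m ν) :=
  ((measurable_G1 ν₀ ν).comp (measurable_const_mul _)).const_mul _

theorem tendsto_rescaledG1 {ι : Type*} {l : Filter ι} {νs : Fin m → ℕ} {ν : ι → Fin (m + K) → ℕ}
    (hfix : ∀ n i, ν n (Fin.castAdd K i) = νs i)
    (htend : ∀ j : Fin K, Tendsto (fun n => ν n (j.natAdd m)) l atTop) (z : ℂ) :
    Tendsto (fun n => rescaledG1 ν₀ m (ν n) z) l (𝓝 (G1 m ν₀ νs z)) := by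
  simp only [rescaledG1_eq_tsum, G1_eq_tsum]
  refine tendsto_tsum_of_dominated_convergence (Real.summable_pow_div_factorial ‖z‖) (fun k => ?_)
    (Eventually.of_forall fun n => norm_rescaledG1_term_le ν₀ (ν n) z)
  have hprod := tendsto_finsetProd Finset.univ fun j _ =>
    (tendsto_confluenceFactor k).comp (htend j)
  rw [Finset.prod_const_one] at hprod
  simpa only [hfix, mul_one, Function.comp_def] using hprod.const_mul _

end MeijerG1

section GaussianIntegrals

theorem integrableOn_rpow_mul_exp_sub_sq {s : ℝ} (hs : -1 < s) (k : ℝ) :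
    IntegrableOn (fun u : ℝ => u ^ s * Real.exp (k * u - u ^ 2 / 2)) (Set.Ioi 0) := by
  refine ((integrableOn_rpow_mul_exp_neg_mul_sq (b := 1 / 4) (by norm_num) hs).const_mul
    (Real.exp (k ^ 2))).mono' (by fun_prop)
    (ae_restrict_of_forall_mem measurableSet_Ioi fun u hu => ?_)
  have hu' : 0 ≤ u := le_of_lt hu
  rw [Real.norm_of_nonneg (by positivity), mul_left_comm, ← Real.exp_add]
  gcongr
  nlinarith [sq_nonneg (u / 2 - k)]

theorem integrable_abs_rpow_mul_exp_sub_sq {s : ℝ} (hs : -1 < s) (k : ℝ) :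
    Integrable fun t : ℝ => |t| ^ s * Real.exp (k * |t| - t ^ 2 / 2) := by
  have hIoi : IntegrableOn (fun t : ℝ => |t| ^ s * Real.exp (k * |t| - t ^ 2 / 2)) (Set.Ioi 0) :=
    (integrableOn_rpow_mul_exp_sub_sq hs k).congr_fun
      (fun t ht => by simp only [abs_of_pos (show 0 < t from ht)]) measurableSet_Ioi
  have hIio : IntegrableOn (fun t : ℝ => |t| ^ s * Real.exp (k * |t| - t ^ 2 / 2)) (Set.Iio 0) := by
    have hneg := IntegrableOn.comp_neg_Iio (c := (0 : ℝ)) (by rwa [neg_zero])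
    simpa using hneg
  rw [← integrableOn_univ, ← Set.Iic_union_Ioi (a := (0 : ℝ))]
  exact ((integrableOn_Iic_iff_integrableOn_Iio (by simp)).2 hIio).union hIoi

end GaussianIntegrals

section CriticalKernel

/-- The weight by which the critical kernel integrates `G1` at `u` against `G2` at `v = I t`. -/
def kcritWeight (ν₀ : ℕ) (τ u t : ℝ) : ℂ :=
  ((u : ℂ) / (Complex.I * t)) ^ ν₀ *
    Complex.exp (-(τ : ℂ) * u - (u : ℂ) ^ 2 / 2 + (τ : ℂ) * (Complex.I * t) +
      (Complex.I * t) ^ 2 / 2) * ((u : ℂ) - Complex.I * t)⁻¹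

/-- The double integral of the critical kernel, with arbitrary functions of `u` and of `t` in place
of the two Meijer G-functions. -/
def kcritIntegral (ν₀ : ℕ) (τ : ℝ) (g V : ℝ → ℂ) : ℂ :=
  ∫ u in Set.Ioi (0 : ℝ), ∫ t : ℝ, kcritWeight ν₀ τ u t * g u * V t * Complex.I

theorem Kcrit_eq_kcritIntegral (r ν₀ : ℕ) (ν : Fin r → ℕ) (G₂ : ℂ → ℂ) (τ ξ η : ℝ) :
    Kcrit r ν₀ ν G₂ τ ξ η = (2 * Real.pi * Complex.I)⁻¹ * kcritIntegral ν₀ τ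
      (fun u => G1 r ν₀ ν ((u * ξ : ℝ) : ℂ)) (fun t => G₂ (Complex.I * t * η)) := rfl

variable {ν₀ : ℕ} {τ : ℝ}

theorem kcritIntegral_mul_mul (a c : ℂ) (g V : ℝ → ℂ) :
    kcritIntegral ν₀ τ (fun u => a * g u) (fun t => c * V t) =
      a * c * kcritIntegral ν₀ τ g V := by
  simp only [kcritIntegral, ← integral_const_mul]
  refine integral_congr_ae (Eventually.of_forall fun u => integral_congr_ae
    (Eventually.of_forall fun t => ?_))
  ring

theorem measurable_kcritWeight :
    Measurable fun q : ℝ × ℝ => kcritWeight ν₀ τ q.1 q.2 := by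
  unfold kcritWeight
  fun_prop

variable {u t : ℝ}

theorem norm_kcritWeight (hu : 0 < u) : ‖kcritWeight ν₀ τ u t‖ =
    (u / |t|) ^ ν₀ * Real.exp (-τ * u - u ^ 2 / 2 - t ^ 2 / 2) * ‖(u : ℂ) - Complex.I * t‖⁻¹ := by
  have hexponent : -(τ : ℂ) * u - (u : ℂ) ^ 2 / 2 + (τ : ℂ) * (Complex.I * t) +
      (Complex.I * t) ^ 2 / 2 =
        ((-τ * u - u ^ 2 / 2 - t ^ 2 / 2 : ℝ) : ℂ) + ((τ * t : ℝ) : ℂ) * Complex.I := by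
    rw [mul_pow, Complex.I_sq]
    push_cast
    ring
  rw [kcritWeight, hexponent, norm_mul, norm_mul, norm_pow, norm_div, norm_mul, Complex.norm_I,
    Complex.norm_exp, Complex.add_re, Complex.ofReal_re, Complex.re_ofReal_mul, Complex.I_re,
    mul_zero, add_zero, one_mul, Complex.norm_real, Complex.norm_real, norm_inv,
    Real.norm_of_nonneg hu.le, Real.norm_eq_abs]

theorem inv_norm_sub_I_mul_le (hu : 0 < u) (ht : t ≠ 0) :
    ‖(u : ℂ) - Complex.I * t‖⁻¹ ≤ u ^ (-(1 / 2) : ℝ) * |t| ^ (-(1 / 2) : ℝ) := by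
  have ht' := abs_pos.2 ht
  have hnormSq : ‖(u : ℂ) - Complex.I * t‖ ^ 2 = u ^ 2 + |t| ^ 2 := by
    rw [← Complex.normSq_eq_norm_sq, Complex.normSq_apply, sq_abs]
    simp [sq]
  rw [← Real.mul_rpow hu.le ht'.le, Real.rpow_neg (by positivity), ← Real.sqrt_eq_rpow]
  refine inv_anti₀ (by positivity) (Real.sqrt_le_iff.2 ⟨norm_nonneg _, ?_⟩)
  nlinarith [sq_nonneg (u - |t|)]

theorem norm_kcritWeight_mul_le {b a A B : ℝ} {g v : ℂ} (hu : 0 < u) (ht : t ≠ 0)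
    (hg : ‖g‖ ≤ Real.exp (a * u)) (hv : ‖v‖ ≤ A * |t| ^ b * Real.exp (B * |t|)) :
    ‖kcritWeight ν₀ τ u t * g * v * Complex.I‖ ≤
      u ^ (ν₀ - 1 / 2 : ℝ) * Real.exp ((a - τ) * u - u ^ 2 / 2) *
        (A * (|t| ^ (b - ν₀ - 1 / 2) * Real.exp (B * |t| - t ^ 2 / 2))) := by
  have ht' := abs_pos.2 ht
  have hupow : u ^ (ν₀ - 1 / 2 : ℝ) = u ^ ν₀ * u ^ (-(1 / 2) : ℝ) := by
    rw [sub_eq_add_neg, Real.rpow_add hu, Real.rpow_natCast]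
  have htpow : |t| ^ (b - ν₀ - 1 / 2) = |t| ^ b / |t| ^ ν₀ * |t| ^ (-(1 / 2) : ℝ) := by
    rw [sub_eq_add_neg, Real.rpow_add ht', Real.rpow_sub ht', Real.rpow_natCast]
  have hexp : Real.exp ((a - τ) * u - u ^ 2 / 2) * Real.exp (B * |t| - t ^ 2 / 2) =
      Real.exp (-τ * u - u ^ 2 / 2 - t ^ 2 / 2) * Real.exp (a * u) * Real.exp (B * |t|) := by
    simp only [← Real.exp_add]
    ring_nf
  rw [norm_mul, norm_mul, norm_mul, Complex.norm_I, mul_one, norm_kcritWeight hu]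
  calc _ ≤ (u / |t|) ^ ν₀ * Real.exp (-τ * u - u ^ 2 / 2 - t ^ 2 / 2) *
        (u ^ (-(1 / 2) : ℝ) * |t| ^ (-(1 / 2) : ℝ)) * Real.exp (a * u) *
          (A * |t| ^ b * Real.exp (B * |t|)) := by
        gcongr
        exact inv_norm_sub_I_mul_le hu ht
    _ = u ^ ν₀ * u ^ (-(1 / 2) : ℝ) * A * (|t| ^ b / |t| ^ ν₀ * |t| ^ (-(1 / 2) : ℝ)) *
          (Real.exp (-τ * u - u ^ 2 / 2 - t ^ 2 / 2) * Real.exp (a * u) * Real.exp (B * |t|)) := by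
        rw [div_pow]; ring
    _ = _ := by rw [← hupow, ← htpow, ← hexp]; ring

theorem tendsto_kcritIntegral {ι : Type*} {l : Filter ι} [l.IsCountablyGenerated] {b a A B : ℝ}
    (hb : ν₀ - 1 / 2 < b) {g V : ι → ℝ → ℂ} {g' V' : ℝ → ℂ}
    (hgm : ∀ n, Measurable (g n)) (hVm : ∀ n, AEStronglyMeasurable (V n))
    (hg : ∀ᶠ n in l, ∀ u, 0 < u → ‖g n u‖ ≤ Real.exp (a * u))
    (hV : ∀ᶠ n in l, ∀ t, t ≠ 0 → ‖V n t‖ ≤ A * |t| ^ b * Real.exp (B * |t|))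
    (hglim : ∀ u, Tendsto (g · u) l (𝓝 (g' u)))
    (hVlim : ∀ t, t ≠ 0 → Tendsto (V · t) l (𝓝 (V' t))) :
    Tendsto (fun n => kcritIntegral ν₀ τ (g n) (V n)) l (𝓝 (kcritIntegral ν₀ τ g' V')) := by
  rcases l.eq_or_neBot with rfl | hl
  · exact tendsto_bot
  let f : (ℝ → ℂ) → (ℝ → ℂ) → ℝ × ℝ → ℂ := fun g V q =>
    kcritWeight ν₀ τ q.1 q.2 * g q.1 * V q.2 * Complex.I
  let μ : Measure (ℝ × ℝ) := (volume.restrict (Set.Ioi 0)).prod volume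
  have hregion : ∀ᵐ q ∂μ, 0 < q.1 ∧ q.2 ≠ 0 :=
    (Measure.quasiMeasurePreserving_fst.ae (ae_restrict_mem measurableSet_Ioi)).and
      (Measure.quasiMeasurePreserving_snd.ae (Measure.ae_ne volume 0))
  let M : ℝ × ℝ → ℝ := fun q =>
    q.1 ^ (ν₀ - 1 / 2 : ℝ) * Real.exp ((a - τ) * q.1 - q.1 ^ 2 / 2) *
      (A * (|q.2| ^ (b - ν₀ - 1 / 2) * Real.exp (B * |q.2| - q.2 ^ 2 / 2)))
  have hM : Integrable M μ := Integrable.mul_prod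
    (integrableOn_rpow_mul_exp_sub_sq (by linarith [ν₀.cast_nonneg (α := ℝ)]) (a - τ))
    ((integrable_abs_rpow_mul_exp_sub_sq (by linarith) B).const_mul A)
  have hmeas n : AEStronglyMeasurable (f (g n) (V n)) μ :=
    ((measurable_kcritWeight.mul ((hgm n).comp measurable_fst)).aestronglyMeasurable.mul
      (hVm n).comp_snd).mul_const _
  have hle : ∀ᶠ n in l, ∀ q : ℝ × ℝ, 0 < q.1 ∧ q.2 ≠ 0 → ‖f (g n) (V n) q‖ ≤ M q := by
    filter_upwards [hg, hV] with n hgn hVn q hq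
    exact norm_kcritWeight_mul_le hq.1 hq.2 (hgn _ hq.1) (hVn _ hq.2)
  have hlim q (hq : 0 < q.1 ∧ q.2 ≠ 0) : Tendsto (fun n => f (g n) (V n) q) l (𝓝 (f g' V' q)) :=
    ((tendsto_const_nhds.mul (hglim q.1)).mul (hVlim q.2 hq.2)).mul_const _
  have hint : ∀ᶠ n in l, Integrable (f (g n) (V n)) μ :=
    hle.mono fun n hn => hM.mono' (hmeas n) (hregion.mono hn)
  have hint' : Integrable (f g' V') μ := hM.mono'
    (aestronglyMeasurable_of_tendsto_ae l hmeas (hregion.mono hlim))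
    (hregion.mono fun q hq => le_of_tendsto (hlim q hq).norm (hle.mono fun n hn => hn q hq))
  have h := tendsto_integral_filter_of_dominated_convergence M (Eventually.of_forall hmeas)
    (hle.mono fun n hn => hregion.mono hn) hM (hregion.mono hlim)
  rw [integral_prod _ hint'] at h
  exact h.congr' (hint.mono fun n hn => integral_prod _ hn)

end CriticalKernel

section MeijerG2

variable {ν₀ p : ℕ} {ν : Fin p → ℝ} {G₂ : ℂ → ℂ}

/-- `G₂` is the Meijer G-function `G2` of the parameters `ν₀; ν₁, …, ν_p`: the analytic function on
the slit plane whose values on the positive half-line are given by the multiple integral. -/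
structure IsMeijerG2 (ν₀ : ℕ) {p : ℕ} (ν : Fin p → ℝ) (G₂ : ℂ → ℂ) : Prop where
  differentiableOn : DifferentiableOn ℂ G₂ Complex.slitPlane
  apply_ofReal : ∀ z : ℝ, 0 < z → G₂ z = ((∫ t in posOrth p, meijerIntegrand ν₀ ν z t : ℝ) : ℂ)

theorem isMeijerG2_of_integral_g0C {ν : Fin p → ℕ} (hd : DifferentiableOn ℂ G₂ Complex.slitPlane)
    (hv : ∀ z : ℝ, 0 < z → G₂ (z : ℂ) = ∫ t in posOrth p,
      (((∏ l, (t l) ^ ((ν l : ℝ) - 1) * Real.exp (-t l)) : ℝ) : ℂ) *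
        g0C ν₀ ((z : ℂ) / ((∏ l, t l : ℝ) : ℂ))) :
    IsMeijerG2 ν₀ (fun l => (ν l : ℝ)) G₂ where
  differentiableOn := hd
  apply_ofReal z hz := by
    rw [hv z hz, ← integral_complex_ofReal]
    simp only [meijerIntegrand, Complex.ofReal_mul, ofReal_g0R, Complex.ofReal_div]

theorem I_mul_ofReal_mem_slitPlane {s : ℝ} (hs : s ≠ 0) : Complex.I * s ∈ Complex.slitPlane :=
  Or.inr (by simpa using hs)

theorem I_mul_ofReal_mul_mem_slitPlane {t η : ℝ} (ht : t ≠ 0) (hη : η ≠ 0) :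
    Complex.I * t * η ∈ Complex.slitPlane := by
  rw [mul_assoc, ← Complex.ofReal_mul]
  exact I_mul_ofReal_mem_slitPlane (mul_ne_zero ht hη)

namespace IsMeijerG2

theorem aestronglyMeasurable_comp_I_mul (hG : IsMeijerG2 ν₀ ν G₂) (η : ℝ) :
    AEStronglyMeasurable fun t : ℝ => G₂ (Complex.I * t * η) := by
  rcases eq_or_ne η 0 with rfl | hη
  · simp only [Complex.ofReal_zero, mul_zero]
    exact aestronglyMeasurable_const
  have hcont : ContinuousOn (fun t : ℝ => G₂ (Complex.I * t * η)) {0}ᶜ :=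
    hG.differentiableOn.continuousOn.comp (by fun_prop)
      fun t ht => I_mul_ofReal_mul_mem_slitPlane ht hη
  simpa using hcont.aestronglyMeasurable (μ := volume) (measurableSet_singleton 0).compl

theorem eq_meijerLog_log (hG : IsMeijerG2 ν₀ ν G₂) {b : ℝ} (hb : ν₀ / 2 - 1 / 4 ≤ b)
    (hbν₀ : b ≤ ν₀) (hbν : ∀ l, b < ν l) {z : ℂ} (hz : z ∈ Complex.slitPlane) :
    G₂ z = meijerLog ν₀ ν (Complex.log z) := by
  obtain ⟨A, B, hf⟩ := stripBounded_meijerLog hb hbν₀ hbν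
  refine apply_eq_log
    (comp_exp_eqOn_logStrip hG.differentiableOn hf.differentiableOn fun x => ?_) hz
  rw [hG.apply_ofReal _ (Real.exp_pos x), meijerLog_ofReal hb hbν₀ hbν]

end IsMeijerG2

theorem IsMeijerG2.div_prod_Gamma_eq {m K : ℕ} {ν : Fin (m + K) → ℝ} (hG : IsMeijerG2 ν₀ ν G₂)
    {b : ℝ} (hb : ν₀ / 2 - 1 / 4 ≤ b) (hbν₀ : b ≤ ν₀) (hbν : ∀ i, b < ν i)
    (hpos : ∀ j : Fin K, 0 < ν (j.natAdd m)) {z : ℂ} (hz : z ∈ Complex.slitPlane) :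
    G₂ (z * (∏ j : Fin K, ν (j.natAdd m) : ℝ)) /
      (∏ j : Fin K, Real.Gamma (ν (j.natAdd m)) : ℝ) =
        rescaledMeijerLog ν₀ m ν (Complex.log z) := by
  have hc : 0 < ∏ j : Fin K, ν (j.natAdd m) := Finset.prod_pos fun j _ => hpos j
  have hcz : z * (∏ j : Fin K, ν (j.natAdd m) : ℝ) ∈ Complex.slitPlane := by
    rw [mul_comm]
    exact hz.imp (fun h => by simpa only [Complex.re_ofReal_mul] using mul_pos hc h)
      fun h => by simpa only [Complex.im_ofReal_mul] using mul_ne_zero hc.ne' h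
  rw [hG.eq_meijerLog_log hb hbν₀ hbν hcz, rescaledMeijerLog,
    Complex.log_mul_ofReal _ hc _ (Complex.slitPlane_ne_zero hz),
    add_comm (Complex.log z)]

theorem StripBounded.norm_comp_log_le {b A B : ℝ} {f : ℂ → ℂ} (hf : StripBounded b A B f) {z : ℂ}
    (hz : z ∈ Complex.slitPlane) :
    ‖f (Complex.log z)‖ ≤ A * ‖z‖ ^ b * Real.exp (B * ‖z‖) := by
  have hnorm := norm_pos_iff.2 (Complex.slitPlane_ne_zero hz)
  simpa only [Complex.log_re, Real.exp_log hnorm, mul_comm b, ← Real.rpow_def_of_pos hnorm] using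
    hf.norm_le _ (log_mem_logStrip hz)

end MeijerG2

section RegularConfluence

variable {ν₀ m K : ℕ} {x y : ℝ} (τ : ℝ)

theorem prod_mul_Kcrit_eq {ν : Fin (m + K) → ℕ} (hpos : ∀ j : Fin K, 0 < ν (j.natAdd m))
    (G₂ : ℂ → ℂ) :
    ((∏ j : Fin K, (ν (j.natAdd m) : ℝ) : ℝ) : ℂ) * Kcrit (m + K) ν₀ ν G₂ τ
        ((∏ j : Fin K, (ν (j.natAdd m) : ℝ)) * x) ((∏ j : Fin K, (ν (j.natAdd m) : ℝ)) * y) =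
      (2 * Real.pi * Complex.I)⁻¹ * kcritIntegral ν₀ τ
        (fun u => rescaledG1 ν₀ m ν ((u * x : ℝ) : ℂ))
        (fun t => G₂ (Complex.I * t * y * (∏ j : Fin K, (ν (j.natAdd m) : ℝ) : ℝ)) /
          (∏ j : Fin K, Real.Gamma (ν (j.natAdd m)) : ℝ)) := by
  have hΓpos : 0 < ∏ j : Fin K, Real.Gamma (ν (j.natAdd m)) :=
    Finset.prod_pos fun j _ => Real.Gamma_pos_of_pos (Nat.cast_pos.2 (hpos j))
  have hfactorial : ((∏ j : Fin K, (ν (j.natAdd m)).factorial : ℕ) : ℝ) =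
      (∏ j : Fin K, (ν (j.natAdd m) : ℝ)) * ∏ j : Fin K, Real.Gamma (ν (j.natAdd m)) := by
    rw [← Finset.prod_mul_distrib, Nat.cast_prod]
    refine Finset.prod_congr rfl fun j _ => ?_
    rw [← Real.Gamma_add_one (Nat.cast_pos.2 (hpos j)).ne', Real.Gamma_nat_eq_factorial]
  set c := ∏ j : Fin K, (ν (j.natAdd m) : ℝ) with hc
  set Γ := ∏ j : Fin K, Real.Gamma (ν (j.natAdd m))
  have hcancel : (c : ℂ) = (∏ j : Fin K, ((ν (j.natAdd m)).factorial : ℂ)) * (Γ : ℂ)⁻¹ := by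
    rw [eq_mul_inv_iff_mul_eq₀ (Complex.ofReal_ne_zero.2 hΓpos.ne'), ← Complex.ofReal_mul,
      ← hfactorial, Nat.cast_prod, Complex.ofReal_prod]
    rfl
  have harg u : (∏ j : Fin K, (ν (j.natAdd m) : ℂ)) * ((u * x : ℝ) : ℂ) = (u * (c * x) : ℝ) := by
    rw [hc]
    push_cast
    ring
  rw [Kcrit_eq_kcritIntegral, mul_left_comm]
  refine congrArg _ ((congrArg (· * _) hcancel).trans ?_)
  rw [← kcritIntegral_mul_mul]
  simp only [rescaledG1, harg, inv_mul_eq_div, Complex.ofReal_mul c y, mul_comm (c : ℂ), mul_assoc]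

variable {ι : Type*} {l : Filter ι} {νs : Fin m → ℕ}
  {ν : ι → Fin (m + K) → ℕ} {G : ι → ℂ → ℂ} {G' : ℂ → ℂ}

theorem exists_norm_rescaled_le_and_tendsto_rescaled
    (hfix : ∀ n i, ν n (Fin.castAdd K i) = νs i)
    (htend : ∀ j : Fin K, Tendsto (fun n => ν n (j.natAdd m)) l atTop) (hle : ∀ i, ν₀ ≤ νs i)
    (hG : ∀ n, IsMeijerG2 ν₀ (fun i => (ν n i : ℝ)) (G n))
    (hG' : IsMeijerG2 ν₀ (fun i => (νs i : ℝ)) G') :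
    (∃ A B, ∀ᶠ n in l, ∀ z ∈ Complex.slitPlane,
      ‖G n (z * (∏ j : Fin K, (ν n (j.natAdd m) : ℝ) : ℝ)) /
        (∏ j : Fin K, Real.Gamma (ν n (j.natAdd m)) : ℝ)‖ ≤
          A * ‖z‖ ^ (ν₀ - 1 / 4 : ℝ) * Real.exp (B * ‖z‖)) ∧
    ∀ z ∈ Complex.slitPlane, Tendsto (fun n =>
      G n (z * (∏ j : Fin K, (ν n (j.natAdd m) : ℝ) : ℝ)) /
        (∏ j : Fin K, Real.Gamma (ν n (j.natAdd m)) : ℝ)) l (𝓝 (G' z)) := by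
  have hb : (ν₀ / 2 - 1 / 4 : ℝ) ≤ ν₀ - 1 / 4 := by linarith [ν₀.cast_nonneg (α := ℝ)]
  have hbν₀ : (ν₀ - 1 / 4 : ℝ) ≤ ν₀ := by linarith
  have hlt {k : ℕ} (hk : ν₀ ≤ k) : (ν₀ - 1 / 4 : ℝ) < k := by
    linarith [Nat.cast_le (α := ℝ).2 hk]
  obtain ⟨⟨A, B, hbound⟩, hlim⟩ := stripConverges_rescaledMeijerLog hb hbν₀
    (fun i => hlt (hle i)) (ν := fun n i => (ν n i : ℝ)) (fun n i => congrArg _ (hfix n i))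
    fun j => tendsto_natCast_atTop_atTop.comp (htend j)
  have heq : ∀ᶠ n in l, ∀ z ∈ Complex.slitPlane,
      G n (z * (∏ j : Fin K, (ν n (j.natAdd m) : ℝ) : ℝ)) /
        (∏ j : Fin K, Real.Gamma (ν n (j.natAdd m)) : ℝ) =
          rescaledMeijerLog ν₀ m (fun i => (ν n i : ℝ)) (Complex.log z) := by
    filter_upwards [eventually_all.2 fun j => (htend j).eventually_ge_atTop (ν₀ + 1)] with n hn z
    refine (hG n).div_prod_Gamma_eq hb hbν₀ (fun i => hlt ?_)
      fun j => Nat.cast_pos.2 (ν₀.succ_pos.trans_le (hn j))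
    induction i using Fin.addCases with
    | left i => exact (hle i).trans_eq (hfix n i).symm
    | right j => exact ν₀.le_succ.trans (hn j)
  refine ⟨⟨A, B, ?_⟩, fun z hz => ?_⟩
  · filter_upwards [heq, hbound] with n hn hf z hz
    rw [hn z hz]
    exact hf.norm_comp_log_le hz
  · rw [hG'.eq_meijerLog_log hb hbν₀ (fun i => hlt (hle i)) hz]
    exact (hlim _ (log_mem_logStrip hz)).congr' (heq.mono fun n hn => (hn z hz).symm)

theorem tendsto_prod_mul_Kcrit_of_le [l.IsCountablyGenerated]
    (hfix : ∀ n i, ν n (Fin.castAdd K i) = νs i)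
    (htend : ∀ j : Fin K, Tendsto (fun n => ν n (j.natAdd m)) l atTop) (hle : ∀ i, ν₀ ≤ νs i)
    (hG : ∀ n, IsMeijerG2 ν₀ (fun i => (ν n i : ℝ)) (G n))
    (hG' : IsMeijerG2 ν₀ (fun i => (νs i : ℝ)) G') (hy : 0 < y) :
    Tendsto (fun n => ((∏ j : Fin K, (ν n (j.natAdd m) : ℝ) : ℝ) : ℂ) *
        Kcrit (m + K) ν₀ (ν n) (G n) τ ((∏ j : Fin K, (ν n (j.natAdd m) : ℝ)) * x)
          ((∏ j : Fin K, (ν n (j.natAdd m) : ℝ)) * y)) l (𝓝 (Kcrit m ν₀ νs G' τ x y)) := by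
  obtain ⟨⟨A, B, hbound⟩, hlim⟩ :=
    exists_norm_rescaled_le_and_tendsto_rescaled hfix htend hle hG hG'
  have hnorm (t : ℝ) : ‖Complex.I * t * y‖ = |t| * y := by
    simp [abs_of_pos hy]
  have hVm n : AEStronglyMeasurable fun t : ℝ =>
      G n (Complex.I * t * y * (∏ j : Fin K, (ν n (j.natAdd m) : ℝ) : ℝ)) /
        (∏ j : Fin K, Real.Gamma (ν n (j.natAdd m)) : ℝ) := by
    have h := (hG n).aestronglyMeasurable_comp_I_mul (y * ∏ j : Fin K, (ν n (j.natAdd m) : ℝ))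
    simp only [Complex.ofReal_mul y, ← mul_assoc] at h
    simpa only [div_eq_mul_inv] using h.mul_const _
  have hVle : ∀ᶠ n in l, ∀ t : ℝ, t ≠ 0 →
      ‖G n (Complex.I * t * y * (∏ j : Fin K, (ν n (j.natAdd m) : ℝ) : ℝ)) /
        (∏ j : Fin K, Real.Gamma (ν n (j.natAdd m)) : ℝ)‖ ≤
          A * y ^ (ν₀ - 1 / 4 : ℝ) * |t| ^ (ν₀ - 1 / 4 : ℝ) * Real.exp (B * y * |t|) := by
    filter_upwards [hbound] with n hn t ht
    refine (hn _ (I_mul_ofReal_mul_mem_slitPlane ht hy.ne')).trans_eq ?_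
    rw [hnorm, Real.mul_rpow (abs_nonneg t) hy.le]
    ring_nf
  have hgle n u (hu : 0 < u) : ‖rescaledG1 ν₀ m (ν n) ((u * x : ℝ) : ℂ)‖ ≤ Real.exp (|x| * u) := by
    refine (norm_rescaledG1_le ν₀ (ν n) _).trans_eq ?_
    rw [Complex.norm_real, norm_mul, Real.norm_of_nonneg hu.le, Real.norm_eq_abs, mul_comm]
  have h := tendsto_kcritIntegral (ν₀ := ν₀) (τ := τ) (by linarith)
    (fun n => (measurable_rescaledG1 ν₀ (ν n)).comp (by fun_prop)) hVm
    (Eventually.of_forall hgle) hVle (fun u => tendsto_rescaledG1 ν₀ hfix htend _)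
    fun t ht => hlim _ (I_mul_ofReal_mul_mem_slitPlane ht hy.ne')
  refine (h.const_mul _).congr' ?_
  filter_upwards [eventually_all.2 fun j => (htend j).eventually_ge_atTop 1] with n hn
  exact (prod_mul_Kcrit_eq τ hn (G n)).symm

end RegularConfluence

section LaplaceTransform

variable {p : ℂ}

theorem norm_pow_mul_exp_neg_mul (n : ℕ) (p : ℂ) {q : ℝ} (hq : 0 < q) :
    ‖(q : ℂ) ^ n * Complex.exp (-(p * q))‖ = q ^ n * Real.exp (-(p.re * q)) := by
  rw [norm_mul, norm_pow, Complex.norm_of_nonneg hq.le, Complex.norm_exp]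
  simp

theorem integral_pow_mul_exp_neg_mul_Ioi (n : ℕ) {c : ℝ} (hc : 0 < c) :
    ∫ q in Set.Ioi 0, q ^ n * Real.exp (-(c * q)) = n.factorial / c ^ (n + 1) := by
  have h := Real.integral_rpow_mul_exp_neg_mul_Ioi (a := n + 1) (by positivity) hc
  simp only [add_sub_cancel_right, Real.rpow_natCast, Real.Gamma_nat_eq_factorial] at h
  rw [h, ← Nat.cast_succ, Real.rpow_natCast, one_div, inv_pow, ← div_eq_inv_mul]

theorem integrableOn_pow_mul_exp_neg_mul_Ioi (n : ℕ) (hp : 0 < p.re) :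
    IntegrableOn (fun q : ℝ => (q : ℂ) ^ n * Complex.exp (-(p * q))) (Set.Ioi 0) := by
  refine Integrable.mono' (.of_integral_ne_zero ?_) (by fun_prop)
    ((ae_restrict_mem measurableSet_Ioi).mono fun q hq => (norm_pow_mul_exp_neg_mul n p hq).le)
  rw [integral_pow_mul_exp_neg_mul_Ioi n hp]
  positivity

theorem tendsto_pow_mul_exp_neg_mul_atTop (n : ℕ) (hp : 0 < p.re) :
    Tendsto (fun q : ℝ => (q : ℂ) ^ n * Complex.exp (-(p * q))) atTop (𝓝 0) := by
  rw [tendsto_zero_iff_norm_tendsto_zero]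
  refine (tendsto_rpow_mul_exp_neg_mul_atTop_nhds_zero n p.re hp).congr' ?_
  filter_upwards [eventually_gt_atTop 0] with q hq
  rw [norm_pow_mul_exp_neg_mul n p hq, Real.rpow_natCast, neg_mul]

theorem integral_pow_mul_cexp_neg_mul_Ioi (n : ℕ) (hp : 0 < p.re) :
    ∫ q in Set.Ioi (0 : ℝ), (q : ℂ) ^ n * Complex.exp (-(p * q)) = n.factorial / p ^ (n + 1) := by
  have hp₀ : p ≠ 0 := by rintro rfl; simp at hp
  have hexp (q : ℝ) : HasDerivAt (fun q : ℝ => Complex.exp (-(p * q)))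
      (-p * Complex.exp (-(p * q))) q := by
    simpa [mul_comm] using (((hasDerivAt_id (q : ℂ)).const_mul p).neg.cexp).comp_ofReal
  have hint (n : ℕ) := (integrableOn_pow_mul_exp_neg_mul_Ioi n hp).const_mul
  induction n with
  | zero =>
    have h := integral_Ioi_of_hasDerivAt_of_tendsto' (a := 0) (fun q _ => hexp q)
      (by simpa [IntegrableOn] using hint 0 (-p))
      (by simpa using tendsto_pow_mul_exp_neg_mul_atTop 0 hp)
    rw [integral_const_mul] at h
    rw [← mul_right_inj' hp₀]
    simpa [hp₀] using h
  | succ n ih =>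
    have hderiv (q : ℝ) : HasDerivAt (fun q : ℝ => (q : ℂ) ^ (n + 1) * Complex.exp (-(p * q)))
        ((n + 1) * ((q : ℂ) ^ n * Complex.exp (-(p * q))) -
          p * ((q : ℂ) ^ (n + 1) * Complex.exp (-(p * q)))) q := by
      have hpow := (hasDerivAt_pow (n + 1) (q : ℂ)).comp_ofReal
      refine (hpow.mul (hexp q)).congr_deriv ?_
      rw [Nat.add_sub_cancel]
      push_cast
      ring
    have h := integral_Ioi_of_hasDerivAt_of_tendsto' (a := 0) (fun q _ => hderiv q)
      ((hint n _).sub (hint (n + 1) _)) (tendsto_pow_mul_exp_neg_mul_atTop (n + 1) hp)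
    rw [integral_sub (hint n _) (hint (n + 1) _), integral_const_mul, integral_const_mul, ih,
      Complex.ofReal_zero, zero_pow n.succ_ne_zero, zero_mul, sub_zero, sub_eq_zero] at h
    rw [← mul_right_inj' hp₀, ← h, Nat.factorial_succ]
    push_cast
    field_simp
    ring

/-- Integrating the power series of `g0C` term by term gives the exponential series at `-p⁻¹`. -/
theorem integral_exp_neg_mul_mul_g0C (ν : ℕ) (hp : 0 < p.re) :
    ∫ q in Set.Ioi (0 : ℝ), Complex.exp (-(p * q)) * g0C ν q =
      Complex.exp (-p⁻¹) / p ^ (ν + 1) := by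
  have hp₀ : p ≠ 0 := by rintro rfl; simp at hp
  let F (k : ℕ) (q : ℝ) : ℂ := (-1) ^ k / (k.factorial * (ν + k).factorial) *
    ((q : ℂ) ^ (ν + k) * Complex.exp (-(p * q)))
  have hint (k : ℕ) : Integrable (F k) (volume.restrict (Set.Ioi 0)) :=
    (integrableOn_pow_mul_exp_neg_mul_Ioi (ν + k) hp).const_mul _
  have hnorm (k : ℕ) : ∫ q in Set.Ioi (0 : ℝ), ‖F k q‖ =
      (p.re ^ (ν + 1))⁻¹ * (p.re⁻¹ ^ k / k.factorial) := by
    have h := integral_pow_mul_exp_neg_mul_Ioi (ν + k) hp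
    rw [← setIntegral_congr_fun measurableSet_Ioi fun q hq =>
      norm_pow_mul_exp_neg_mul (ν + k) p hq] at h
    simp only [F, norm_mul _ (_ * Complex.exp _), integral_const_mul, h]
    have := (ν + k).factorial_ne_zero
    simp only [norm_div, norm_pow, norm_neg, norm_one, one_pow, norm_mul, Complex.norm_natCast,
      inv_pow]
    field_simp
    ring
  have hsum := hasSum_integral_of_summable_integral_norm hint
    (by simpa only [hnorm] using (Real.summable_pow_div_factorial _).mul_left _)
  have htsum (q : ℝ) : ∑' k, F k q = Complex.exp (-(p * q)) * g0C ν q := by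
    rw [g0C_eq, mul_comm, mul_right_comm, besselClifford, ← tsum_mul_left]
    refine tsum_congr fun k => ?_
    simp only [F, neg_pow (q : ℂ), pow_add]
    ring
  have hterm (k : ℕ) : ∫ q in Set.Ioi (0 : ℝ), F k q =
      (p ^ (ν + 1))⁻¹ * ((-p⁻¹) ^ k / k.factorial) := by
    have hfact : ((ν + k).factorial : ℂ) ≠ 0 := by exact_mod_cast (ν + k).factorial_ne_zero
    simp only [F, integral_const_mul, integral_pow_mul_cexp_neg_mul_Ioi _ hp, neg_pow p⁻¹, inv_pow]
    field_simp
    ring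
  simp only [htsum, hterm] at hsum
  rw [← hsum.tsum_eq, tsum_mul_left, Complex.exp_eq_exp_ℂ, NormedSpace.exp_eq_tsum_div,
    div_eq_inv_mul]

/- Evaluate the Laplace transform at a point with `Re p = c = |p|²`: there `Re (1 / p) = 1`, so its
modulus is `e⁻¹ |p|^{-(ν+1)}`. -/
theorem exp_neg_one_mul_pow_le_integral (ν : ℕ) {c : ℝ} (hc : 0 < c) (hc₁ : c ≤ 1) :
    Real.exp (-1) * (√c)⁻¹ ^ (ν + 1) ≤
      ∫ q in Set.Ioi (0 : ℝ), Real.exp (-(c * q)) * ‖g0C ν q‖ := by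
  let p : ℂ := ⟨c, √(c - c ^ 2)⟩
  have hnormSq : Complex.normSq p = c := by
    rw [Complex.normSq_mk, Real.mul_self_sqrt (by nlinarith)]
    ring
  have hnorm : ‖p‖ = √c := by
    rw [← hnormSq, Complex.normSq_eq_norm_sq, Real.sqrt_sq (norm_nonneg _)]
  have hre : (-p⁻¹).re = -1 := by
    rw [Complex.neg_re, Complex.inv_re, hnormSq, div_self hc.ne']
  have h := norm_integral_le_integral_norm (μ := volume.restrict (Set.Ioi 0))
    fun q : ℝ => Complex.exp (-(p * q)) * g0C ν q
  rw [integral_exp_neg_mul_mul_g0C ν hc, norm_div, norm_pow, hnorm, Complex.norm_exp, hre] at h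
  simpa [Complex.norm_exp, p, div_eq_mul_inv] using h

end LaplaceTransform

section SmallParameter

variable {ν ν₀ : ℕ}

theorem pow_mul_exp_mul_exp_neg_le (ν : ℕ) {c : ℝ} (hc : 0 < c) (v : ℝ) :
    c ^ (ν + 1) * (Real.exp v * Real.exp (-(c * Real.exp v))) ≤
      (ν + 1).factorial * Real.exp (-(ν * v)) := by
  have h := Real.pow_div_factorial_le_exp (c * Real.exp v) (by positivity) (ν + 1)
  rw [div_le_iff₀' (by positivity), mul_pow, pow_succ (Real.exp v), ← Real.exp_nat_mul] at h
  rw [Real.exp_neg, Real.exp_neg, ← div_eq_mul_inv, ← div_eq_mul_inv, ← mul_div_assoc,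
    div_le_div_iff₀ (Real.exp_pos _) (Real.exp_pos _)]
  exact (by ring : _ = _).trans_le h

theorem exp_neg_one_le_pow_mul_integral (hν : 2 * ν < ν₀) {c : ℝ} (hc : 0 < c) (hc₁ : c ≤ 1) :
    Real.exp (-1) ≤ ∫ v : ℝ, c ^ (ν + 1) * (Real.exp v * Real.exp (-(c * Real.exp v))) *
      ‖g0C ν₀ (Real.exp v : ℝ)‖ := by
  have hsqrt : 0 < √c := Real.sqrt_pos.2 hc
  have hpow : √c ^ (ν₀ + 1) ≤ c ^ (ν + 1) := by
    rw [← Real.sq_sqrt hc.le, ← pow_mul, Real.sqrt_sq hsqrt.le]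
    exact pow_le_pow_of_le_one hsqrt.le (Real.sqrt_le_one.2 hc₁) (by omega)
  calc Real.exp (-1) = √c ^ (ν₀ + 1) * (Real.exp (-1) * (√c)⁻¹ ^ (ν₀ + 1)) := by
        rw [inv_pow, mul_left_comm, mul_inv_cancel₀ (pow_ne_zero _ hsqrt.ne'), mul_one]
    _ ≤ c ^ (ν + 1) * ∫ q in Set.Ioi (0 : ℝ), Real.exp (-(c * q)) * ‖g0C ν₀ q‖ := by
        gcongr
        exact exp_neg_one_mul_pow_le_integral ν₀ hc hc₁
    _ = _ := by
        rw [← integral_exp_smul_comp_exp, ← integral_const_mul]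
        simp only [smul_eq_mul, mul_assoc]

theorem not_integrable_exp_neg_mul_norm_g0C (hν : 2 * ν < ν₀) :
    ¬ Integrable fun v : ℝ => Real.exp (-(ν * v)) * ‖g0C ν₀ (Real.exp v : ℝ)‖ := by
  intro hint
  have hg : Measurable fun v : ℝ => ‖g0C ν₀ (Real.exp v : ℝ)‖ :=
    ((differentiable_g0C ν₀).continuous.comp
      (Complex.continuous_ofReal.comp Real.continuous_exp)).norm.measurable
  have htendsto : Tendsto (fun c : ℝ => ∫ v : ℝ, c ^ (ν + 1) *
      (Real.exp v * Real.exp (-(c * Real.exp v))) * ‖g0C ν₀ (Real.exp v : ℝ)‖)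
      (𝓝[>] 0) (𝓝 (∫ _ : ℝ, 0)) := by
    refine tendsto_integral_filter_of_dominated_convergence _
      (Eventually.of_forall fun c => (by fun_prop : Measurable _).aestronglyMeasurable)
      ?_ (hint.const_mul ((ν + 1).factorial : ℝ))
      (Eventually.of_forall fun v => (Continuous.tendsto' (by fun_prop) _ _
        (by simp)).mono_left nhdsWithin_le_nhds)
    filter_upwards [self_mem_nhdsWithin] with c (hc : 0 < c)
    refine Eventually.of_forall fun v => ?_
    rw [Real.norm_of_nonneg (by positivity)]
    exact (mul_le_mul_of_nonneg_right (pow_mul_exp_mul_exp_neg_le ν hc v)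
      (norm_nonneg _)).trans_eq (mul_assoc _ _ _)
  rw [integral_zero] at htendsto
  refine (Real.exp_pos (-1)).not_ge (ge_of_tendsto htendsto ?_)
  filter_upwards [Ioc_mem_nhdsGT one_pos] with c hc
  exact exp_neg_one_le_pow_mul_integral hν hc.1 hc.2

theorem not_integrable_exp_neg_mul_exp_neg_mul_norm_g0C (hν : 2 * ν < ν₀) {Z : ℝ} (hZ : 0 < Z) :
    ¬ Integrable fun v : ℝ =>
      Real.exp (-(ν * v)) * Real.exp (-(Z * Real.exp (-v))) * ‖g0C ν₀ (Real.exp v : ℝ)‖ := by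
  intro hint
  refine not_integrable_exp_neg_mul_norm_g0C hν ?_
  have hcont : Continuous fun v : ℝ => Real.exp (-(ν * v)) * ‖g0C ν₀ (Real.exp v : ℝ)‖ := by
    have := (differentiable_g0C ν₀).continuous
    fun_prop
  rw [← integrableOn_univ, ← Set.Iic_union_Ioi (a := 0)]
  refine IntegrableOn.union ?_ ?_
  · have hpos : (0 : ℝ) < ν₀ - ν := by exact_mod_cast (by omega : 0 < (ν₀ : ℤ) - ν)
    refine Integrable.mono' ((integrableOn_exp_mul_Iic hpos 0).const_mul (Real.exp 1))
      hcont.aestronglyMeasurable ((ae_restrict_mem measurableSet_Iic).mono fun v hv => ?_)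
    have hbound := norm_g0C_exp_le ν₀ v
    rw [← Complex.ofReal_exp, Complex.ofReal_re] at hbound
    rw [Real.norm_of_nonneg (by positivity), sub_mul, sub_eq_neg_add, Real.exp_add, mul_left_comm,
      mul_comm (Real.exp 1)]
    gcongr
    refine hbound.trans ?_
    gcongr
    exact Real.exp_le_one_iff.2 hv
  · refine Integrable.mono' (hint.integrableOn.const_mul (Real.exp Z))
      hcont.aestronglyMeasurable ((ae_restrict_mem measurableSet_Ioi).mono fun v hv => ?_)
    have hexp : Real.exp (-v) ≤ 1 := Real.exp_le_one_iff.2 (neg_nonpos.2 (le_of_lt hv))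
    rw [Real.norm_of_nonneg (by positivity), mul_right_comm, mul_left_comm, ← Real.exp_add]
    exact le_mul_of_one_le_right (by positivity) (Real.one_le_exp (by nlinarith))

theorem not_integrableOn_rpow_mul_exp_neg_mul_g0R (hν : 2 * ν < ν₀) {Z : ℝ} (hZ : 0 < Z) :
    ¬ IntegrableOn (fun s : ℝ => s ^ ((ν : ℝ) - 1) * Real.exp (-s) * g0R ν₀ (Z / s))
      (Set.Ioi 0) := by
  intro h
  refine not_integrable_exp_neg_mul_exp_neg_mul_norm_g0C hν hZ ?_
  have h' := (integrable_exp_smul_comp_exp.2 h).norm.comp_sub_left (Real.log Z)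
  refine (h'.const_mul (Z ^ ν)⁻¹).congr (Eventually.of_forall fun v => ?_)
  have hexp : Real.exp (Real.log Z - v) = Z * Real.exp (-v) := by
    rw [sub_eq_add_neg, Real.exp_add, Real.exp_log hZ]
  have hpow : Z * Real.exp (-v) * (Z * Real.exp (-v)) ^ ((ν : ℝ) - 1) =
      Z ^ ν * Real.exp (-(ν * v)) := by
    rw [Real.rpow_sub_one (by positivity), mul_div_cancel₀ _ (by positivity), Real.rpow_natCast,
      mul_pow, ← Real.exp_nat_mul, mul_neg]
  have hdiv : Z / (Z * Real.exp (-v)) = Real.exp v := by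
    rw [Real.exp_neg]
    field_simp
  simp only [hexp, smul_eq_mul, ← mul_assoc, hpow, hdiv, ← ofReal_g0R, norm_mul,
    Complex.norm_real, Real.norm_of_nonneg hZ.le, norm_pow, Real.norm_of_nonneg (Real.exp_pos _).le]
  field_simp

theorem not_integrableOn_meijerIntegrand {p : ℕ} {ν : Fin (p + 1) → ℕ} {i : Fin (p + 1)}
    (hν : 2 * ν i < ν₀) {z : ℝ} (hz : 0 < z) :
    ¬ IntegrableOn (meijerIntegrand ν₀ (fun l => (ν l : ℝ)) z) (posOrth (p + 1)) := by
  rw [← integrable_splitMeasure_iff i]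
  intro h
  have hne : NeBot (ae (volume.restrict (posOrth p))) := by
    rw [ae_neBot, Ne, Measure.restrict_eq_zero]
    exact (isOpen_posOrth.measure_pos volume ⟨fun _ => 1, fun _ => one_pos⟩).ne'
  obtain ⟨t, ht, htpos⟩ :=
    (h.prod_left_ae.and (ae_restrict_mem isOpen_posOrth.measurableSet)).exists
  have hprod : 0 < ∏ l, t l := Finset.prod_pos fun l _ => htpos l
  have hweight : 0 < ∏ l, t l ^ ((ν (i.succAbove l) : ℝ) - 1) * Real.exp (-t l) :=
    Finset.prod_pos fun l _ => mul_pos (Real.rpow_pos_of_pos (htpos l) _) (Real.exp_pos _)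
  refine not_integrableOn_rpow_mul_exp_neg_mul_g0R hν (div_pos hz hprod)
    ((Integrable.const_mul ht (∏ l, t l ^ ((ν (i.succAbove l) : ℝ) - 1) *
      Real.exp (-t l))⁻¹).congr (Eventually.of_forall fun s => ?_))
  simp only [meijerIntegrand, Fin.removeNth, div_right_comm z]
  rw [mul_left_comm, inv_mul_cancel_left₀ hweight.ne']

end SmallParameter

section LogMellin

variable {b b' A A' B B' β : ℝ} {f : ℂ → ℂ}

/-- The Mellin transform `∫₀^∞ z^{-β-1} f(log z) dz`, in the logarithmic variable. -/
def logMellin (f : ℂ → ℂ) (β : ℝ) : ℂ := ∫ x : ℝ, Complex.exp (-β * x) * f x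

theorem norm_exp_neg_mul (β : ℝ) (ζ : ℂ) : ‖Complex.exp (-β * ζ)‖ = Real.exp (-β * ζ.re) := by
  simp [Complex.norm_exp]

theorem StripBounded.exp_neg_mul (hf : StripBounded b A B f) (β : ℝ) :
    StripBounded (b - β) A B fun ζ => Complex.exp (-β * ζ) * f ζ where
  nonneg_growth := hf.nonneg_growth
  differentiableOn := (by fun_prop : Differentiable ℂ fun ζ : ℂ =>
    Complex.exp (-β * ζ)).differentiableOn.mul hf.differentiableOn
  norm_ofReal_le x := by
    rw [norm_mul, norm_exp_neg_mul, Complex.ofReal_re, sub_eq_neg_add, add_mul, Real.exp_add,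
      mul_left_comm]
    exact mul_le_mul_of_nonneg_left (hf.norm_ofReal_le x) (Real.exp_pos _).le
  norm_le ζ hζ := by
    rw [norm_mul, norm_exp_neg_mul, sub_eq_neg_add, add_mul, Real.exp_add, mul_left_comm A,
      mul_assoc]
    exact mul_le_mul_of_nonneg_left (hf.norm_le ζ hζ) (Real.exp_pos _).le

theorem ofReal_add_mem_logStrip {ζ : ℂ} (hζ : ζ ∈ logStrip) (x : ℝ) : (x : ℂ) + ζ ∈ logStrip := by
  simpa only [add_comm] using add_ofReal_mem_logStrip hζ x

theorem StripBounded.continuous_comp_ofReal_add (hf : StripBounded b A B f) {ζ : ℂ}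
    (hζ : ζ ∈ logStrip) : Continuous fun x : ℝ => f (x + ζ) :=
  continuousOn_univ.1 <| hf.continuousOn.comp (by fun_prop) fun x _ => ofReal_add_mem_logStrip hζ x

theorem StripBounded.integrableOn_Iic_comp_add (hf : StripBounded b A B f) (hb : 0 < b) {ζ : ℂ}
    (hζ : ζ ∈ logStrip) : IntegrableOn (fun x : ℝ => f (x + ζ)) (Set.Iic 0) := by
  refine Integrable.mono' ((integrableOn_exp_mul_Iic hb 0).const_mul
    (A * Real.exp (b * ζ.re) * Real.exp (B * Real.exp ζ.re)))
    (hf.continuous_comp_ofReal_add hζ).aestronglyMeasurable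
    ((ae_restrict_mem measurableSet_Iic).mono fun x (hx : x ≤ 0) => ?_)
  have hre : ((x : ℂ) + ζ).re = x + ζ.re := by simp
  refine (hf.norm_le_of_re_le (ofReal_add_mem_logStrip hζ x)
    (hre.trans_le (add_le_of_nonpos_left hx))).trans_eq ?_
  rw [hre, mul_add, Real.exp_add]
  ring

theorem StripBounded.integrableOn_Iic (hf : StripBounded b A B f) (hb : 0 < b) :
    IntegrableOn (fun x : ℝ => f x) (Set.Iic 0) := by
  simpa using hf.integrableOn_Iic_comp_add hb (ofReal_mem_logStrip 0)

theorem StripBounded.integrableOn_Ioi (hf : StripBounded b A B f) (hb : b < 0) :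
    IntegrableOn (fun x : ℝ => f x) (Set.Ioi 0) :=
  Integrable.mono' ((integrableOn_exp_mul_Ioi hb 0).const_mul A)
    hf.continuous_ofReal.aestronglyMeasurable (Eventually.of_forall hf.norm_ofReal_le)

theorem StripBounded.integrable_exp_neg_mul (hf : StripBounded b A B f)
    (hf' : StripBounded b' A' B' f) (hb : b < β) (hb' : β < b') :
    Integrable fun x : ℝ => Complex.exp (-β * x) * f x := by
  rw [← integrableOn_univ, ← Set.Iic_union_Ioi (a := 0)]
  exact ((hf'.exp_neg_mul β).integrableOn_Iic (sub_pos.2 hb')).union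
    ((hf.exp_neg_mul β).integrableOn_Ioi (sub_neg.2 hb))

theorem StripBounded.continuousAt_logMellin (hf : StripBounded b A B f)
    (hf' : StripBounded b' A' B' f) (hb : b < β) (hb' : β < b') :
    ContinuousAt (logMellin f) β := by
  obtain ⟨β₀, hbβ₀, hβ₀⟩ := exists_between hb
  obtain ⟨β₁, hβ₁, hβ₁b'⟩ := exists_between hb'
  have hint {γ : ℝ} (h : b < γ) (h' : γ < b') := hf.integrable_exp_neg_mul hf' h h'
  refine continuousAt_of_dominated (bound := fun x : ℝ =>
    ‖Complex.exp (-β₀ * x) * f x‖ + ‖Complex.exp (-β₁ * x) * f x‖)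
    (Eventually.of_forall fun γ => ?_) ?_
    ((hint hbβ₀ (hβ₀.trans hb')).norm.add (hint (hb.trans hβ₁) hβ₁b').norm)
    (Eventually.of_forall fun x => by fun_prop)
  · exact ((by fun_prop : Continuous fun x : ℝ => Complex.exp (-γ * x)).mul
      hf.continuous_ofReal).aestronglyMeasurable
  · filter_upwards [Ioo_mem_nhds hβ₀ hβ₁] with γ hγ
    refine Eventually.of_forall fun x => ?_
    simp only [norm_mul, norm_exp_neg_mul, Complex.ofReal_re, ← add_mul]
    gcongr
    rcases le_total x 0 with hx | hx
    · exact (Real.exp_le_exp.2 (by nlinarith [hγ.2])).trans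
        (le_add_of_nonneg_left (Real.exp_pos _).le)
    · exact (Real.exp_le_exp.2 (by nlinarith [hγ.1])).trans
        (le_add_of_nonneg_right (Real.exp_pos _).le)

/-- The multiplicativity of the Mellin transform: that of the gamma kernel is a gamma factor. -/
theorem StripBounded.logMellin_gammaConv (hf : StripBounded b A B f)
    (hf' : StripBounded b' A' B' f) (hb : b < β) (hb' : β < b') {p : ℝ} (hp : β < p) :
    logMellin (_root_.gammaConv p f) β = Real.Gamma (p - β) * logMellin f β := by
  have hker : (fun u : ℝ => gammaKernel (p - β) u) =
      fun u : ℝ => ((Real.exp ((p - β) * u - Real.exp u) : ℝ) : ℂ) := by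
    funext u
    simp [gammaKernel]
  have hint : Integrable fun u : ℝ => gammaKernel (p - β) u :=
    hker ▸ (integrable_exp_mul_sub_exp (sub_pos.2 hp)).ofReal
  have hGamma : ∫ u : ℝ, gammaKernel (p - β) u = Real.Gamma (p - β) := by
    rw [hker, integral_complex_ofReal, integral_exp_mul_sub_exp (sub_pos.2 hp)]
  rw [← hGamma, logMellin, logMellin, ← ContinuousLinearMap.mul_apply' ℂ,
    ← integral_convolution _ hint (hf.integrable_exp_neg_mul hf' hb hb')]
  refine integral_congr_ae (Eventually.of_forall fun x => ?_)
  simp only [convolution_def, hf.gammaConv_ofReal (hb.trans hp), ← integral_const_mul,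
    ContinuousLinearMap.mul_apply']
  refine integral_congr_ae (Eventually.of_forall fun u => ?_)
  simp only [gammaKernel, ← mul_assoc, ← Complex.exp_add]
  push_cast
  ring_nf

theorem logMellin_meijerLog {ν₀ p : ℕ} {ν : Fin p → ℝ} (hβ : ν₀ / 2 - 1 / 4 < β) (hβν₀ : β < ν₀)
    (hβν : ∀ l, β < ν l) : logMellin (meijerLog ν₀ ν) β =
      (∏ l, Real.Gamma (ν l - β) : ℝ) * logMellin (fun ζ => g0C ν₀ (Complex.exp ζ)) β := by
  induction p with
  | zero => simp [meijerLog]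
  | succ p ih =>
    have hinit (l : Fin p) : β < Fin.init ν l := hβν l.castSucc
    obtain ⟨b', hβb', hb'ν₀, hb'ν⟩ : ∃ b', β < b' ∧ b' < ν₀ ∧ ∀ l, b' < Fin.init ν l :=
      ((eventually_mem_nhdsWithin (a := β) (s := Set.Ioi β)).and <|
        ((eventually_lt_nhds hβν₀).and <| eventually_all.2 fun l =>
          eventually_lt_nhds (hinit l)).filter_mono nhdsWithin_le_nhds).exists
    obtain ⟨_, _, hf⟩ := stripBounded_meijerLog le_rfl (hβ.trans hβν₀).le
      fun l => hβ.trans (hinit l)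
    obtain ⟨_, _, hf'⟩ := stripBounded_meijerLog (hβ.trans hβb').le hb'ν₀.le hb'ν
    rw [meijerLog, hf.logMellin_gammaConv hf' hβ hβb' (hβν _), ih hinit, Fin.prod_univ_castSucc]
    push_cast [Fin.init]
    ring

end LogMellin

section BesselCliffordMoments

theorem exists_abs_pow_mul_besselClifford_le (a n : ℕ) : ∃ C, ∀ q : ℝ, 1 ≤ q →
    |q ^ a * besselClifford n q| ≤ C * q ^ (a - (n / 2 + 1 / 4) : ℝ) := by
  obtain ⟨C, hC⟩ := exists_abs_besselClifford_le n
  refine ⟨C, fun q hq => ?_⟩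
  have hq₀ : 0 < q := one_pos.trans_le hq
  rw [abs_mul, abs_of_pos (by positivity), sub_eq_add_neg, Real.rpow_add hq₀, Real.rpow_natCast,
    mul_left_comm]
  gcongr
  exact hC q hq

theorem continuous_besselClifford (n : ℕ) : Continuous fun q : ℝ => besselClifford n q :=
  continuous_iff_continuousAt.2 fun q => (hasDerivAt_besselClifford n q).continuousAt

theorem integrableOn_pow_mul_besselClifford {a n : ℕ} (h : 2 * a + 2 ≤ n) :
    IntegrableOn (fun q : ℝ => q ^ a * besselClifford n q) (Set.Ioi 0) := by
  have hcont : Continuous fun q : ℝ => q ^ a * besselClifford n q :=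
    (continuous_pow a).mul (continuous_besselClifford n)
  obtain ⟨C, hC⟩ := exists_abs_pow_mul_besselClifford_le a n
  have hexp : (a - (n / 2 + 1 / 4) : ℝ) < -1 := by
    have : (2 * a + 2 : ℝ) ≤ n := by exact_mod_cast h
    linarith
  rw [← Set.Ioc_union_Ioi_eq_Ioi zero_le_one]
  exact (hcont.integrableOn_Icc.mono_set Set.Ioc_subset_Icc_self).union <|
    Integrable.mono' ((integrableOn_Ioi_rpow_of_lt hexp one_pos).const_mul C)
      hcont.aestronglyMeasurable
      ((ae_restrict_mem measurableSet_Ioi).mono fun q hq => hC q (le_of_lt hq))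

theorem tendsto_pow_mul_besselClifford {a n : ℕ} (h : 2 * a ≤ n) :
    Tendsto (fun q : ℝ => q ^ a * besselClifford n q) atTop (𝓝 0) := by
  obtain ⟨C, hC⟩ := exists_abs_pow_mul_besselClifford_le a n
  have hexp : 0 < ((n / 2 + 1 / 4) - a : ℝ) := by
    have : (2 * a : ℝ) ≤ n := by exact_mod_cast h
    linarith
  refine squeeze_zero_norm' ((eventually_ge_atTop 1).mono hC) ?_
  simpa using (tendsto_rpow_neg_atTop hexp).const_mul C

theorem integral_pow_mul_besselClifford {a ν : ℕ} (h : a + 1 ≤ ν) :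
    ∫ q in Set.Ioi (0 : ℝ), q ^ a * besselClifford (ν + a + 1) q = a.factorial / ν.factorial := by
  induction a with
  | zero =>
    have hint := integrableOn_pow_mul_besselClifford (a := 0) (n := ν + 1) (by omega)
    have hlim := tendsto_pow_mul_besselClifford (a := 0) (n := ν) (by omega)
    have hzero : besselClifford ν (0 : ℝ) = (ν.factorial : ℝ)⁻¹ := by
      rw [besselClifford, tsum_eq_single 0 fun k hk => by simp [hk]]
      simp
    simp only [pow_zero, one_mul] at hint hlim
    have hFTC := integral_Ioi_of_hasDerivAt_of_tendsto' (a := 0)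
      (fun q _ => hasDerivAt_besselClifford ν q) hint.neg hlim
    rw [integral_neg, hzero, zero_sub, neg_inj] at hFTC
    simpa using hFTC
  | succ a ih =>
    have hint := integrableOn_pow_mul_besselClifford (a := a) (n := ν + a + 1) (by omega)
    have hint' := integrableOn_pow_mul_besselClifford (a := a + 1) (n := ν + a + 1 + 1) (by omega)
    have hderiv (q : ℝ) : HasDerivAt (fun q => q ^ (a + 1) * besselClifford (ν + a + 1) q)
        ((a + 1) * (q ^ a * besselClifford (ν + a + 1) q) -
          q ^ (a + 1) * besselClifford (ν + a + 1 + 1) q) q := by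
      refine ((hasDerivAt_pow (a + 1) q).mul (hasDerivAt_besselClifford _ q)).congr_deriv ?_
      rw [Nat.add_sub_cancel]
      push_cast
      ring
    have hFTC := integral_Ioi_of_hasDerivAt_of_tendsto' (a := 0) (fun q _ => hderiv q)
      ((hint.const_mul _).sub hint') (tendsto_pow_mul_besselClifford (by omega))
    rw [integral_sub (hint.const_mul _) hint', integral_const_mul, ih (by omega),
      zero_pow a.succ_ne_zero, zero_mul, sub_zero, sub_eq_zero] at hFTC
    rw [← add_assoc, ← hFTC, Nat.factorial_succ]
    push_cast
    ring

theorem logMellin_g0C_exp_ne_zero {ν ν₀ : ℕ} (h : ν < ν₀) (h' : ν₀ ≤ 2 * ν) :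
    logMellin (fun ζ => g0C ν₀ (Complex.exp ζ)) ν ≠ 0 := by
  obtain ⟨a, rfl⟩ := Nat.exists_eq_add_of_lt h
  have heq : logMellin (fun ζ => g0C (ν + a + 1) (Complex.exp ζ)) ν =
      ((a.factorial / ν.factorial : ℝ) : ℂ) := by
    rw [← integral_pow_mul_besselClifford (by omega : a + 1 ≤ ν), ← integral_complex_ofReal,
      ← integral_exp_smul_comp_exp, logMellin]
    refine integral_congr_ae (Eventually.of_forall fun x => ?_)
    simp only [g0C_eq, Complex.real_smul, Complex.ofReal_mul, Complex.ofReal_pow,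
      ofReal_besselClifford, Complex.ofReal_exp, ← mul_assoc, ← Complex.exp_nat_mul,
      ← Complex.exp_add, Complex.ofReal_natCast]
    push_cast
    ring_nf
  rw [heq]
  exact_mod_cast div_ne_zero (by positivity) (by positivity)

end BesselCliffordMoments

section HalfStrip

variable {b A B M θ : ℝ} {f : ℂ → ℂ}

theorem StripBounded.norm_intervalIntegral_sub_le (hf : StripBounded b A B f) (hθ : 0 ≤ θ)
    (hθπ : θ < Real.pi) (hM : ∀ y ∈ Set.Icc 0 θ, ‖f (y * Complex.I)‖ ≤ M) {R : ℝ}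
    (hR : 0 ≤ R) : ‖(∫ x in (-R)..0, f x) - ∫ x in (-R)..0, f (x + θ * Complex.I)‖ ≤
      M * θ + A * Real.exp (b * -R) * Real.exp B * θ := by
  have hmem {x y : ℝ} (hy : y ∈ Set.Icc 0 θ) : (x + y * Complex.I : ℂ) ∈ logStrip :=
    ofReal_add_mem_logStrip (ofReal_mul_I_mem_logStrip hy.1 (hy.2.trans_lt hθπ)) x
  have hcauchy := Complex.integral_boundary_rect_eq_zero_of_differentiableOn f (-R : ℝ)
    (θ * Complex.I) (hf.differentiableOn.mono fun ζ hζ => by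
      rw [← Complex.re_add_im ζ]
      refine hmem ?_
      simpa [Set.uIcc_of_le hθ] using hζ.2)
  simp only [Complex.ofReal_re, Complex.ofReal_im, Complex.re_ofReal_mul, Complex.im_ofReal_mul,
    Complex.I_re, Complex.I_im, mul_zero, mul_one, Complex.ofReal_zero, zero_mul, add_zero,
    zero_add, smul_eq_mul] at hcauchy
  have hright : ‖∫ y in (0 : ℝ)..θ, f (y * Complex.I)‖ ≤ M * θ := by
    have h := intervalIntegral.norm_integral_le_of_norm_le_const (a := 0) (b := θ)
      fun y hy => hM y (Set.Ioc_subset_Icc_self (Set.uIoc_of_le hθ ▸ hy))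
    rwa [sub_zero, abs_of_nonneg hθ] at h
  have hleft : ‖∫ y in (0 : ℝ)..θ, f ((-R : ℝ) + y * Complex.I)‖ ≤
      A * Real.exp (b * -R) * Real.exp B * θ := by
    have h := intervalIntegral.norm_integral_le_of_norm_le_const (a := 0) (b := θ)
      (f := fun y : ℝ => f ((-R : ℝ) + y * Complex.I)) (C := A * Real.exp (b * -R) * Real.exp B)
      fun y hy => by
        have hy' := Set.Ioc_subset_Icc_self (Set.uIoc_of_le hθ ▸ hy)
        simpa using hf.norm_le_of_re_le (hmem (x := -R) hy') (c := 0) (by simpa using hR)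
    rwa [sub_zero, abs_of_nonneg hθ] at h
  have heq : (∫ x in (-R)..0, f x) - ∫ x in (-R)..0, f (x + θ * Complex.I) =
      Complex.I * (∫ y in (0 : ℝ)..θ, f ((-R : ℝ) + y * Complex.I)) -
        Complex.I * ∫ y in (0 : ℝ)..θ, f (y * Complex.I) := by
    linear_combination hcauchy
  rw [heq, add_comm (M * θ)]
  refine (norm_sub_le _ _).trans (add_le_add ?_ ?_) <;>
    simpa only [norm_mul, Complex.norm_I, one_mul]

theorem StripBounded.norm_integral_Iic_sub_le (hf : StripBounded b A B f) (hb : 0 < b)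
    (hθ : 0 ≤ θ) (hθπ : θ < Real.pi) (hM : ∀ y ∈ Set.Icc 0 θ, ‖f (y * Complex.I)‖ ≤ M) :
    ‖(∫ x in Set.Iic (0 : ℝ), f x) - ∫ x in Set.Iic (0 : ℝ), f (x + θ * Complex.I)‖ ≤ M * θ := by
  have hmem := ofReal_mul_I_mem_logStrip hθ hθπ
  have htop : Tendsto (fun R : ℝ => -R) atTop atBot := tendsto_neg_atTop_atBot
  have hlim := ((intervalIntegral_tendsto_integral_Iic 0 (hf.integrableOn_Iic hb) htop).sub
    (intervalIntegral_tendsto_integral_Iic 0 (hf.integrableOn_Iic_comp_add hb hmem) htop)).norm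
  have hexp : Tendsto (fun R : ℝ => Real.exp (b * -R)) atTop (𝓝 0) :=
    Real.tendsto_exp_atBot.comp (htop.const_mul_atBot hb)
  refine le_of_tendsto_of_tendsto hlim
    (by simpa using (((hexp.const_mul A).mul_const (Real.exp B)).mul_const θ).const_add (M * θ)) ?_
  filter_upwards [eventually_ge_atTop 0] with R hR
  simpa only [mul_neg] using hf.norm_intervalIntegral_sub_le hθ hθπ hM hR

/-- If `e^{-νζ} f(ζ)` is integrable along a parallel to the negative axis, then moving the contour
to that parallel bounds the Mellin transform up to the edge `ν` of its strip of convergence. -/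
theorem exists_norm_logMellin_le {b₀ β₀ ν : ℝ}
    (hf : ∀ b ∈ Set.Ioo b₀ ν, ∃ A B, StripBounded b A B f) (hβ₀ : β₀ ∈ Set.Ioo b₀ ν)
    (hθ : 0 ≤ θ) (hθπ : θ < Real.pi)
    (hint : IntegrableOn (fun x : ℝ => Complex.exp (-ν * x) * f (x + θ * Complex.I)) (Set.Iic 0)) :
    ∃ K, ∀ β ∈ Set.Ioo β₀ ν, ‖logMellin f β‖ ≤ K := by
  obtain ⟨b₁, hb₁, hb₁β₀⟩ := exists_between hβ₀.1
  obtain ⟨A₁, B₁, hf₁⟩ := hf b₁ ⟨hb₁, hb₁β₀.trans hβ₀.2⟩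
  obtain ⟨M, hM⟩ := isCompact_Icc.exists_bound_of_continuousOn (s := Set.Icc 0 θ)
    (f := fun y : ℝ => f (y * Complex.I)) <| hf₁.continuousOn.comp (by fun_prop) fun y hy =>
      ofReal_mul_I_mem_logStrip hy.1 (hy.2.trans_lt hθπ)
  have hint₀ := (hf₁.exp_neg_mul β₀).integrableOn_Ioi (sub_neg.2 hb₁β₀)
  refine ⟨M * θ + (∫ x in Set.Iic (0 : ℝ), ‖Complex.exp (-ν * x) * f (x + θ * Complex.I)‖) +
    ∫ x in Set.Ioi (0 : ℝ), ‖Complex.exp (-β₀ * x) * f x‖, fun β hβ => ?_⟩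
  obtain ⟨b', hβb', hb'ν⟩ := exists_between hβ.2
  obtain ⟨A', B', hf'⟩ := hf b' ⟨hβ₀.1.trans (hβ.1.trans hβb'), hb'ν⟩
  have hb' := sub_pos.2 hβb'
  rw [logMellin, ← intervalIntegral.integral_Iic_add_Ioi ((hf'.exp_neg_mul β).integrableOn_Iic hb')
    ((hf₁.exp_neg_mul β).integrableOn_Ioi (sub_neg.2 (hb₁β₀.trans hβ.1)))]
  refine (norm_add_le _ _).trans (add_le_add ?_ ?_)
  · refine (norm_le_norm_sub_add _ _).trans (add_le_add
      ((hf'.exp_neg_mul β).norm_integral_Iic_sub_le hb' hθ hθπ fun y hy => ?_)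
      (norm_integral_le_of_norm_le hint.norm
        ((ae_restrict_mem measurableSet_Iic).mono fun x (hx : x ≤ 0) => ?_)))
    · simpa only [norm_mul, norm_exp_neg_mul, Complex.re_ofReal_mul, Complex.I_re, mul_zero,
        Real.exp_zero, one_mul] using hM y hy
    · rw [norm_mul, norm_mul, norm_exp_neg_mul, norm_exp_neg_mul]
      simp only [Complex.add_re, Complex.ofReal_re, Complex.re_ofReal_mul, Complex.I_re, mul_zero,
        add_zero]
      gcongr ?_ * _
      exact Real.exp_le_exp.2 (by nlinarith [hβ.2])
  · refine norm_integral_le_of_norm_le hint₀.norm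
      ((ae_restrict_mem measurableSet_Ioi).mono fun x (hx : 0 < x) => ?_)
    rw [norm_mul, norm_mul, norm_exp_neg_mul, norm_exp_neg_mul]
    gcongr
    exact hβ.1.le

end HalfStrip

section CriticalParameter

variable {ν₀ p : ℕ} {ν : Fin p → ℕ} {i : Fin p}

theorem tendsto_inv_prod_Gamma_sub :
    Tendsto (fun β : ℝ => (∏ l, Real.Gamma (ν l - β))⁻¹) (𝓝 (ν i : ℝ)) (𝓝 0) := by
  have hcont (l : Fin p) : Continuous fun β : ℝ => (Real.Gamma (ν l - β))⁻¹ := by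
    have h : Continuous fun β : ℝ => ((Complex.Gamma (ν l - β))⁻¹).re :=
      Complex.continuous_re.comp
        (Complex.differentiable_one_div_Gamma.continuous.comp (by fun_prop))
    refine h.congr fun β => ?_
    rw [← Complex.ofReal_natCast, ← Complex.ofReal_sub, Complex.Gamma_ofReal, ← Complex.ofReal_inv,
      Complex.ofReal_re]
  simp only [← Finset.prod_inv_distrib]
  refine (continuous_finsetProd _ fun l _ => hcont l).tendsto' _ _ ?_
  exact Finset.prod_eq_zero (Finset.mem_univ i) (by simp)

/-- The Mellin transform of `meijerLog` has a pole at `ν i`, because `Γ(ν i - β)` does and the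
remaining factor does not vanish there. -/
theorem not_integrableOn_exp_neg_mul_meijerLog (hmin : ∀ l, ν i ≤ ν l) (hlt : ν i < ν₀)
    (hle : ν₀ ≤ 2 * ν i) {θ : ℝ} (hθ : 0 ≤ θ) (hθπ : θ < Real.pi) :
    ¬ IntegrableOn (fun x : ℝ => Complex.exp (-(ν i : ℝ) * x) *
      meijerLog ν₀ (fun l => (ν l : ℝ)) (x + θ * Complex.I)) (Set.Iic 0) := by
  intro hint
  have hltR : (ν i : ℝ) < ν₀ := by exact_mod_cast hlt
  have hleR : (ν₀ : ℝ) ≤ 2 * ν i := by exact_mod_cast hle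
  have hminR (l : Fin p) : (ν i : ℝ) ≤ ν l := by exact_mod_cast hmin l
  have hb₀ : (ν₀ / 2 - 1 / 4 : ℝ) < ν i := by linarith
  obtain ⟨β₀, hβ₀⟩ := exists_between hb₀
  obtain ⟨K, hK⟩ := exists_norm_logMellin_le (fun b hb => stripBounded_meijerLog hb.1.le
    (hb.2.le.trans hltR.le) fun l => hb.2.trans_le (hminR l)) hβ₀ hθ hθπ hint
  obtain ⟨_, _, hg⟩ := stripBounded_g0C_exp (ν := ν₀) le_rfl (by linarith)
  obtain ⟨_, _, hg'⟩ := stripBounded_g0C_exp (ν := ν₀) (by linarith) le_rfl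
  have hzero : Tendsto (logMellin fun ζ => g0C ν₀ (Complex.exp ζ)) (𝓝[<] (ν i : ℝ)) (𝓝 0) := by
    refine squeeze_zero_norm' (a := fun β => |(∏ l, Real.Gamma (ν l - β))⁻¹| * K) ?_ ?_
    · filter_upwards [Ioo_mem_nhdsLT hβ₀.2] with β hβ
      have hβν (l : Fin p) : β < ν l := hβ.2.trans_le (hminR l)
      have hprod : 0 < ∏ l, Real.Gamma (ν l - β) :=
        Finset.prod_pos fun l _ => Real.Gamma_pos_of_pos (sub_pos.2 (hβν l))
      have h := hK β hβ
      rw [logMellin_meijerLog (hβ₀.1.trans hβ.1) (hβ.2.trans hltR) hβν, norm_mul,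
        Complex.norm_of_nonneg hprod.le] at h
      rw [abs_of_pos (inv_pos.2 hprod)]
      exact (le_inv_mul_iff₀ hprod).2 h
    · simpa using ((tendsto_inv_prod_Gamma_sub.mono_left nhdsWithin_le_nhds).abs.mul_const K)
  refine logMellin_g0C_exp_ne_zero hlt hle (tendsto_nhds_unique ?_ hzero)
  exact (hg.continuousAt_logMellin hg' hb₀ hltR).tendsto.mono_left nhdsWithin_le_nhds

end CriticalParameter

section VanishingKernel

variable {ν₀ p : ℕ} {ν : Fin p → ℕ} {τ u η : ℝ} {G₂ : ℂ → ℂ}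

theorem half_sub_lt_of_min {i : Fin p} (hmin : ∀ l, ν i ≤ ν l) (hle : ν₀ ≤ 2 * ν i) (l : Fin p) :
    (ν₀ / 2 - 1 / 4 : ℝ) < ν l := by
  have h : (ν₀ : ℝ) ≤ 2 * ν l := by exact_mod_cast hle.trans (Nat.mul_le_mul_left 2 (hmin l))
  linarith

theorem log_I_mul_exp (y : ℝ) :
    Complex.log (Complex.I * Real.exp y) = y + (Real.pi / 2 : ℝ) * Complex.I := by
  rw [Complex.log_mul_ofReal _ (Real.exp_pos y) _ Complex.I_ne_zero, Real.log_exp, Complex.log_I]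
  push_cast
  ring

theorem mul_exp_le_norm_kcritWeight (hu : 0 < u) {a : ℝ} (ha : 0 < a) {y : ℝ} (hy : y ≤ 0) :
    (u / a) ^ ν₀ * Real.exp (-τ * u - u ^ 2 / 2 - a ^ 2 / 2) * (u + a)⁻¹ * Real.exp (-ν₀ * y) ≤
      ‖kcritWeight ν₀ τ u (a * Real.exp y)‖ := by
  have hpos : 0 < a * Real.exp y := mul_pos ha (Real.exp_pos y)
  have hle : a * Real.exp y ≤ a := mul_le_of_le_one_right ha.le (Real.exp_le_one_iff.2 hy)
  have hpow : (u / a) ^ ν₀ * Real.exp (-ν₀ * y) = (u / |a * Real.exp y|) ^ ν₀ := by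
    rw [abs_of_pos hpos, ← div_div, div_pow (u / a), ← Real.exp_nat_mul, neg_mul, Real.exp_neg,
      ← div_eq_mul_inv]
  have hdist : ‖(u : ℂ) - Complex.I * (a * Real.exp y : ℝ)‖ ≤ u + a := by
    refine (norm_sub_le _ _).trans (add_le_add (Complex.norm_of_nonneg hu.le).le ?_)
    rwa [norm_mul, Complex.norm_I, one_mul, Complex.norm_of_nonneg hpos.le]
  have hne : (u : ℂ) - Complex.I * (a * Real.exp y : ℝ) ≠ 0 := fun h =>
    hu.ne' (by simpa using congrArg Complex.re h)
  rw [norm_kcritWeight hu, ← hpow]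
  calc _ = (u / a) ^ ν₀ * Real.exp (-ν₀ * y) * Real.exp (-τ * u - u ^ 2 / 2 - a ^ 2 / 2) *
        (u + a)⁻¹ := by ring
    _ ≤ _ := by gcongr

theorem exists_mul_exp_neg_mul_le_norm_kcritWeight {k : ℕ} (hk : k < ν₀) (hu : 0 < u) {a : ℝ}
    (ha : 0 < a) : ∃ c > 0, ∀ y ≤ 0,
      c * Real.exp (-k * y) ≤ Real.exp y * ‖kcritWeight ν₀ τ u (a * Real.exp y)‖ := by
  refine ⟨(u / a) ^ ν₀ * Real.exp (-τ * u - u ^ 2 / 2 - a ^ 2 / 2) * (u + a)⁻¹, by positivity,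
    fun y hy => ?_⟩
  refine le_trans ?_ (mul_le_mul_of_nonneg_left (mul_exp_le_norm_kcritWeight hu ha hy)
    (Real.exp_pos y).le)
  rw [mul_left_comm, ← Real.exp_add]
  gcongr
  have hk' : (k : ℝ) + 1 ≤ ν₀ := by exact_mod_cast hk
  nlinarith

/-- The substitution `t = η⁻¹ e^y` turns the behaviour of the inner integrand at `t = 0⁺` into that
of `e^{-νᵢ y} meijerLog` along the line `Im = π/2`. -/
theorem not_integrable_kcritWeight_mul {i : Fin p} (hmin : ∀ l, ν i ≤ ν l) (hlt : ν i < ν₀)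
    (hle : ν₀ ≤ 2 * ν i)
    (hG : ∀ z ∈ Complex.slitPlane, G₂ z = meijerLog ν₀ (fun l => (ν l : ℝ)) (Complex.log z))
    (hu : 0 < u) (hη : 0 < η) :
    ¬ Integrable fun t : ℝ => kcritWeight ν₀ τ u t * G₂ (Complex.I * t * η) := by
  intro hint
  obtain ⟨c, hc, hweight⟩ :=
    exists_mul_exp_neg_mul_le_norm_kcritWeight (τ := τ) hlt hu (inv_pos.2 hη)
  have hsubst := (integrable_exp_smul_comp_exp.2
    (hint.comp_mul_left' (inv_ne_zero hη.ne')).integrableOn).integrableOn (s := Set.Iic 0)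
  have hmem := ofReal_mul_I_mem_logStrip Real.pi_div_two_pos.le (half_lt_self Real.pi_pos)
  obtain ⟨A, B, hf⟩ := stripBounded_meijerLog le_rfl (by linarith [ν₀.cast_nonneg (α := ℝ)])
    (half_sub_lt_of_min hmin hle)
  refine not_integrableOn_exp_neg_mul_meijerLog hmin hlt hle Real.pi_div_two_pos.le
    (half_lt_self Real.pi_pos) ((hsubst.norm.const_mul c⁻¹).mono' ?_
      (ae_restrict_of_forall_mem measurableSet_Iic fun y (hy : y ≤ 0) => ?_))
  · have h := hf.continuous_comp_ofReal_add hmem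
    exact (by fun_prop : Continuous _).aestronglyMeasurable
  have harg : Complex.I * (η⁻¹ * Real.exp y : ℝ) * η = Complex.I * (Real.exp y : ℝ) := by
    rw [mul_assoc, ← Complex.ofReal_mul, mul_right_comm, inv_mul_cancel₀ hη.ne', one_mul]
  rw [harg, hG _ (I_mul_ofReal_mem_slitPlane (Real.exp_ne_zero y)), log_I_mul_exp, norm_mul,
    norm_exp_neg_mul, Complex.ofReal_re, norm_smul, norm_mul,
    Real.norm_of_nonneg (Real.exp_pos y).le, le_inv_mul_iff₀ hc, ← mul_assoc, ← mul_assoc]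
  exact mul_le_mul_of_nonneg_right (hweight y hy) (norm_nonneg _)

theorem kcritIntegral_eq_zero_of_not_integrable {g V : ℝ → ℂ}
    (h : ∀ u, 0 < u → ¬ Integrable fun t : ℝ => kcritWeight ν₀ τ u t * V t) :
    kcritIntegral ν₀ τ g V = 0 := by
  refine setIntegral_eq_zero_of_forall_eq_zero fun u hu => ?_
  rcases eq_or_ne (g u) 0 with hg | hg
  · simp [hg]
  refine integral_undef fun hint => h u hu ?_
  have hunit : IsUnit (g u * Complex.I) := (mul_ne_zero hg Complex.I_ne_zero).isUnit
  exact (integrable_const_mul_iff hunit _).1 (hint.congr (ae_of_all _ fun t => by ring))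

theorem kcritIntegral_eq_zero_of_ae {g V : ℝ → ℂ} (h : V =ᵐ[volume] 0) :
    kcritIntegral ν₀ τ g V = 0 := by
  refine setIntegral_eq_zero_of_forall_eq_zero fun u _ => integral_eq_zero_of_ae ?_
  filter_upwards [h] with t ht
  simp [ht]

theorem IsMeijerG2.eq_zero_of_two_mul_lt (hG : IsMeijerG2 ν₀ (fun l => (ν l : ℝ)) G₂) {i : Fin p}
    (hi : 2 * ν i < ν₀) {z : ℂ} (hz : z ∈ Complex.slitPlane) : G₂ z = 0 := by
  refine apply_eq_log (F := fun _ => 0) (comp_exp_eqOn_logStrip hG.differentiableOn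
    (differentiableOn_const 0) fun x => ?_) hz
  rw [hG.apply_ofReal _ (Real.exp_pos x), Complex.ofReal_eq_zero]
  cases p with
  | zero => exact i.elim0
  | succ p => exact integral_undef (not_integrableOn_meijerIntegrand hi (Real.exp_pos x))

/-- For a parameter below `ν₀` one of the defining integrals diverges, and the kernel takes the
value `0` of a non-integrable Bochner integral. -/
theorem IsMeijerG2.Kcrit_eq_zero_of_lt (hG : IsMeijerG2 ν₀ (fun l => (ν l : ℝ)) G₂)
    (hlt : ∃ l, ν l < ν₀) (ξ : ℝ) (hη : 0 < η) : Kcrit p ν₀ ν G₂ τ ξ η = 0 := by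
  obtain ⟨l, hl⟩ := hlt
  have : Nonempty (Fin p) := ⟨l⟩
  obtain ⟨i, hmin⟩ := Finite.exists_min ν
  have hi : ν i < ν₀ := (hmin l).trans_lt hl
  rw [Kcrit_eq_kcritIntegral, mul_eq_zero]
  right
  rcases lt_or_ge (2 * ν i) ν₀ with hi' | hi'
  · refine kcritIntegral_eq_zero_of_ae ?_
    filter_upwards [Measure.ae_ne volume 0] with t ht
    exact hG.eq_zero_of_two_mul_lt hi' (I_mul_ofReal_mul_mem_slitPlane ht hη.ne')
  · refine kcritIntegral_eq_zero_of_not_integrable fun u hu =>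
      not_integrable_kcritWeight_mul hmin hi hi' (fun z hz => ?_) hu hη
    exact hG.eq_meijerLog_log le_rfl (by linarith [ν₀.cast_nonneg (α := ℝ)])
      (half_sub_lt_of_min hmin hi') hz

end VanishingKernel

section Confluence

theorem prod_filter_le_castAdd {M : Type*} [CommMonoid M] (m K : ℕ) (f : Fin (m + K) → M) :
    ∏ l ∈ Finset.univ.filter (fun l : Fin (m + K) => m ≤ (l : ℕ)), f l =
      ∏ j : Fin K, f (j.natAdd m) := by
  simp [Finset.prod_filter, Fin.prod_univ_add, fun i : Fin m => not_le.2 i.2]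

theorem prop_5_1_general {ι : Type*} {l : Filter ι} [l.IsCountablyGenerated] {m r ν₀ : ℕ}
    (hmr : m ≤ r) {νs : Fin m → ℕ} {ν : ι → Fin r → ℕ}
    (hfix : ∀ n, ∀ i : Fin r, ∀ h : (i : ℕ) < m, ν n i = νs ⟨i, h⟩)
    (htend : ∀ i : Fin r, m ≤ (i : ℕ) → Tendsto (fun n => ν n i) l atTop)
    {G : ι → ℂ → ℂ} (hG : ∀ n, IsMeijerG2 ν₀ (fun i => (ν n i : ℝ)) (G n))
    {G' : ℂ → ℂ} (hG' : IsMeijerG2 ν₀ (fun i => (νs i : ℝ)) G') (τ x : ℝ) {y : ℝ} (hy : 0 < y) :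
    Tendsto (fun n =>
      ((∏ i ∈ Finset.univ.filter (fun i : Fin r => m ≤ (i : ℕ)), (ν n i : ℝ) : ℝ) : ℂ) *
        Kcrit r ν₀ (ν n) (G n) τ
          ((∏ i ∈ Finset.univ.filter (fun i : Fin r => m ≤ (i : ℕ)), (ν n i : ℝ)) * x)
          ((∏ i ∈ Finset.univ.filter (fun i : Fin r => m ≤ (i : ℕ)), (ν n i : ℝ)) * y))
      l (𝓝 (Kcrit m ν₀ νs G' τ x y)) := by
  obtain ⟨K, rfl⟩ := Nat.exists_eq_add_of_le hmr
  have hfix' n (i : Fin m) : ν n (Fin.castAdd K i) = νs i := hfix n (Fin.castAdd K i) i.2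
  have htend' (j : Fin K) := htend (j.natAdd m) (Nat.le_add_right m j)
  simp only [prod_filter_le_castAdd]
  by_cases hlt : ∃ i, νs i < ν₀
  · refine tendsto_const_nhds.congr' ?_
    filter_upwards [eventually_all.2 fun j => (htend' j).eventually_gt_atTop 0] with n hn
    have hc : 0 < ∏ j : Fin K, (ν n (j.natAdd m) : ℝ) :=
      Finset.prod_pos fun j _ => Nat.cast_pos.2 (hn j)
    obtain ⟨i, hi⟩ := hlt
    rw [hG'.Kcrit_eq_zero_of_lt ⟨i, hi⟩ x hy, (hG n).Kcrit_eq_zero_of_lt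
      ⟨Fin.castAdd K i, (hfix' n i).trans_lt hi⟩ _ (mul_pos hc hy), mul_zero]
  · push Not at hlt
    exact tendsto_prod_mul_Kcrit_of_le τ hfix' htend' hlt hG hG' hy

end Confluence

/-- **Proposition 5.1** (confluence of critical kernels as `ν_{m+1},…,ν_r → ∞`). -/
theorem prop_5_1 (m r ν0 : ℕ) (hmr : m < r) (νs : Fin m → ℕ)
    (νbig : ℕ → Fin r → ℕ)
    (hfix : ∀ n : ℕ, ∀ l : Fin r, ∀ h : (l : ℕ) < m, νbig n l = νs ⟨l, h⟩)
    (hpos : ∀ n : ℕ, ∀ l : Fin r, m ≤ (l : ℕ) → 0 < νbig n l)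
    (htend : ∀ l : Fin r, m ≤ (l : ℕ) → Tendsto (fun n => νbig n l) atTop atTop)
    (G2big : ℕ → ℂ → ℂ)
    (hG2bd : ∀ n, DifferentiableOn ℂ (G2big n) Complex.slitPlane)
    (hG2bv : ∀ n : ℕ, ∀ z : ℝ, 0 < z → G2big n (z : ℂ) = ∫ t in posOrth r,
      (((∏ l, (t l) ^ ((νbig n l : ℝ) - 1) * Real.exp (-t l)) : ℝ) : ℂ) *
        g0C ν0 ((z : ℂ) / ((∏ l, t l : ℝ) : ℂ)))
    (G2s : ℂ → ℂ)
    (hG2sd : DifferentiableOn ℂ G2s Complex.slitPlane)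
    (hG2sv : ∀ z : ℝ, 0 < z → G2s (z : ℂ) = ∫ t in posOrth m,
      (((∏ l, (t l) ^ ((νs l : ℝ) - 1) * Real.exp (-t l)) : ℝ) : ℂ) *
        g0C ν0 ((z : ℂ) / ((∏ l, t l : ℝ) : ℂ)))
    (τ x y : ℝ) (hx : 0 < x) (hy : 0 < y) :
    Tendsto
      (fun n : ℕ =>
        (((∏ l ∈ Finset.univ.filter fun l : Fin r => m ≤ (l : ℕ),
            (νbig n l : ℝ)) : ℝ) : ℂ) *
          Kcrit r ν0 (νbig n) (G2big n) τ
            ((∏ l ∈ Finset.univ.filter fun l : Fin r => m ≤ (l : ℕ),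
              (νbig n l : ℝ)) * x)
            ((∏ l ∈ Finset.univ.filter fun l : Fin r => m ≤ (l : ℕ),
              (νbig n l : ℝ)) * y))
      atTop (𝓝 (Kcrit m ν0 νs G2s τ x y)) := by
  exact prop_5_1_general hmr.le hfix htend (fun n => isMeijerG2_of_integral_g0C (hG2bd n) (hG2bv n))
    (isMeijerG2_of_integral_g0C hG2sd hG2sv) τ x hy

end
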